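/- Let G be a compact subgroup of the orthogonal group O(n) of Euclidean ℝⁿ, acting transitively on the unit sphere S^{n−1}. Then every G-invariant valuation φ ∈ Val(ℝⁿ) (i.e., φ(gK) = φ(K) for all g ∈ G, K ∈ K(ℝⁿ)) is smooth: the map GL(n,ℝ) → Val(ℝⁿ), g ↦ gφ, is infinitely differentiable. -/

import Mathlib

/-!
The theorem follows from the finite-dimensionality of the space of `G`-invariant valuations,
together with a smoothing argument.

*From finite dimension to smoothness* (`smooth_of_finite`). Averaging `φ (A ·)` over a smooth
probability density in `A ∈ End V` supported near the identity and invariant under conjugation by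
isometries gives a smooth valuation, which is again `G`-invariant and which tends to `φ` as the
support shrinks. The smooth invariant valuations thus form a dense subspace of the finite-dimensional
space of all invariant ones, hence are all of it.

*Finite dimension* (`finite_ValG`). By McMullen's theorem (`mcmullen`) `t ↦ φ (L + t K)` is a
polynomial of degree at most `dim V`. Identifying bodies with their support functions on the unit
sphere and using this polynomiality, `φ` extends to a function `hat φ` on the space `W` of differences
of support functions, polynomial along lines. The valuation property makes `hat φ` modular for
functions with disjoint supports (`hat_local`), so that its derivative `Dh φ h f` in the direction
`f` depends only on `h` near the support of `f` (`Dh_local`).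

Let `h` be a polynomial on the sphere and `β` a bump of radius `ε` around a point `x₀`. The mean over
`G` of the rotated bumps is a constant `m`, by transitivity, and `m` is at least a power `ε ^ M` up to
a factor. Hence, by linearity, invariance and locality, `m * Dh φ h h` is the mean over `g ∈ G` of
`Dh φ (η * g h) (β * g h)`, where `η` is a wider bump (`Dh_average`). Replacing `g h` by its Taylor
polynomial of degree `N` at `x₀` costs `O (ε ^ (M + 1))` once `N` is large compared with `M` and the
degree of `hat φ`, and after this replacement the integrand is a polynomial of bounded degree in the
Taylor coefficients of `g h`. As `ε → 0`, the functional `h ↦ Dh φ h h` therefore lies in the span of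
the averages `Jm` of the finitely many monomials in the Taylor coefficients, a finite-dimensional
space that does not depend on `φ` (`finite_span`).

If `Dh φ h h` vanishes for all polynomials `h`, then `hat φ` is constant on polynomials. Convolving
with powers of a representative function of `G` concentrated at the identity shows that every support
function is a uniform limit of polynomials that are support functions (`exists_approx`), so `φ` is
constant. Thus `φ ↦ (h ↦ Dh φ h h, hat φ 0)` is injective on invariant valuations, with values in a
finite-dimensional space.
-/

open scoped NNReal Pointwise
open Metric MeasureTheory

/-- The singleton convex body `{x}`. -/
def ConvexBody.singletonBody {V : Type*} [NormedAddCommGroup V] [NormedSpace ℝ V] (x : V) :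
    ConvexBody V :=
  ⟨{x}, convex_singleton x, isCompact_singleton, Set.singleton_nonempty x⟩

/-- `φ` satisfies the valuation property: `φ(A ∪ B) = φ(A) + φ(B) - φ(A ∩ B)` whenever
`A`, `B` and `A ∪ B` are convex bodies. -/
def IsValuation {V : Type*} [NormedAddCommGroup V] [NormedSpace ℝ V]
    (φ : ConvexBody V → ℂ) : Prop :=
  ∀ A B C D : ConvexBody V, (C : Set V) = (A : Set V) ∪ (B : Set V) →
    (D : Set V) = (A : Set V) ∩ (B : Set V) → φ C = φ A + φ B - φ D

/-- `φ` is translation invariant. -/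
def IsTranslationInvariant {V : Type*} [NormedAddCommGroup V] [NormedSpace ℝ V]
    (φ : ConvexBody V → ℂ) : Prop :=
  ∀ (K : ConvexBody V) (x : V), φ (K + ConvexBody.singletonBody x) = φ K

/-- `φ ∈ Val(V)`: a translation invariant valuation, continuous in the Hausdorff metric. -/
def MemVal {V : Type*} [NormedAddCommGroup V] [NormedSpace ℝ V]
    (φ : ConvexBody V → ℂ) : Prop :=
  IsValuation φ ∧ IsTranslationInvariant φ ∧ Continuous φ

/-- `φ` is homogeneous of degree `i`: `φ (λ • K) = λ ^ i * φ K` for all `λ ≥ 0`. -/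
def IsHomogeneousVal {V : Type*} [NormedAddCommGroup V] [NormedSpace ℝ V]
    (φ : ConvexBody V → ℂ) (i : ℕ) : Prop :=
  ∀ (c : ℝ≥0) (K : ConvexBody V), φ (c • K) = ((c : ℝ) : ℂ) ^ i * φ K

/-- Image of a convex body under a continuous linear map. -/
noncomputable def ConvexBody.mapCLM {V : Type*} [NormedAddCommGroup V] [NormedSpace ℝ V]
    (f : V →L[ℝ] V) (K : ConvexBody V) : ConvexBody V :=
  ⟨f '' (K : Set V), K.convex.linear_image (f : V →ₗ[ℝ] V),
    K.isCompact.image f.continuous, K.nonempty.image f⟩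

/-- Image of a convex body under a linear isometry equivalence. -/
noncomputable def ConvexBody.mapIsom {V : Type*} [NormedAddCommGroup V] [NormedSpace ℝ V]
    (g : V ≃ₗᵢ[ℝ] V) (K : ConvexBody V) : ConvexBody V :=
  ⟨g '' (K : Set V), K.convex.linear_image (g.toLinearEquiv : V →ₗ[ℝ] V),
    K.isCompact.image g.continuous, K.nonempty.image g⟩

/-- The bodies contained in the unit ball; the norm on `Val` is the sup norm over them. -/
abbrev BallBodies (V : Type*) [NormedAddCommGroup V] [NormedSpace ℝ V] :=
  {K : ConvexBody V // (K : Set V) ⊆ closedBall 0 1}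

/-- `φ ∈ Val(V)` is *smooth* if the map `GL(V) → Val(V)`, `g ↦ g φ = φ (g⁻¹ ·)`, is infinitely
differentiable as a map from (the open set of invertible elements of) the normed space of
linear endomorphisms of `V` to the Banach space of bounded continuous functions on the bodies
contained in the unit ball (whose sup norm is the natural norm of `Val(V)`). -/
def IsSmoothVal {V : Type*} [NormedAddCommGroup V] [NormedSpace ℝ V]
    (φ : ConvexBody V → ℂ) : Prop :=
  ∃ F : (V →L[ℝ] V) → BoundedContinuousFunction (BallBodies V) ℂ,
    (∀ (g : V →L[ℝ] V) (hg : IsUnit g) (K : BallBodies V),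
      F g K = φ (ConvexBody.mapCLM (↑hg.unit⁻¹) K.1)) ∧
    ContDiffOn ℝ (⊤ : ℕ∞) F {g : V →L[ℝ] V | IsUnit g}

section

open scoped ContDiff

set_option linter.unusedSectionVars false

namespace SmoothVal

/-! ### Cutting convex bodies by hyperplanes -/

section Cuts

variable {V : Type*} [NormedAddCommGroup V] [NormedSpace ℝ V]

open Classical in
/-- A functional on convex bodies, extended to arbitrary sets by `0`; in particular it vanishes
on the empty set, so that inclusion-exclusion needs no non-emptiness assumptions. -/
noncomputable def val (φ : ConvexBody V → ℂ) (A : Set V) : ℂ :=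
  if h : Convex ℝ A ∧ IsCompact A ∧ A.Nonempty then φ ⟨A, h.1, h.2.1, h.2.2⟩ else 0

lemma val_coe (φ : ConvexBody V → ℂ) (K : ConvexBody V) : val φ K = φ K := by
  unfold val
  rw [dif_pos ⟨K.convex, K.isCompact, K.nonempty⟩]
  congr 1

@[simp] lemma val_empty (φ : ConvexBody V → ℂ) : val φ ∅ = 0 := by
  unfold val
  rw [dif_neg]
  simp

lemma val_union {φ : ConvexBody V → ℂ} (hφ : IsValuation φ) {A B : Set V}
    (hA : Convex ℝ A) (hB : Convex ℝ B) (hA' : IsCompact A) (hB' : IsCompact B)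
    (hAB : Convex ℝ (A ∪ B)) : val φ (A ∪ B) + val φ (A ∩ B) = val φ A + val φ B := by
  rcases A.eq_empty_or_nonempty with rfl | hAn
  · simp
  rcases B.eq_empty_or_nonempty with rfl | hBn
  · simp
  have hn : (A ∩ B).Nonempty := by
    have h := isPreconnected_closed_iff.1 hAB.isPreconnected A B hA'.isClosed hB'.isClosed
      subset_rfl (hAn.mono (by grind)) (hBn.mono (by grind))
    exact h.mono (by grind)
  have h := hφ ⟨A, hA, hA', hAn⟩ ⟨B, hB, hB', hBn⟩
    ⟨A ∪ B, hAB, hA'.union hB', hAn.mono (by grind)⟩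
    ⟨A ∩ B, hA.inter hB, hA'.inter hB', hn⟩ rfl rfl
  rw [← val_coe φ, ← val_coe φ, ← val_coe φ, ← val_coe φ] at h
  simp only [ConvexBody.coe_mk] at h
  rw [h]; ring

variable {U : Type*} [NormedAddCommGroup U] [NormedSpace ℝ U]

/-- Cutting `X` by a hyperplane `ℓ = c` upstairs, and pushing forward to `π '' X + L`. -/
lemma val_cut {φ : ConvexBody V → ℂ} (hφ : IsValuation φ) (π : U →L[ℝ] V) (L : ConvexBody V)
    (ℓ : U →L[ℝ] ℝ) (c : ℝ) {X : Set U} (hX : Convex ℝ X) (hX' : IsCompact X) :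
    val φ (π '' X + L) + val φ (π '' (X ∩ {x | ℓ x = c}) + L) =
      val φ (π '' (X ∩ {x | c ≤ ℓ x}) + L) + val φ (π '' (X ∩ {x | ℓ x ≤ c}) + L) := by
  have h1 : Convex ℝ (X ∩ {x | c ≤ ℓ x}) :=
    hX.inter (convex_halfSpace_ge ℓ.isLinear c)
  have h2 : Convex ℝ (X ∩ {x | ℓ x ≤ c}) :=
    hX.inter (convex_halfSpace_le ℓ.isLinear c)
  have k1 : IsCompact (X ∩ {x | c ≤ ℓ x}) :=
    hX'.inter_right (isClosed_le continuous_const ℓ.continuous)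
  have k2 : IsCompact (X ∩ {x | ℓ x ≤ c}) :=
    hX'.inter_right (isClosed_le ℓ.continuous continuous_const)
  have hun : (π '' (X ∩ {x | c ≤ ℓ x}) + (L : Set V)) ∪ (π '' (X ∩ {x | ℓ x ≤ c}) + L) =
      π '' X + L := by
    rw [← Set.union_add, ← Set.image_union, ← Set.inter_union_distrib_left]
    congr 2
    ext x
    simp [le_total]
  have hin : (π '' (X ∩ {x | c ≤ ℓ x}) + (L : Set V)) ∩ (π '' (X ∩ {x | ℓ x ≤ c}) + L) =
      π '' (X ∩ {x | ℓ x = c}) + L := by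
    apply Set.Subset.antisymm
    · rintro z ⟨⟨_, ⟨a, ⟨ha, ha'⟩, rfl⟩, l, hl, rfl⟩, ⟨_, ⟨b, ⟨hb, hb'⟩, rfl⟩, m, hm, hz⟩⟩
      simp only [Set.mem_ofPred_eq] at ha' hb'
      obtain ⟨s, hs0, hs1, hs⟩ : ∃ s : ℝ, 0 ≤ s ∧ s ≤ 1 ∧ (1 - s) * ℓ a + s * ℓ b = c := by
        rcases eq_or_ne (ℓ a) (ℓ b) with e | e
        · exact ⟨0, le_rfl, zero_le_one, by linarith⟩
        · have hlt : 0 < ℓ a - ℓ b := by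
            rcases lt_or_gt_of_ne e with h | h <;> linarith
          refine ⟨(ℓ a - c) / (ℓ a - ℓ b), div_nonneg (by linarith) hlt.le,
            (div_le_one hlt).2 (by linarith), ?_⟩
          field_simp
          ring
      refine ⟨π ((1 - s) • a + s • b), ⟨_, ⟨hX ha hb (by linarith) hs0 (by ring), ?_⟩, rfl⟩,
        (1 - s) • l + s • m, L.convex hl hm (by linarith) hs0 (by ring), ?_⟩
      · simpa using hs
      · simp only [map_add, map_smul]
        have : π b + m = π a + l := hz
        calc (1 - s) • π a + s • π b + ((1 - s) • l + s • m)
            = (1 - s) • (π a + l) + s • (π b + m) := by module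
          _ = π a + l := by rw [this]; module
    · rintro z ⟨_, ⟨a, ⟨ha, ha'⟩, rfl⟩, l, hl, rfl⟩
      simp only [Set.mem_ofPred_eq] at ha'
      exact ⟨⟨π a, ⟨a, ⟨ha, ha'.ge⟩, rfl⟩, l, hl, rfl⟩, ⟨π a, ⟨a, ⟨ha, ha'.le⟩, rfl⟩, l, hl, rfl⟩⟩
  rw [← hun, ← hin]
  apply val_union hφ
  · exact (h1.linear_image (π : U →ₗ[ℝ] V)).add L.convex
  · exact (h2.linear_image (π : U →ₗ[ℝ] V)).add L.convex
  · exact (k1.image π.continuous).add L.isCompact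
  · exact (k2.image π.continuous).add L.isCompact
  · rw [hun]
    exact (hX.linear_image (π : U →ₗ[ℝ] V)).add L.convex

/-- Inclusion-exclusion over the half-spaces `1 ≤ ℓ i`: if the part of `X` outside their interiors
lies on all the bounding hyperplanes, the alternating sum vanishes. -/
lemma val_inclusion_exclusion {φ : ConvexBody V → ℂ} (hφ : IsValuation φ) (π : U →L[ℝ] V)
    (L : ConvexBody V) {ι : Type*} [DecidableEq ι] (ℓ : ι → U →L[ℝ] ℝ) (s : Finset ι)
    (hs : s.Nonempty) : ∀ (X : Set U), Convex ℝ X → IsCompact X →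
      (∀ x ∈ X, (∀ i ∈ s, ℓ i x ≤ 1) → ∀ i ∈ s, ℓ i x = 1) →
      ∑ S ∈ s.powerset, (-1 : ℂ) ^ S.card *
        val φ (π '' (X ∩ {x | ∀ i ∈ S, 1 ≤ ℓ i x}) + L) = 0 := by
  have key : ∀ (s : Finset ι) (i : ι), i ∉ s → ∀ X : Set U, Convex ℝ X → IsCompact X →
      ∑ S ∈ (insert i s).powerset, (-1 : ℂ) ^ S.card *
        val φ (π '' (X ∩ {x | ∀ i ∈ S, 1 ≤ ℓ i x}) + L) =
      ∑ S ∈ s.powerset, (-1 : ℂ) ^ S.card *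
        val φ (π '' (X ∩ {x | ℓ i x ≤ 1} ∩ {x | ∀ i ∈ S, 1 ≤ ℓ i x}) + L) -
      ∑ S ∈ s.powerset, (-1 : ℂ) ^ S.card *
        val φ (π '' (X ∩ {x | ℓ i x = 1} ∩ {x | ∀ i ∈ S, 1 ≤ ℓ i x}) + L) := by
    intro s i hi X hX hX'
    rw [Finset.sum_powerset_insert hi, ← Finset.sum_add_distrib, ← Finset.sum_sub_distrib]
    refine Finset.sum_congr rfl fun S hS => ?_
    have hiS : i ∉ S := fun h => hi (Finset.mem_powerset.1 hS h)
    have hc : Convex ℝ (X ∩ {x | ∀ i ∈ S, 1 ≤ ℓ i x}) := by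
      refine hX.inter ?_
      have : {x | ∀ i ∈ S, 1 ≤ ℓ i x} = ⋂ i ∈ S, {x | 1 ≤ ℓ i x} := by ext; simp
      rw [this]
      exact convex_iInter₂ fun i _ => convex_halfSpace_ge (ℓ i).isLinear 1
    have hk : IsCompact (X ∩ {x | ∀ i ∈ S, 1 ≤ ℓ i x}) := by
      refine hX'.inter_right ?_
      have : {x | ∀ i ∈ S, 1 ≤ ℓ i x} = ⋂ i ∈ S, {x | 1 ≤ ℓ i x} := by ext; simp
      rw [this]
      exact isClosed_biInter fun i _ => isClosed_le continuous_const (ℓ i).continuous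
    have h := val_cut hφ π L (ℓ i) 1 hc hk
    rw [Finset.card_insert_of_notMem hiS, pow_succ]
    have e1 : X ∩ {x | ∀ j ∈ insert i S, 1 ≤ ℓ j x} =
        X ∩ {x | ∀ i ∈ S, 1 ≤ ℓ i x} ∩ {x | 1 ≤ ℓ i x} := by
      ext x; simp; tauto
    rw [e1, Set.inter_right_comm X {x | ℓ i x ≤ 1}, Set.inter_right_comm X {x | ℓ i x = 1}]
    linear_combination (-1 : ℂ) ^ S.card * h
  induction hs using Finset.Nonempty.cons_induction with
  | singleton i =>
    intro X hX hX' h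
    have := key ∅ i (by simp) X hX hX'
    rw [insert_empty_eq] at this
    rw [this]
    have e : X ∩ {x | ℓ i x ≤ 1} = X ∩ {x | ℓ i x = 1} := by
      ext x
      simp only [Set.mem_inter_iff, Set.mem_ofPred_eq, and_congr_right_iff]
      intro hx
      exact ⟨fun hle => h x hx (by simpa using hle) i (by simp), fun he => he.le⟩
    rw [e, sub_self]
  | cons i s hi hs ih =>
    intro X hX hX' h
    rw [Finset.cons_eq_insert, key s i hi X hX hX']
    rw [ih (X ∩ {x | ℓ i x ≤ 1}) (hX.inter (convex_halfSpace_le (ℓ i).isLinear 1))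
      (hX'.inter_right (isClosed_le (ℓ i).continuous continuous_const)),
      ih (X ∩ {x | ℓ i x = 1}) (hX.inter (convex_hyperplane (ℓ i).isLinear 1))
      (hX'.inter_right (isClosed_eq (ℓ i).continuous continuous_const)), sub_zero]
    · rintro x ⟨hx, hx'⟩ hle j hj
      refine h x hx ?_ j (by simp [hj])
      intro k hk
      rcases Finset.mem_cons.1 hk with rfl | hk
      · exact le_of_eq hx'
      · exact hle k hk
    · rintro x ⟨hx, hx'⟩ hle j hj
      refine h x hx ?_ j (by simp [hj])
      intro k hk
      rcases Finset.mem_cons.1 hk with rfl | hk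
      · exact hx'
      · exact hle k hk

lemma phi_add_singleton {φ : ConvexBody V → ℂ} (hφ : IsTranslationInvariant φ) (A : Set V) (x : V) :
    val φ ((fun y => x + y) '' A) = val φ A := by
  by_cases h : Convex ℝ A ∧ IsCompact A ∧ A.Nonempty
  · have := hφ ⟨A, h.1, h.2.1, h.2.2⟩ x
    rw [← val_coe φ, ← val_coe φ ⟨A, h.1, h.2.1, h.2.2⟩] at this
    rw [ConvexBody.coe_add] at this
    simp only [ConvexBody.coe_mk] at this
    rw [← this]
    congr 1
    simp only [ConvexBody.singletonBody, ConvexBody.coe_mk, Set.add_singleton]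
    ext; simp [add_comm]
  · have h' : ¬ (Convex ℝ ((fun y => x + y) '' A) ∧ IsCompact ((fun y => x + y) '' A) ∧
        ((fun y => x + y) '' A).Nonempty) := by
      rintro ⟨a, b, c⟩
      apply h
      have e : A = (fun y => -x + y) '' ((fun y => x + y) '' A) := by
        rw [Set.image_image]; simp
      refine ⟨?_, ?_, Set.image_nonempty.1 c⟩
      · rw [e]; exact a.translate (-x)
      · rw [e]; exact b.image (by fun_prop)
    unfold val
    simp only [h', h, dif_neg, not_false_eq_true]

/-- The dilated simplex of side `t`. -/
def simplexD (ι : Type*) [Fintype ι] (t : ℝ) : Set (ι → ℝ) := {x | (∀ i, 0 ≤ x i) ∧ ∑ i, x i = t}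

lemma simplexD_smul {ι : Type*} [Fintype ι] [Nonempty ι] {t : ℝ} (ht : 0 ≤ t) :
    simplexD ι t = t • stdSimplex ℝ ι := by
  ext x
  rw [Set.mem_smul_set]
  constructor
  · rintro ⟨h0, h1⟩
    rcases ht.eq_or_lt with rfl | ht
    · have : x = 0 := by
        funext i
        exact (Finset.sum_eq_zero_iff_of_nonneg (fun i _ => h0 i)).1 h1 i (by simp)
      obtain ⟨i⟩ := ‹Nonempty ι›
      classical
      exact ⟨Pi.single i 1, single_mem_stdSimplex ℝ i, by simp [this]⟩
    · refine ⟨t⁻¹ • x, ⟨fun i => ?_, ?_⟩, ?_⟩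
      · exact mul_nonneg (by positivity) (h0 i)
      · simp only [Pi.smul_apply, smul_eq_mul, ← Finset.mul_sum, h1]
        field_simp
      · rw [smul_smul, mul_inv_cancel₀ ht.ne', one_smul]
  · rintro ⟨y, ⟨h0, h1⟩, rfl⟩
    exact ⟨fun i => mul_nonneg ht (h0 i), by
      simp only [Pi.smul_apply, smul_eq_mul, ← Finset.mul_sum, h1, mul_one]⟩

/-- For a polytope `P`, the convex hull of `M` points, the `M`-th difference of `k ↦ φ (L + k P)`
vanishes. Indeed `M • P` is a projection of the simplex of side `M` in `ℝ ^ M`, whose part where the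
coordinates in a set `S` are at least `1` is a translate of the simplex of side `M - |S|`; the part
where all coordinates are at most `1` is a point, so inclusion-exclusion applies. -/
lemma polytope_difference {φ : ConvexBody V → ℂ} (hφ : IsValuation φ)
    (hT : IsTranslationInvariant φ) (P : ConvexBody V) {s : Set V} (hs : s.Finite)
    (hP : (P : Set V) = convexHull ℝ s) :
    ∃ M : ℕ, ∀ L : ConvexBody V, ∑ j ∈ Finset.range (M + 1), (-1 : ℂ) ^ j * (M.choose j : ℂ) *
      φ (L + ((M - j : ℕ) : ℝ≥0) • P) = 0 := by
  classical
  have hsn : s.Nonempty := by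
    have := P.nonempty
    rw [hP] at this
    exact convexHull_nonempty_iff.1 this
  let _ : Fintype s := hs.fintype
  have : Nonempty s := hsn.to_subtype
  set M := Fintype.card s with hM
  refine ⟨M, fun L => ?_⟩
  let π : (s → ℝ) →L[ℝ] V := ∑ x : s, (ContinuousLinearMap.proj x).smulRight x.1
  have hπ : ∀ x, π x = ∑ i, x i • i.1 := fun x => by simp [π]
  have hPim : (P : Set V) = π '' stdSimplex ℝ s := by
    rw [hP, hs.convexHull_eq_image]
    ext y
    simp only [hπ, Set.mem_image]
    simp
  have hXc : Convex ℝ (simplexD s (M : ℝ)) := by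
    rw [simplexD_smul (Nat.cast_nonneg M)]
    exact (convex_stdSimplex ℝ s).smul _
  have hXk : IsCompact (simplexD s (M : ℝ)) := by
    rw [simplexD_smul (Nat.cast_nonneg M)]
    exact (isCompact_stdSimplex ℝ s).smul _
  have h := val_inclusion_exclusion hφ π L (fun i : s => ContinuousLinearMap.proj i) Finset.univ
    Finset.univ_nonempty (simplexD s (M : ℝ)) hXc hXk (by
      rintro x ⟨-, hx⟩ hle i -
      simp only [ContinuousLinearMap.proj_apply] at hle ⊢
      have h0 : ∑ i, (1 - x i) = 0 := by
        rw [Finset.sum_sub_distrib, hx]; simp [hM]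
      have := (Finset.sum_eq_zero_iff_of_nonneg (fun i _ => sub_nonneg.2 (hle i (by simp)))).1 h0 i
        (by simp)
      linarith)
  rw [← h]
  have hterm : ∀ S : Finset s,
      val φ (π '' (simplexD s (M : ℝ) ∩ {x | ∀ i ∈ S, 1 ≤ (ContinuousLinearMap.proj i :
        (s → ℝ) →L[ℝ] ℝ) x}) + L) = φ (L + ((M - S.card : ℕ) : ℝ≥0) • P) := by
    intro S
    have hSM : S.card ≤ M := Finset.card_le_univ S
    set e : s → ℝ := fun i => if i ∈ S then 1 else 0 with he
    have hset : simplexD s (M : ℝ) ∩ {x | ∀ i ∈ S, 1 ≤ (ContinuousLinearMap.proj i :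
        (s → ℝ) →L[ℝ] ℝ) x} = (fun y => e + y) '' simplexD s ((M - S.card : ℕ) : ℝ) := by
      have hsum : ∑ i, e i = S.card := by simp [he]
      ext x
      constructor
      · rintro ⟨⟨h0, h1⟩, h2⟩
        simp only [Set.mem_ofPred_eq, ContinuousLinearMap.proj_apply] at h2
        refine ⟨x - e, ⟨fun i => ?_, ?_⟩, by simp⟩
        · by_cases hi : i ∈ S
          · simpa [he, hi] using h2 i hi
          · simpa [he, hi] using h0 i
        · simp only [Pi.sub_apply, Finset.sum_sub_distrib, h1, hsum]
          rw [Nat.cast_sub hSM]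
      · rintro ⟨y, ⟨h0, h1⟩, rfl⟩
        refine ⟨⟨fun i => ?_, ?_⟩, fun i hi => ?_⟩
        · have : 0 ≤ e i := by simp only [he]; split_ifs <;> norm_num
          exact add_nonneg this (h0 i)
        · simp only [Pi.add_apply, Finset.sum_add_distrib, h1, hsum]
          rw [Nat.cast_sub hSM]; ring
        · have := h0 i
          simp [he, hi, this]
    rw [hset, simplexD_smul (Nat.cast_nonneg _), Set.image_image]
    have : (fun x => π (e + x)) '' (((M - S.card : ℕ) : ℝ) • stdSimplex ℝ s) + (L : Set V) =
        (fun y => π e + y) '' ((L : Set V) + ((M - S.card : ℕ) : ℝ≥0) • (P : Set V)) := by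
      rw [hPim]
      ext z
      simp only [Set.mem_add, Set.mem_image, Set.mem_smul_set]
      constructor
      · rintro ⟨_, ⟨_, ⟨w, hw, rfl⟩, rfl⟩, l, hl, rfl⟩
        refine ⟨_, ⟨l, hl, _, ⟨_, ⟨w, hw, rfl⟩, rfl⟩, rfl⟩, ?_⟩
        simp only [map_add, map_smul, NNReal.smul_def, NNReal.coe_natCast]
        abel
      · rintro ⟨_, ⟨l, hl, _, ⟨_, ⟨w, hw, rfl⟩, rfl⟩, rfl⟩, rfl⟩
        refine ⟨_, ⟨_, ⟨w, hw, rfl⟩, rfl⟩, l, hl, ?_⟩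
        simp only [map_add, map_smul, NNReal.smul_def, NNReal.coe_natCast]
        abel
    rw [this, phi_add_singleton hT, ← val_coe φ, ConvexBody.coe_add, ConvexBody.coe_smul']
  simp_rw [hterm]
  rw [Finset.sum_powerset_apply_card (fun k => (-1 : ℂ) ^ k * φ (L + ((M - k : ℕ) : ℝ≥0) • P))]
  rw [Finset.card_univ, ← hM]
  refine Finset.sum_congr rfl fun j _ => ?_
  rw [nsmul_eq_mul]; ring

end Cuts

/-! ### Compactness of bodies and growth of valuations -/

section Growth

variable {V : Type*} [NormedAddCommGroup V]

section Blaschke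
variable [NormedSpace ℝ V] [FiniteDimensional ℝ V]

/-- A limit, in the Hausdorff distance, of closed convex sets is convex. -/
lemma isClosed_convex_closeds :
    IsClosed {K : TopologicalSpace.Closeds V | Convex ℝ (K : Set V)} := by
  refine isClosed_of_closure_subset fun K hK => ?_
  rw [EMetric.mem_closure_iff] at hK
  intro x hx y hy a b ha hb hab
  have : a • x + b • y ∈ closure (K : Set V) := by
    rw [Metric.mem_closure_iff]
    intro ε hε
    obtain ⟨L, hL, hKL⟩ := hK (ENNReal.ofReal (ε / 2)) (by simpa using hε)
    rw [TopologicalSpace.Closeds.edist_eq] at hKL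
    obtain ⟨x', hx', hxx⟩ := exists_edist_lt_of_hausdorffEDist_lt hx hKL
    obtain ⟨y', hy', hyy⟩ := exists_edist_lt_of_hausdorffEDist_lt hy hKL
    rw [Metric.hausdorffEDist_comm] at hKL
    obtain ⟨z, hz, hzz⟩ := exists_edist_lt_of_hausdorffEDist_lt (hL hx' hy' ha hb hab) hKL
    rw [edist_lt_ofReal] at hxx hyy hzz
    refine ⟨z, hz, ?_⟩
    calc dist (a • x + b • y) z ≤ dist (a • x + b • y) (a • x' + b • y') +
          dist (a • x' + b • y') z := dist_triangle _ _ _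
      _ < ε / 2 + ε / 2 := by
        refine add_lt_add_of_le_of_lt ?_ hzz
        calc dist (a • x + b • y) (a • x' + b • y') ≤ dist (a • x) (a • x') +
              dist (b • y) (b • y') := dist_add_add_le _ _ _ _
          _ ≤ a * (ε / 2) + b * (ε / 2) := by
            rw [dist_smul₀, dist_smul₀, Real.norm_of_nonneg ha, Real.norm_of_nonneg hb]
            gcongr
          _ = ε / 2 := by rw [← add_mul, hab, one_mul]
      _ = ε := by ring
  rwa [K.isClosed.closure_eq] at this

/-- Blaschke's selection theorem. -/
lemma isCompact_bodies (R : ℝ) : IsCompact {K : ConvexBody V | (K : Set V) ⊆ closedBall 0 R} := by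
  let f : ConvexBody V → TopologicalSpace.Closeds V := fun K => ⟨K, K.isClosed⟩
  have hf : Isometry f := fun K L => by
    rw [← ConvexBody.hausdorffEDist_coe]; rfl
  rw [hf.isEmbedding.isCompact_iff]
  have h1 : IsCompact {K : TopologicalSpace.Closeds V | (K : Set V) ⊆ closedBall 0 R} :=
    TotallyBounded.isCompact_of_isClosed
      (TopologicalSpace.Closeds.totallyBounded_subsets_of_totallyBounded
        (isCompact_closedBall (0 : V) R).totallyBounded)
      (TopologicalSpace.Closeds.isClosed_subsets_of_isClosed isClosed_closedBall)
  have h2 := (h1.inter_right isClosed_convex_closeds).inter_right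
    (TopologicalSpace.Closeds.isClopen_singleton_bot (α := V)).compl.isClosed
  convert h2 using 1
  ext K
  simp only [Set.mem_image, Set.mem_inter_iff, Set.mem_ofPred_eq, Set.mem_compl_iff,
    Set.mem_singleton_iff]
  constructor
  · rintro ⟨K, hK, rfl⟩
    refine ⟨⟨hK, K.convex⟩, fun h => ?_⟩
    have := congrArg (fun L : TopologicalSpace.Closeds V => (L : Set V)) h
    have hn := K.nonempty
    simp [f] at this
    exact hn.ne_empty this
  · rintro ⟨⟨h, h'⟩, hne⟩
    refine ⟨⟨K, h', (isCompact_closedBall (0 : V) R).of_isClosed_subset K.isClosed h, ?_⟩, h, rfl⟩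
    rw [Set.nonempty_iff_ne_empty]
    intro h0
    exact hne (TopologicalSpace.Closeds.ext (by simpa using h0))

end Blaschke

section slabs
variable [NormedSpace ℝ V]

lemma val_cut_set {φ : ConvexBody V → ℂ} (hφ : IsValuation φ)
    (ℓ : V →L[ℝ] ℝ) (c : ℝ) {X : Set V} (hX : Convex ℝ X) (hX' : IsCompact X) :
    val φ X + val φ (X ∩ {x | ℓ x = c}) =
      val φ (X ∩ {x | c ≤ ℓ x}) + val φ (X ∩ {x | ℓ x ≤ c}) := by
  have := val_cut hφ (ContinuousLinearMap.id ℝ V) 0 ℓ c hX hX'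
  simpa using this

/-- Slicing a body of width at most `k` into slabs of width `1`. -/
lemma val_slabs {φ : ConvexBody V → ℂ} (hφ : IsValuation φ) (ℓ : V →L[ℝ] ℝ) {B : ℝ} (hB : 0 ≤ B)
    (k : ℕ) : ∀ {X : Set V}, Convex ℝ X → IsCompact X →
      (∀ x ∈ X, ∀ y ∈ X, ℓ x - ℓ y ≤ k) →
      (∀ A ⊆ X, Convex ℝ A → IsCompact A → (∀ x ∈ A, ∀ y ∈ A, ℓ x - ℓ y ≤ 1) → ‖val φ A‖ ≤ B) →
      ‖val φ X‖ ≤ (2 * k + 1) * B := by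
  induction k with
  | zero =>
    intro X hX hX' hw h
    have := h X subset_rfl hX hX' (fun x hx y hy => by
      have := hw x hx y hy; push_cast at this; linarith)
    simpa using this
  | succ k ih =>
    intro X hX hX' hw h
    rcases X.eq_empty_or_nonempty with rfl | hne
    · simp; positivity
    obtain ⟨m, hm, hmin⟩ := hX'.exists_isMinOn hne ℓ.continuous.continuousOn
    have hcut := val_cut_set hφ ℓ (ℓ m + 1) hX hX'
    have hmin' : ∀ x ∈ X, ℓ m ≤ ℓ x := fun x hx => hmin hx
    have e1 : ‖val φ (X ∩ {x | ℓ x = ℓ m + 1})‖ ≤ B := by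
      refine h _ Set.inter_subset_left (hX.inter (convex_hyperplane ℓ.isLinear _))
        (hX'.inter_right (isClosed_eq ℓ.continuous continuous_const)) ?_
      rintro x ⟨hx, hx'⟩ y ⟨hy, hy'⟩
      simp only [Set.mem_ofPred_eq] at hx' hy'
      linarith
    have e2 : ‖val φ (X ∩ {x | ℓ x ≤ ℓ m + 1})‖ ≤ B := by
      refine h _ Set.inter_subset_left (hX.inter (convex_halfSpace_le ℓ.isLinear _))
        (hX'.inter_right (isClosed_le ℓ.continuous continuous_const)) ?_
      rintro x ⟨hx, hx'⟩ y ⟨hy, hy'⟩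
      simp only [Set.mem_ofPred_eq] at hx' hy'
      linarith [hmin' y hy]
    have e3 : ‖val φ (X ∩ {x | ℓ m + 1 ≤ ℓ x})‖ ≤ (2 * k + 1) * B := by
      refine ih (hX.inter (convex_halfSpace_ge ℓ.isLinear _))
        (hX'.inter_right (isClosed_le continuous_const ℓ.continuous)) ?_
        (fun A hA => h A (hA.trans Set.inter_subset_left))
      rintro x ⟨hx, hx'⟩ y ⟨hy, hy'⟩
      simp only [Set.mem_ofPred_eq] at hx' hy'
      have := hw x hx m hm
      push_cast at this
      linarith
    have : val φ X = val φ (X ∩ {x | ℓ m + 1 ≤ ℓ x}) + val φ (X ∩ {x | ℓ x ≤ ℓ m + 1}) -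
        val φ (X ∩ {x | ℓ x = ℓ m + 1}) := by rw [← hcut]; ring
    rw [this]
    calc _ ≤ ‖val φ (X ∩ {x | ℓ m + 1 ≤ ℓ x})‖ + ‖val φ (X ∩ {x | ℓ x ≤ ℓ m + 1})‖ +
          ‖val φ (X ∩ {x | ℓ x = ℓ m + 1})‖ :=
          (norm_sub_le _ _).trans (add_le_add_left (norm_add_le _ _) _)
      _ ≤ (2 * k + 1) * B + B + B := by gcongr
      _ = _ := by push_cast; ring
end slabs

variable [InnerProductSpace ℝ V] [FiniteDimensional ℝ V]

/-- A translation invariant continuous valuation grows at most like the volume: cut the body into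
pieces of width at most `1` in each coordinate direction; up to translation these lie in a fixed ball,
and by Blaschke's theorem the valuation is bounded on them. -/
lemma growth {φ : ConvexBody V → ℂ} (hφ : MemVal φ) :
    ∃ B : ℝ, 0 ≤ B ∧ ∀ R : ℝ, 0 ≤ R → ∀ K : ConvexBody V, (K : Set V) ⊆ closedBall 0 R →
      ‖φ K‖ ≤ B * (1 + R) ^ Module.finrank ℝ V := by
  classical
  set n := Module.finrank ℝ V with hn
  let b := stdOrthonormalBasis ℝ V
  let ℓ : Fin n → V →L[ℝ] ℝ := fun i => innerSL ℝ (b i)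
  have hℓ : ∀ i x, |ℓ i x| ≤ ‖x‖ := fun i x => by
    have := abs_real_inner_le_norm (b i) x
    simpa [ℓ] using this
  obtain ⟨B, hB⟩ : ∃ B, ∀ K ∈ {K : ConvexBody V | (K : Set V) ⊆ closedBall 0 (√ n)}, ‖φ K‖ ≤ B :=
    (isCompact_bodies (√ n)).exists_bound_of_continuousOn hφ.2.2.continuousOn
  have hB0 : 0 ≤ max B 0 := le_max_right _ _
  have main : ∀ (s : Finset (Fin n)) (k : ℕ) (X : Set V), Convex ℝ X → IsCompact X →
      (∀ i ∉ s, ∀ x ∈ X, ∀ y ∈ X, ℓ i x - ℓ i y ≤ 1) →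
      (∀ i ∈ s, ∀ x ∈ X, ∀ y ∈ X, ℓ i x - ℓ i y ≤ k) →
      ‖val φ X‖ ≤ (2 * k + 1) ^ s.card * max B 0 := by
    intro s
    induction s using Finset.induction_on with
    | empty =>
      intro k X hX hX' h1 _
      rcases X.eq_empty_or_nonempty with rfl | ⟨x₀, hx₀⟩
      · simp
      have := phi_add_singleton hφ.2.1 X (-x₀)
      rw [← this]
      have hb : (⟨(fun y => -x₀ + y) '' X, hX.translate _, hX'.image (by fun_prop),
          ⟨_, x₀, hx₀, rfl⟩⟩ : ConvexBody V) ∈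
          {K : ConvexBody V | (K : Set V) ⊆ closedBall 0 (√ n)} := by
        rintro _ ⟨x, hx, rfl⟩
        rw [mem_closedBall_zero_iff]
        apply Real.le_sqrt_of_sq_le
        rw [← b.sum_sq_norm_inner_right]
        calc _ ≤ ∑ i : Fin n, (1 : ℝ) := by
              refine Finset.sum_le_sum fun i _ => ?_
              have u1 := h1 i (by simp) x hx x₀ hx₀
              have u2 := h1 i (by simp) x₀ hx₀ x hx
              simp only [ℓ, innerSL_apply_apply] at u1 u2
              rw [Real.norm_eq_abs, sq_abs, inner_add_right, inner_neg_right]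
              nlinarith
          _ = n := by simp
      have := hB _ hb
      rw [← val_coe φ] at this
      simpa using Or.inl this
    | insert i s hi ih =>
      intro k X hX hX' h1 h2
      rw [Finset.card_insert_of_notMem hi, pow_succ', mul_assoc]
      refine val_slabs hφ.1 (ℓ i) (by positivity) k hX hX' (h2 i (by simp)) ?_
      intro A hA hAc hAk hw
      refine ih k A hAc hAk ?_ ?_
      · intro j hj x hx y hy
        by_cases hji : j = i
        · subst hji; exact hw x hx y hy
        · exact h1 j (by simp [hji, hj]) x (hA hx) y (hA hy)
      · intro j hj x hx y hy
        exact h2 j (by simp [hj]) x (hA hx) y (hA hy)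
  refine ⟨4 ^ n * max B 0, by positivity, fun R hR K hK => ?_⟩
  have := main Finset.univ ⌈2 * R⌉₊ K K.convex K.isCompact (by simp) (by
    intro i _ x hx y hy
    have a1 := hℓ i x
    have a2 := hℓ i y
    have a3 := mem_closedBall_zero_iff.1 (hK hx)
    have a4 := mem_closedBall_zero_iff.1 (hK hy)
    rw [abs_le] at a1 a2
    linarith [Nat.le_ceil (2 * R)])
  rw [val_coe, Finset.card_univ, Fintype.card_fin] at this
  refine this.trans ?_
  rw [mul_right_comm, ← mul_pow]
  have h3 : (⌈2 * R⌉₊ : ℝ) < 2 * R + 1 := Nat.ceil_lt_add_one (by positivity)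
  gcongr
  linarith

end Growth

/-! ### Polynomial sequences -/

section Lagrange
open Polynomial

/-- The `j`-th Lagrange basis polynomial for the nodes `0, …, d`. -/
noncomputable def lg (d j : ℕ) : ℂ[X] :=
  Lagrange.basis (Finset.range (d + 1)) (fun i : ℕ => (i : ℂ)) j

lemma eval_eq_lg {d : ℕ} {p : ℂ[X]} (hp : p.natDegree ≤ d) (z : ℂ) :
    p.eval z = ∑ j ∈ Finset.range (d + 1), p.eval (j : ℂ) * (lg d j).eval z := by
  have h := Lagrange.eq_interpolate (s := Finset.range (d + 1)) (v := fun i : ℕ => (i : ℂ)) (f := p)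
    (fun a _ b _ hab => Nat.cast_injective hab) (by
      rw [Finset.card_range]
      exact (degree_le_natDegree).trans_lt (by exact_mod_cast Nat.lt_succ_of_le hp))
  conv_lhs => rw [h]
  rw [Lagrange.interpolate_apply, eval_finsetSum]
  simp [lg]

/-- A sequence with vanishing `M`-th differences is polynomial. -/
lemma exists_poly_of_fwdDiff {f : ℕ → ℂ} {M : ℕ} (hf : ∀ k, (fwdDiff 1)^[M] f k = 0) :
    ∃ p : ℂ[X], ∀ k : ℕ, f k = p.eval (k : ℂ) := by
  have hz : ∀ i, M ≤ i → (fwdDiff 1)^[i] f 0 = 0 := by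
    intro i hi
    obtain ⟨r, rfl⟩ := Nat.exists_eq_add_of_le hi
    rw [add_comm, Function.iterate_add_apply]
    have h0 : (fwdDiff 1)^[M] f = fun _ => 0 := funext hf
    rw [h0]
    clear hi
    induction r with
    | zero => rfl
    | succ r ih => rw [Function.iterate_succ_apply, fwdDiff_const]; exact ih
  refine ⟨∑ i ∈ Finset.range M, C ((fwdDiff 1)^[i] f 0 / (i.factorial : ℂ)) * descPochhammer ℂ i, ?_⟩
  intro k
  have h := shift_eq_sum_fwdDiff_iter 1 f k 0
  simp only [nsmul_eq_mul, mul_one, zero_add, Nat.cast_id] at h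
  rw [h]
  have h1 : ∑ i ∈ Finset.range (k + 1), (k.choose i : ℂ) * (fwdDiff 1)^[i] f 0 =
      ∑ i ∈ Finset.range (max (k + 1) M), (k.choose i : ℂ) * (fwdDiff 1)^[i] f 0 := by
    refine Finset.sum_subset (by simp) fun i _ hi => ?_
    rw [Nat.choose_eq_zero_of_lt (by simpa using hi)]; simp
  have h2 : ∑ i ∈ Finset.range M, (k.choose i : ℂ) * (fwdDiff 1)^[i] f 0 =
      ∑ i ∈ Finset.range (max (k + 1) M), (k.choose i : ℂ) * (fwdDiff 1)^[i] f 0 := by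
    refine Finset.sum_subset (by simp) fun i _ hi => ?_
    rw [hz i (by simpa using hi)]; simp
  rw [h1, ← h2, eval_finsetSum]
  refine Finset.sum_congr rfl fun i _ => ?_
  rw [eval_mul, eval_C, descPochhammer_eval_eq_descFactorial, Nat.descFactorial_eq_factorial_mul_choose]
  have : (i.factorial : ℂ) ≠ 0 := by exact_mod_cast i.factorial_ne_zero
  push_cast
  field_simp

/-- Polynomial growth on `ℕ` bounds the degree. -/
lemma natDegree_le_of_growth {p : ℂ[X]} {B : ℝ} {n : ℕ}
    (h : ∀ k : ℕ, ‖p.eval (k : ℂ)‖ ≤ B * (1 + k) ^ n) : p.natDegree ≤ n := by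
  by_contra! hlt
  set q := p /ₘ (X ^ n) with hq
  set r := p %ₘ (X ^ n) with hr
  have hpq : r + X ^ n * q = p := modByMonic_add_div p _
  have hq0 : 0 < q.degree := by
    rw [← natDegree_pos_iff_degree_pos, hq, natDegree_divByMonic _ (monic_X_pow n), natDegree_X_pow]
    omega
  have htend := q.tendsto_norm_atTop hq0 (l := Filter.atTop) (z := fun k : ℕ => (k : ℂ)) (by
    simpa using tendsto_natCast_atTop_atTop (R := ℝ))
  have hrdeg : r.natDegree < n + 1 := by
    have h1 := degree_modByMonic_lt p (monic_X_pow (R := ℂ) n)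
    rw [degree_X_pow] at h1
    have h2 := natDegree_le_of_degree_le h1.le
    exact Nat.lt_succ_of_le h2
  have hbd : ∀ k : ℕ, 1 ≤ k → ‖q.eval (k : ℂ)‖ ≤ B * 2 ^ n + ∑ i ∈ Finset.range (n + 1), ‖r.coeff i‖ := by
    intro k hk
    have hk' : (1 : ℝ) ≤ k := by exact_mod_cast hk
    have hkp : (0 : ℝ) < (k : ℝ) ^ n := by positivity
    have e : (k : ℂ) ^ n * q.eval (k : ℂ) = p.eval (k : ℂ) - r.eval (k : ℂ) := by
      rw [← hpq]; simp
    have hB : 0 ≤ B := by simpa using (norm_nonneg _).trans (h 0)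
    have hrk : ‖r.eval (k : ℂ)‖ ≤ (∑ i ∈ Finset.range (n + 1), ‖r.coeff i‖) * (k : ℝ) ^ n := by
      rw [eval_eq_sum_range' hrdeg, Finset.sum_mul]
      refine (norm_sum_le _ _).trans (Finset.sum_le_sum fun i hi => ?_)
      rw [norm_mul, norm_pow, Complex.norm_natCast]
      gcongr
      exact Nat.lt_succ_iff.1 (Finset.mem_range.1 hi)
    have hpk : ‖p.eval (k : ℂ)‖ ≤ B * 2 ^ n * (k : ℝ) ^ n := by
      refine (h k).trans ?_
      rw [mul_assoc, ← mul_pow]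
      gcongr
      linarith
    have : (k : ℝ) ^ n * ‖q.eval (k : ℂ)‖ ≤
        (k : ℝ) ^ n * (B * 2 ^ n + ∑ i ∈ Finset.range (n + 1), ‖r.coeff i‖) := by
      calc _ = ‖(k : ℂ) ^ n * q.eval (k : ℂ)‖ := by rw [norm_mul, norm_pow, Complex.norm_natCast]
        _ ≤ ‖p.eval (k : ℂ)‖ + ‖r.eval (k : ℂ)‖ := by rw [e]; exact norm_sub_le _ _
        _ ≤ _ := by rw [mul_add]; linarith
    exact le_of_mul_le_mul_left this hkp
  obtain ⟨k, hk1, hk2⟩ := ((htend.eventually_gt_atTop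
    (B * 2 ^ n + ∑ i ∈ Finset.range (n + 1), ‖r.coeff i‖)).and
      (Filter.eventually_ge_atTop 1)).exists
  exact absurd (hbd k hk2) (not_le.2 hk1)

end Lagrange

/-! ### The Hausdorff metric on convex bodies -/

section BodyMetric
variable {V : Type*} [NormedAddCommGroup V] [NormedSpace ℝ V]

lemma dist_body_le {K L : ConvexBody V} {r : ℝ} (hr : 0 ≤ r)
    (h1 : ∀ x ∈ K, ∃ y ∈ L, dist x y ≤ r) (h2 : ∀ x ∈ L, ∃ y ∈ K, dist x y ≤ r) :
    dist K L ≤ r := by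
  rw [← ConvexBody.hausdorffDist_coe]
  exact hausdorffDist_le_of_mem_dist hr h1 h2

lemma exists_dist_body_le {K L : ConvexBody V} {x : V} (hx : x ∈ K) :
    ∃ y ∈ L, dist x y ≤ dist K L := by
  obtain ⟨y, hy, hxy⟩ := L.isCompact.exists_infDist_eq_dist L.nonempty x
  refine ⟨y, hy, ?_⟩
  rw [← hxy, ← ConvexBody.hausdorffDist_coe]
  exact infDist_le_hausdorffDist_of_mem hx ConvexBody.hausdorffEDist_ne_top

lemma mem_add_smul {L K : ConvexBody V} {c : ℝ≥0} {z : V} :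
    z ∈ L + c • K ↔ ∃ l ∈ L, ∃ x ∈ K, l + (c : ℝ) • x = z := by
  rw [← SetLike.mem_coe, ConvexBody.coe_add, ConvexBody.coe_smul', Set.mem_add]
  constructor
  · rintro ⟨l, hl, _, ⟨x, hx, rfl⟩, rfl⟩
    exact ⟨l, hl, x, hx, rfl⟩
  · rintro ⟨l, hl, x, hx, rfl⟩
    exact ⟨l, hl, _, ⟨x, hx, rfl⟩, rfl⟩

lemma dist_add_smul_le (L K K' : ConvexBody V) (c : ℝ≥0) :
    dist (L + c • K) (L + c • K') ≤ c * dist K K' := by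
  have key : ∀ K K' : ConvexBody V, ∀ z ∈ L + c • K, ∃ w ∈ L + c • K', dist z w ≤ c * dist K K' := by
    intro K K' z hz
    obtain ⟨l, hl, x, hx, rfl⟩ := mem_add_smul.1 hz
    obtain ⟨y, hy, hxy⟩ := exists_dist_body_le (L := K') hx
    refine ⟨_, mem_add_smul.2 ⟨l, hl, y, hy, rfl⟩, ?_⟩
    rw [dist_add_left, dist_smul₀, NNReal.norm_eq]
    gcongr
  exact dist_body_le (by positivity) (key K K') (by rw [dist_comm K K']; exact key K' K)

lemma continuous_add_smul (L : ConvexBody V) (c : ℝ≥0) :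
    Continuous fun K : ConvexBody V => L + c • K :=
  (LipschitzWith.of_dist_le_mul (K := c) fun K K' => dist_add_smul_le L K K' c).continuous

lemma continuous_add_smul' (L K : ConvexBody V) : Continuous fun c : ℝ≥0 => L + c • K := by
  obtain ⟨R, hR⟩ := K.isBounded.subset_closedBall 0
  have hR' : ∀ x ∈ K, ‖x‖ ≤ max R 0 := fun x hx =>
    (mem_closedBall_zero_iff.1 (hR hx)).trans (le_max_left _ _)
  have key : ∀ c d : ℝ≥0, ∀ z ∈ L + c • K, ∃ w ∈ L + d • K, dist z w ≤ max R 0 * dist c d := by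
    intro c d z hz
    obtain ⟨l, hl, x, hx, rfl⟩ := mem_add_smul.1 hz
    refine ⟨_, mem_add_smul.2 ⟨l, hl, x, hx, rfl⟩, ?_⟩
    rw [dist_add_left, dist_eq_norm, ← sub_smul, norm_smul, mul_comm, NNReal.dist_eq,
      Real.norm_eq_abs]
    gcongr
    exact hR' x hx
  refine (LipschitzWith.of_dist_le_mul (K := ⟨max R 0, le_max_right _ _⟩) fun c d => ?_).continuous
  exact dist_body_le (mul_nonneg (le_max_right _ _) dist_nonneg) (key c d)
    (by rw [dist_comm c d]; exact key d c)

/-- Polytopes are dense. -/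
lemma exists_polytope (K : ConvexBody V) {δ : ℝ} (hδ : 0 < δ) :
    ∃ P : ConvexBody V, (∃ s : Set V, s.Finite ∧ (P : Set V) = convexHull ℝ s) ∧ dist P K ≤ δ := by
  obtain ⟨s, hsK, hsf, hs⟩ := K.isCompact.finite_cover_balls hδ
  have hne : s.Nonempty := by
    obtain ⟨x, hx⟩ := K.nonempty
    obtain ⟨y, hy, -⟩ := Set.mem_iUnion₂.1 (hs hx)
    exact ⟨y, hy⟩
  refine ⟨⟨convexHull ℝ s, convex_convexHull ℝ s, hsf.isCompact_convexHull ℝ,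
    hne.convexHull⟩, ⟨s, hsf, rfl⟩, dist_body_le hδ.le ?_ ?_⟩
  · intro x hx
    exact ⟨x, convexHull_min hsK K.convex hx, by simp [hδ.le]⟩
  · intro x hx
    obtain ⟨y, hy, hxy⟩ := Set.mem_iUnion₂.1 (hs hx)
    exact ⟨y, subset_convexHull ℝ s hy, (mem_ball.1 hxy).le⟩

end BodyMetric

/-! ### McMullen's polynomiality theorem -/

section McMullen
variable {V : Type*} [NormedAddCommGroup V] [InnerProductSpace ℝ V] [FiniteDimensional ℝ V]

lemma mcmullen_polytope {φ : ConvexBody V → ℂ} (hφ : MemVal φ) (L P : ConvexBody V) {s : Set V}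
    (hs : s.Finite) (hP : (P : Set V) = convexHull ℝ s) :
    ∃ p : Polynomial ℂ, p.natDegree ≤ Module.finrank ℝ V ∧
      ∀ k : ℕ, φ (L + (k : ℝ≥0) • P) = p.eval (k : ℂ) := by
  obtain ⟨M, hM⟩ := polytope_difference hφ.1 hφ.2.1 P hs hP
  obtain ⟨p, hp⟩ := exists_poly_of_fwdDiff (f := fun k : ℕ => φ (L + (k : ℝ≥0) • P)) (M := M) (by
    intro k
    rw [fwdDiff_iter_eq_sum_shift]
    rw [← hM (L + (k : ℝ≥0) • P), ← Finset.sum_range_reflect]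
    refine Finset.sum_congr rfl fun j hj => ?_
    have hj' : j ≤ M := Nat.lt_succ_iff.1 (Finset.mem_range.1 hj)
    have e1 : M + 1 - 1 - j = M - j := by omega
    rw [e1, Nat.choose_symm hj', Nat.sub_sub_self hj', add_assoc, ← add_smul]
    simp only [smul_eq_mul, mul_one, zsmul_eq_mul]
    push_cast
    rfl)
  refine ⟨p, ?_, hp⟩
  obtain ⟨B, hB0, hB⟩ := growth hφ
  obtain ⟨R₁, hR₁⟩ := L.isBounded.subset_closedBall 0
  obtain ⟨R₂, hR₂⟩ := P.isBounded.subset_closedBall 0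
  set R := max (max R₁ R₂) 0
  have hR0 : 0 ≤ R := le_max_right _ _
  refine natDegree_le_of_growth (B := B * (1 + R) ^ Module.finrank ℝ V) fun k => ?_
  rw [← hp]
  refine (hB (R * (1 + k)) (by positivity) _ ?_).trans ?_
  · intro z hz
    obtain ⟨l, hl, x, hx, rfl⟩ := mem_add_smul.1 hz
    rw [mem_closedBall_zero_iff]
    have h1 : ‖l‖ ≤ R := (mem_closedBall_zero_iff.1 (hR₁ hl)).trans
      ((le_max_left _ _).trans (le_max_left _ _))
    have h2 : ‖x‖ ≤ R := (mem_closedBall_zero_iff.1 (hR₂ hx)).trans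
      ((le_max_right _ _).trans (le_max_left _ _))
    calc _ ≤ ‖l‖ + ‖((k : ℝ≥0) : ℝ) • x‖ := norm_add_le _ _
      _ ≤ R + k * R := by
        rw [norm_smul]
        simp only [NNReal.coe_natCast, Real.norm_natCast]
        gcongr
      _ = R * (1 + k) := by ring
  · rw [mul_assoc, ← mul_pow]
    gcongr
    nlinarith [(Nat.cast_nonneg k : (0 : ℝ) ≤ k)]

lemma mcmullen_nat {φ : ConvexBody V → ℂ} (hφ : MemVal φ) (L K : ConvexBody V) (k : ℕ) :
    φ (L + (k : ℝ≥0) • K) = ∑ j ∈ Finset.range (Module.finrank ℝ V + 1),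
      φ (L + (j : ℝ≥0) • K) * (lg (Module.finrank ℝ V) j).eval (k : ℂ) := by
  choose P hP hPK using fun m : ℕ => exists_polytope K (Nat.one_div_pos_of_nat (α := ℝ) (n := m))
  have hlim : Filter.Tendsto P Filter.atTop (nhds K) := by
    rw [tendsto_iff_dist_tendsto_zero]
    exact squeeze_zero (fun _ => dist_nonneg) hPK tendsto_one_div_add_atTop_nhds_zero_nat
  have hc : ∀ c : ℝ≥0, Filter.Tendsto (fun m => φ (L + c • P m)) Filter.atTop
      (nhds (φ (L + c • K))) := fun c =>
    ((hφ.2.2.comp (continuous_add_smul L c)).tendsto K).comp hlim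
  refine tendsto_nhds_unique (hc k) ?_
  have := tendsto_finsetSum (Finset.range (Module.finrank ℝ V + 1))
    fun (j : ℕ) _ => (hc j).mul_const ((lg (Module.finrank ℝ V) j).eval (k : ℂ))
  refine this.congr fun m => ?_
  obtain ⟨s, hs, hPs⟩ := hP m
  obtain ⟨p, hp, hpe⟩ := mcmullen_polytope hφ L (P m) hs hPs
  rw [hpe, eval_eq_lg hp]
  exact Finset.sum_congr rfl fun j _ => by rw [hpe]

/-- McMullen's theorem: `t ↦ φ (L + t K)`, `t ≥ 0`, is a polynomial of degree at most `dim V`. -/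
lemma mcmullen {φ : ConvexBody V → ℂ} (hφ : MemVal φ) (L K : ConvexBody V) :
    ∃ p : Polynomial ℂ, p.natDegree ≤ Module.finrank ℝ V ∧
      ∀ t : ℝ≥0, φ (L + t • K) = p.eval ((t : ℝ) : ℂ) := by
  set n := Module.finrank ℝ V with hn
  have hdeg : ∀ (a : ℕ → ℂ), (∑ j ∈ Finset.range (n + 1), Polynomial.C (a j) * lg n j).natDegree ≤ n := by
    intro a
    refine Polynomial.natDegree_sum_le_of_forall_le _ _ fun j hj => ?_
    refine (Polynomial.natDegree_C_mul_le _ _).trans ?_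
    rw [lg, Polynomial.natDegree_le_iff_degree_le]
    rw [Lagrange.degree_basis (fun a _ b _ hab => Nat.cast_injective hab) hj]
    simp
  refine ⟨∑ j ∈ Finset.range (n + 1), Polynomial.C (φ (L + (j : ℝ≥0) • K)) * lg n j, hdeg _, ?_⟩
  -- rational `t = a / b`: compare the polynomials of `K / b` and of `K`
  have hrat : ∀ a b : ℕ, 0 < b → φ (L + ((a : ℝ≥0) / b) • K) =
      (∑ j ∈ Finset.range (n + 1), Polynomial.C (φ (L + (j : ℝ≥0) • K)) * lg n j).eval
        ((((a : ℝ≥0) / b : ℝ≥0) : ℝ) : ℂ) := by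
    intro a b hb
    have hb' : (b : ℝ≥0) ≠ 0 := by positivity
    have hbc : (b : ℂ) ≠ 0 := by exact_mod_cast hb.ne'
    set q : Polynomial ℂ :=
      ∑ j ∈ Finset.range (n + 1), Polynomial.C (φ (L + (j : ℝ≥0) • ((b : ℝ≥0)⁻¹ • K))) * lg n j
    have hq : ∀ k : ℕ, φ (L + ((k : ℝ≥0) / b) • K) = q.eval (k : ℂ) := by
      intro k
      have := mcmullen_nat hφ L ((b : ℝ≥0)⁻¹ • K) k
      rw [smul_smul, ← div_eq_mul_inv] at this
      rw [this, Polynomial.eval_finsetSum]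
      simp
      rfl
    set r : Polynomial ℂ := q.comp (Polynomial.C (b : ℂ) * Polynomial.X)
    have hr : r.natDegree ≤ n := by
      refine Polynomial.natDegree_comp_le.trans ?_
      have h1 : (Polynomial.C (b : ℂ) * Polynomial.X).natDegree ≤ 1 :=
        (Polynomial.natDegree_C_mul_le _ _).trans Polynomial.natDegree_X_le
      calc _ ≤ n * 1 := Nat.mul_le_mul (hdeg _) h1
        _ = n := mul_one n
    have hre : ∀ z, r.eval z = q.eval (b * z) := fun z => by simp [r]
    have e := eval_eq_lg hr (((((a : ℝ≥0) / b : ℝ≥0) : ℝ) : ℂ))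
    have e2 : (b : ℂ) * ((((a : ℝ≥0) / b : ℝ≥0) : ℝ) : ℂ) = a := by
      push_cast; field_simp
    rw [hre, e2, ← hq] at e
    rw [e, Polynomial.eval_finsetSum]
    refine Finset.sum_congr rfl fun j _ => ?_
    rw [hre, Polynomial.eval_mul, Polynomial.eval_C]
    congr 1
    have := hq (b * j)
    push_cast at this
    rw [← this, mul_div_cancel_left₀ _ hb']
  let S : Set ℝ≥0 := {t : ℝ≥0 | φ (L + t • K) =
      (∑ j ∈ Finset.range (n + 1), Polynomial.C (φ (L + (j : ℝ≥0) • K)) * lg n j).eval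
        ((t : ℝ) : ℂ)}
  have hclosed : IsClosed S := by
    refine isClosed_eq (hφ.2.2.comp (continuous_add_smul' L K)) ?_
    exact (Polynomial.continuous _).comp (Complex.continuous_ofReal.comp NNReal.continuous_coe)
  intro t
  suffices hmem : t ∈ S from hmem
  refine hclosed.mem_of_tendsto (b := Filter.atTop)
    (f := fun m : ℕ => (⌊(t : ℝ) * m⌋₊ : ℝ≥0) / m) ?_ ?_
  · rw [← NNReal.tendsto_coe]
    push_cast
    exact (tendsto_nat_floor_mul_div_atTop t.2).comp tendsto_natCast_atTop_atTop
  · filter_upwards [Filter.eventually_gt_atTop 0] with m hm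
    exact hrat _ m hm

end McMullen

/-! ### Support functions -/

section Support
variable {V : Type*} [NormedAddCommGroup V] [InnerProductSpace ℝ V]

/-- Continuous real functions on the unit sphere. -/
abbrev CS (V : Type*) [NormedAddCommGroup V] := C(sphere (0 : V) 1, ℝ)

/-- The support function of a convex body, on all of `V`. -/
noncomputable def hV (K : ConvexBody V) (x : V) : ℝ := sSup ((fun z => inner ℝ x z) '' (K : Set V))

lemma hV_bdd (K : ConvexBody V) (x : V) : BddAbove ((fun z => inner ℝ x z) '' (K : Set V)) :=
  (K.isCompact.image (by fun_prop)).bddAbove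

lemma inner_le_hV {K : ConvexBody V} {z : V} (hz : z ∈ K) (x : V) : inner ℝ x z ≤ hV K x :=
  le_csSup (hV_bdd K x) ⟨z, hz, rfl⟩

lemma hV_le {K : ConvexBody V} {x : V} {c : ℝ} (h : ∀ z ∈ K, inner ℝ x z ≤ c) : hV K x ≤ c :=
  csSup_le (K.nonempty.image _) (by rintro _ ⟨z, hz, rfl⟩; exact h z hz)

lemma exists_hV (K : ConvexBody V) (x : V) : ∃ z ∈ K, hV K x = inner ℝ x z := by
  obtain ⟨z, hz, h⟩ := K.isCompact.exists_isMaxOn K.nonempty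
    (f := fun z => inner ℝ x z) (by fun_prop)
  exact ⟨z, hz, le_antisymm (hV_le fun y hy => h hy) (inner_le_hV hz x)⟩

lemma hV_add_le (K : ConvexBody V) (x y : V) : hV K (x + y) ≤ hV K x + hV K y := by
  refine hV_le fun z hz => ?_
  rw [inner_add_left]
  exact add_le_add (inner_le_hV hz x) (inner_le_hV hz y)

lemma hV_smul (K : ConvexBody V) {c : ℝ} (hc : 0 ≤ c) (x : V) : hV K (c • x) = c * hV K x := by
  obtain ⟨z, hz, h⟩ := exists_hV K x
  refine le_antisymm (hV_le fun y hy => ?_) ?_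
  · rw [real_inner_smul_left]
    exact mul_le_mul_of_nonneg_left (inner_le_hV hy x) hc
  · rw [h, ← real_inner_smul_left]
    exact inner_le_hV hz _

lemma continuous_hV (K : ConvexBody V) : Continuous (hV K) := by
  obtain ⟨R, hR⟩ := K.isBounded.subset_closedBall 0
  have hR' : ∀ x ∈ K, ‖x‖ ≤ max R 0 := fun x hx =>
    (mem_closedBall_zero_iff.1 (hR hx)).trans (le_max_left _ _)
  refine (LipschitzWith.of_le_add_mul (max R 0).toNNReal fun x y => ?_).continuous
  have h1 : hV K (x - y) ≤ max R 0 * dist x y := by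
    refine hV_le fun z hz => (real_inner_le_norm _ _).trans ?_
    rw [mul_comm, dist_eq_norm]
    exact mul_le_mul_of_nonneg_right (hR' z hz) (norm_nonneg _)
  have := hV_add_le K y (x - y)
  rw [add_sub_cancel] at this
  rw [Real.coe_toNNReal _ (le_max_right _ _)]
  linarith

/-- The support function of a convex body, restricted to the unit sphere. -/
noncomputable def hs (K : ConvexBody V) : CS V := ⟨fun u => hV K u, by
  have := continuous_hV K; fun_prop⟩

@[simp] lemma hs_apply (K : ConvexBody V) (u : sphere (0 : V) 1) : hs K u = hV K u := rfl

lemma hV_add (K L : ConvexBody V) (x : V) : hV (K + L) x = hV K x + hV L x := by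
  refine le_antisymm (hV_le fun z hz => ?_) ?_
  · rw [← SetLike.mem_coe, ConvexBody.coe_add] at hz
    obtain ⟨a, ha, b, hb, rfl⟩ := hz
    rw [inner_add_right]
    exact add_le_add (inner_le_hV ha x) (inner_le_hV hb x)
  · obtain ⟨a, ha, h⟩ := exists_hV K x
    obtain ⟨b, hb, h'⟩ := exists_hV L x
    rw [h, h', ← inner_add_right]
    refine inner_le_hV ?_ _
    rw [← SetLike.mem_coe, ConvexBody.coe_add]
    exact ⟨a, ha, b, hb, rfl⟩

lemma hV_smul_body (K : ConvexBody V) (c : ℝ≥0) (x : V) : hV (c • K) x = c * hV K x := by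
  refine le_antisymm (hV_le fun z hz => ?_) ?_
  · rw [← SetLike.mem_coe, ConvexBody.coe_smul'] at hz
    obtain ⟨a, ha, rfl⟩ := hz
    have : inner ℝ x ((c : ℝ) • a) = (c : ℝ) * inner ℝ x a := real_inner_smul_right _ _ _
    refine this.trans_le ?_
    exact mul_le_mul_of_nonneg_left (inner_le_hV ha x) c.2
  · obtain ⟨a, ha, h⟩ := exists_hV K x
    rw [h, ← real_inner_smul_right]
    refine inner_le_hV ?_ _
    rw [← SetLike.mem_coe, ConvexBody.coe_smul']
    exact ⟨a, ha, rfl⟩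

lemma hs_add (K L : ConvexBody V) : hs (K + L) = hs K + hs L := by
  ext u; simp [hV_add]

lemma hs_smul (K : ConvexBody V) (c : ℝ≥0) : hs (c • K) = (c : ℝ) • hs K := by
  ext u; simp [hV_smul_body]

/-- Normalisation of a nonzero vector. -/
noncomputable def nrm (x : V) (hx : x ≠ 0) : sphere (0 : V) 1 :=
  ⟨‖x‖⁻¹ • x, by simp [norm_smul, norm_ne_zero_iff.2 hx]⟩

lemma norm_smul_nrm (x : V) (hx : x ≠ 0) : ‖x‖ • (nrm x hx : V) = x := by
  simp [nrm, smul_smul, norm_ne_zero_iff.2 hx]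

open Classical in
/-- The positively homogeneous extension to `V` of a function on the sphere. -/
noncomputable def lift (F : CS V) (x : V) : ℝ := if hx : x = 0 then 0 else ‖x‖ * F (nrm x hx)

lemma lift_zero (F : CS V) : lift F 0 = 0 := by simp [lift]

lemma lift_of_ne (F : CS V) {x : V} (hx : x ≠ 0) : lift F x = ‖x‖ * F (nrm x hx) := by
  simp [lift, hx]

lemma sph_ne (u : sphere (0 : V) 1) : (u : V) ≠ 0 := by
  intro h; have := norm_eq_of_mem_sphere u; simp [h] at this

lemma lift_coe (F : CS V) (u : sphere (0 : V) 1) : lift F u = F u := by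
  rw [lift_of_ne _ (sph_ne u)]
  have : nrm (u : V) (sph_ne u) = u := by ext; simp [nrm]
  rw [this]; simp

lemma lift_smul (F : CS V) {c : ℝ} (hc : 0 ≤ c) (x : V) : lift F (c • x) = c * lift F x := by
  rcases hc.eq_or_lt with rfl | hc
  · simp [lift_zero]
  by_cases hx : x = 0
  · simp [hx, lift_zero]
  have hcx : c • x ≠ 0 := smul_ne_zero hc.ne' hx
  rw [lift_of_ne _ hx, lift_of_ne _ hcx]
  have : nrm (c • x) hcx = nrm x hx := by
    ext
    simp only [nrm, norm_smul, smul_smul, Real.norm_eq_abs, abs_of_pos hc]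
    congr 1; field_simp
  rw [this, norm_smul, Real.norm_eq_abs, abs_of_pos hc, mul_assoc]

lemma lift_hs (K : ConvexBody V) (x : V) : lift (hs K) x = hV K x := by
  by_cases hx : x = 0
  · subst hx
    rw [lift_zero]
    have := hV_smul K le_rfl (0 : V)
    simpa using this.symm
  · rw [lift_of_ne _ hx, hs_apply, ← hV_smul K (norm_nonneg x), norm_smul_nrm]

lemma lift_add (F G : CS V) (x : V) : lift (F + G) x = lift F x + lift G x := by
  by_cases hx : x = 0
  · simp [hx, lift_zero]
  · simp [lift_of_ne _ hx, mul_add]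

lemma lift_csmul (F : CS V) (c : ℝ) (x : V) : lift (c • F) x = c * lift F x := by
  by_cases hx : x = 0
  · simp [hx, lift_zero]
  · simp [lift_of_ne _ hx]; ring

/-- `F` is (the restriction to the sphere of) a sublinear function. -/
def Cvx (F : CS V) : Prop := ∀ x y : V, lift F (x + y) ≤ lift F x + lift F y

lemma cvx_hs (K : ConvexBody V) : Cvx (hs K) := by
  intro x y; simp only [lift_hs]; exact hV_add_le K x y

lemma Cvx.add {F G : CS V} (hF : Cvx F) (hG : Cvx G) : Cvx (F + G) := by
  intro x y; simp only [lift_add]; linarith [hF x y, hG x y]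

lemma Cvx.smul {F : CS V} (hF : Cvx F) {c : ℝ} (hc : 0 ≤ c) : Cvx (c • F) := by
  intro x y; simp only [lift_csmul]; nlinarith [hF x y]

lemma lift_mono {F G : CS V} (h : ∀ u, F u ≤ G u) (x : V) : lift F x ≤ lift G x := by
  by_cases hx : x = 0
  · simp [hx, lift_zero]
  · simp only [lift_of_ne _ hx]; exact mul_le_mul_of_nonneg_left (h _) (norm_nonneg _)

lemma lift_sup (F G : CS V) (x : V) : lift (F ⊔ G) x = lift F x ⊔ lift G x := by
  by_cases hx : x = 0
  · simp [hx, lift_zero]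
  · simp [lift_of_ne _ hx, mul_max_of_nonneg]

lemma lift_inf (F G : CS V) (x : V) : lift (F ⊓ G) x = lift F x ⊓ lift G x := by
  by_cases hx : x = 0
  · simp [hx, lift_zero]
  · simp [lift_of_ne _ hx, mul_min_of_nonneg]

lemma Cvx.sup {F G : CS V} (hF : Cvx F) (hG : Cvx G) : Cvx (F ⊔ G) := by
  intro x y
  simp only [lift_sup]
  refine max_le ((hF x y).trans ?_) ((hG x y).trans ?_)
  · exact add_le_add (le_max_left _ _) (le_max_left _ _)
  · exact add_le_add (le_max_right _ _) (le_max_right _ _)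

variable [FiniteDimensional ℝ V]

lemma continuous_lift_apply (x : V) : Continuous fun F : CS V => lift F x := by
  by_cases hx : x = 0
  · simp [hx, lift_zero, continuous_const]
  · simp only [lift_of_ne _ hx]; fun_prop

lemma isClosed_cvx : IsClosed {F : CS V | Cvx F} := by
  simp only [Cvx, Set.ofPred_forall]
  exact isClosed_iInter fun x => isClosed_iInter fun y =>
    isClosed_le (continuous_lift_apply _) ((continuous_lift_apply _).add (continuous_lift_apply _))

/-- A point is in a convex body as soon as it satisfies all supporting inequalities. -/
lemma mem_of_inner_le {K : ConvexBody V} {z : V}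
    (h : ∀ u : sphere (0 : V) 1, inner ℝ (u : V) z ≤ hs K u) : z ∈ K := by
  by_contra hz
  obtain ⟨f, c, hf, hc⟩ := geometric_hahn_banach_closed_point K.convex K.isClosed hz
  set w := (InnerProductSpace.toDual ℝ V).symm f
  have hw : ∀ x, f x = inner ℝ w x := fun x => (InnerProductSpace.toDual_symm_apply).symm
  have hw0 : w ≠ 0 := by
    intro h0
    obtain ⟨a, ha⟩ := K.nonempty
    have h1 := hf a ha
    rw [hw, h0, inner_zero_left] at h1 hc
    linarith
  have h1 := h (nrm w hw0)
  have h2 : hV K w ≤ c := hV_le fun x hx => by rw [← hw]; exact (hf x hx).le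
  have h3 : inner ℝ w z ≤ hV K w := by
    rw [← norm_smul_nrm w hw0, hV_smul K (norm_nonneg _), real_inner_smul_left]
    exact mul_le_mul_of_nonneg_left h1 (norm_nonneg _)
  rw [hw] at hc
  linarith

lemma subset_of_hs_le {K L : ConvexBody V} (h : ∀ u, hs K u ≤ hs L u) : (K : Set V) ⊆ L :=
  fun _ hz => mem_of_inner_le fun u => (inner_le_hV hz u).trans (h u)

lemma hs_injective : Function.Injective (hs : ConvexBody V → CS V) := fun K L h =>
  SetLike.coe_injective (Set.Subset.antisymm (subset_of_hs_le fun u => by rw [h])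
    (subset_of_hs_le fun u => by rw [h]))

lemma exists_hs {F : CS V} (hF : Cvx F) : ∃ K : ConvexBody V, hs K = F := by
  have key : ∀ u : sphere (0 : V) 1, ∃ z : V, (∀ v : sphere (0 : V) 1, inner ℝ (v : V) z ≤ F v) ∧
      inner ℝ (u : V) z = F u := by
    intro u
    obtain ⟨g, hg, hg'⟩ := exists_extension_of_le_sublinear
      (LinearPMap.mkSpanSingleton (K := ℝ) (u : V) (F u) (sph_ne u)) (lift F)
      (fun c hc x => lift_smul F hc.le x) hF (by
        rintro ⟨x, hx⟩
        obtain ⟨t, rfl⟩ := Submodule.mem_span_singleton.1 hx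
        have e : (LinearPMap.mkSpanSingleton (K := ℝ) (u : V) (F u) (sph_ne u)) ⟨t • (u : V), hx⟩
          = t * F u := LinearPMap.mkSpanSingleton'_apply _ _ _ t _
        rw [e]
        rcases le_total 0 t with ht | ht
        · simp only [lift_smul F ht, lift_coe, le_refl]
        · have h1 := hF (t • (u : V)) ((-t) • (u : V))
          rw [lift_smul F (neg_nonneg.2 ht), lift_coe] at h1
          simp [lift_zero] at h1
          simp only
          linarith)
    set w := (InnerProductSpace.toDual ℝ V).symm (LinearMap.toContinuousLinearMap g)
    have hw : ∀ x, inner ℝ w x = g x := fun x => InnerProductSpace.toDual_symm_apply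
    refine ⟨w, fun v => ?_, ?_⟩
    · rw [real_inner_comm, hw, ← lift_coe]; exact hg' _
    · rw [real_inner_comm, hw]
      have e := hg ⟨(u : V), Submodule.mem_span_singleton_self _⟩
      have e2 := LinearPMap.mkSpanSingleton_apply ℝ ℝ (σ := RingHom.id ℝ) (sph_ne u) (F u)
      exact e.trans e2
  set A : Set V := {z | ∀ v : sphere (0 : V) 1, inner ℝ (v : V) z ≤ F v}
  have hA : A = ⋂ v : sphere (0 : V) 1, {z : V | inner ℝ (v : V) z ≤ F v} := by
    ext z; simp [A]
  have hconv : Convex ℝ A := by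
    rw [hA]
    exact convex_iInter fun v => convex_halfSpace_le
      (f := fun z : V => inner ℝ (v : V) z) ⟨fun x y => inner_add_right _ _ _, fun c x => real_inner_smul_right _ _ _⟩ _
  have hcl : IsClosed A := by
    rw [hA]
    exact isClosed_iInter fun v => isClosed_le (by fun_prop) continuous_const
  have hbd : A ⊆ closedBall 0 ‖F‖ := by
    intro z hz
    rw [mem_closedBall_zero_iff]
    by_cases h0 : z = 0
    · simp [h0]
    have := (hz (nrm z h0)).trans ((le_abs_self _).trans (F.norm_coe_le_norm _))
    have e : inner ℝ (nrm z h0 : V) z = ‖z‖ := by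
      simp only [nrm, real_inner_smul_left, real_inner_self_eq_norm_sq]
      have := norm_ne_zero_iff.2 h0
      field_simp
    rwa [e] at this
  have hcomp : IsCompact A := (isCompact_closedBall _ _).of_isClosed_subset hcl hbd
  have hne : A.Nonempty := by
    by_cases hS : Nonempty (sphere (0 : V) 1)
    · obtain ⟨u⟩ := hS
      obtain ⟨z, hz, -⟩ := key u
      exact ⟨z, hz⟩
    · exact ⟨0, fun v => (hS ⟨v⟩).elim⟩
  refine ⟨⟨A, hconv, hcomp, hne⟩, ?_⟩
  ext u
  obtain ⟨z, hz, h⟩ := key u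
  refine le_antisymm (hV_le fun y hy => hy u) ?_
  rw [← h]
  exact inner_le_hV (K := ⟨A, hconv, hcomp, hne⟩) hz u

/-- The closed unit ball as a convex body. -/
noncomputable def ballBody (V : Type*) [NormedAddCommGroup V] [InnerProductSpace ℝ V] [FiniteDimensional ℝ V] :
    ConvexBody V :=
  ⟨closedBall 0 1, convex_closedBall _ _, isCompact_closedBall _ _, nonempty_closedBall.2 zero_le_one⟩

lemma mem_ballBody {z : V} : z ∈ ballBody V ↔ ‖z‖ ≤ 1 := mem_closedBall_zero_iff

lemma hs_ballBody : hs (ballBody V) = 1 := by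
  ext u
  refine le_antisymm (hV_le fun z hz => ?_) ?_
  · refine (real_inner_le_norm _ _).trans ?_
    simpa using mem_ballBody.1 hz
  · have h := inner_le_hV (K := ballBody V) (z := (u : V)) (mem_ballBody.2 (by simp)) u
    rw [real_inner_self_eq_norm_sq] at h
    simpa using h

lemma cvx_const {c : ℝ} (hc : 0 ≤ c) : Cvx (c • (1 : CS V)) := by
  rw [← hs_ballBody]; exact (cvx_hs _).smul hc

lemma dist_le_hs (K L : ConvexBody V) : dist K L ≤ ‖hs K - hs L‖ := by
  have key : ∀ K L : ConvexBody V, ∀ x ∈ K, ∃ y ∈ L, dist x y ≤ ‖hs K - hs L‖ := by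
    intro K L x hx
    have : x ∈ L + (‖hs K - hs L‖₊ : ℝ≥0) • ballBody V := by
      refine subset_of_hs_le (fun u => ?_) hx
      rw [hs_add, hs_smul, hs_ballBody]
      have := (le_abs_self _).trans ((hs K - hs L).norm_coe_le_norm u)
      simp only [ContinuousMap.sub_apply, ContinuousMap.add_apply, ContinuousMap.smul_apply, ContinuousMap.one_apply, smul_eq_mul, mul_one, coe_nnnorm] at this ⊢
      linarith
    obtain ⟨l, hl, b, hb, rfl⟩ := mem_add_smul.1 this
    refine ⟨l, hl, ?_⟩
    rw [dist_eq_norm, add_sub_cancel_left, norm_smul]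
    have hb := mem_ballBody.1 hb
    simp only [coe_nnnorm, norm_norm]
    nlinarith [norm_nonneg (hs K - hs L)]
  exact dist_body_le (norm_nonneg _) (key K L) (by rw [norm_sub_rev]; exact key L K)

/-- If the minimum of two support functions is a support function, the union of the two
bodies is convex. -/
lemma union_of_inf {K L M : ConvexBody V} (hM : hs M = hs K ⊓ hs L) :
    ∃ N : ConvexBody V, hs N = hs K ⊔ hs L ∧ (N : Set V) = (K : Set V) ∪ L := by
  obtain ⟨N, hN⟩ := exists_hs ((cvx_hs K).sup (cvx_hs L))
  refine ⟨N, hN, Set.Subset.antisymm ?_ ?_⟩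
  · intro z hz
    by_contra hKL
    simp only [Set.mem_union, not_or] at hKL
    have hu : ∃ u : V, hV K u < inner ℝ u z := by
      by_contra! h; exact hKL.1 (mem_of_inner_le fun u => h u)
    have hv : ∃ u : V, hV L u < inner ℝ u z := by
      by_contra! h; exact hKL.2 (mem_of_inner_le fun u => h u)
    obtain ⟨u, hu⟩ := hu
    obtain ⟨v, hv⟩ := hv
    have hmin : ∀ x, hV M x = hV K x ⊓ hV L x := fun x => by
      simp only [← lift_hs, hM, lift_inf]
    have hmax : ∀ x, hV N x = hV K x ⊔ hV L x := fun x => by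
      simp only [← lift_hs, hN, lift_sup]
    have hcov : segment ℝ u v ⊆ {x | hV K x < inner ℝ x z} ∪ {x | hV L x < inner ℝ x z} := by
      rintro _ ⟨a, b, ha, hb, hab, rfl⟩
      have h1 := hV_add_le M (a • u) (b • v)
      rw [hV_smul M ha, hV_smul M hb] at h1
      have h2 : hV M u < inner ℝ u z := by rw [hmin]; exact (min_le_left _ _).trans_lt hu
      have h3 : hV M v < inner ℝ v z := by rw [hmin]; exact (min_le_right _ _).trans_lt hv
      have h4 : hV M (a • u + b • v) < inner ℝ (a • u + b • v) z := by
        rw [inner_add_left, real_inner_smul_left, real_inner_smul_left]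
        rcases ha.eq_or_lt with rfl | ha
        · have : b = 1 := by linarith
          subst this; linarith
        · nlinarith
      rw [hmin, inf_lt_iff] at h4
      exact h4
    obtain ⟨x, -, h1, h2⟩ := (convex_segment u v).isPreconnected _ _
      (isOpen_lt (continuous_hV K) (by fun_prop)) (isOpen_lt (continuous_hV L) (by fun_prop)) hcov
      ⟨u, left_mem_segment ℝ u v, hu⟩ ⟨v, right_mem_segment ℝ u v, hv⟩
    have h3 := inner_le_hV hz x
    rw [hmax] at h3
    exact absurd h3 (not_le.2 (max_lt h1 h2))
  · refine Set.union_subset (subset_of_hs_le fun u => ?_) (subset_of_hs_le fun u => ?_)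
    · rw [hN]; exact le_max_left _ _
    · rw [hN]; exact le_max_right _ _

lemma inter_of_inf {K L M : ConvexBody V} (hM : hs M = hs K ⊓ hs L) :
    (M : Set V) = (K : Set V) ∩ L := by
  refine Set.Subset.antisymm (Set.subset_inter (subset_of_hs_le fun u => ?_)
    (subset_of_hs_le fun u => ?_)) ?_
  · rw [hM]; exact min_le_left _ _
  · rw [hM]; exact min_le_right _ _
  · rintro z ⟨h1, h2⟩
    refine mem_of_inner_le fun u => ?_
    rw [hM]
    exact le_min (inner_le_hV h1 u) (inner_le_hV h2 u)

open Classical in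
/-- A valuation as a function of the support function (zero off the support functions). -/
noncomputable def Phi (φ : ConvexBody V → ℂ) (F : CS V) : ℂ :=
  if h : ∃ K : ConvexBody V, hs K = F then φ h.choose else 0

lemma Phi_hs (φ : ConvexBody V → ℂ) (K : ConvexBody V) : Phi φ (hs K) = φ K := by
  have h : ∃ L : ConvexBody V, hs L = hs K := ⟨K, rfl⟩
  rw [Phi, dif_pos h, hs_injective h.choose_spec]

lemma Phi_continuousOn {φ : ConvexBody V → ℂ} (hφ : Continuous φ) :
    ContinuousOn (Phi φ) {F : CS V | Cvx F} := by
  intro F hF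
  obtain ⟨K, rfl⟩ := exists_hs hF
  rw [Metric.continuousWithinAt_iff]
  intro ε hε
  obtain ⟨δ, hδ, h⟩ := Metric.continuous_iff.1 hφ K ε hε
  refine ⟨δ, hδ, fun {G} hG hd => ?_⟩
  obtain ⟨L, rfl⟩ := exists_hs hG
  rw [Phi_hs, Phi_hs]
  exact h L ((dist_le_hs L K).trans_lt (by rwa [dist_eq_norm] at hd))

lemma Phi_sup_inf {φ : ConvexBody V → ℂ} (hφ : IsValuation φ) {F G : CS V} (hF : Cvx F) (hG : Cvx G)
    (h : Cvx (F ⊓ G)) : Phi φ (F ⊔ G) + Phi φ (F ⊓ G) = Phi φ F + Phi φ G := by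
  obtain ⟨K, rfl⟩ := exists_hs hF
  obtain ⟨L, rfl⟩ := exists_hs hG
  obtain ⟨M, hM⟩ := exists_hs h
  obtain ⟨N, hN, hN'⟩ := union_of_inf hM
  rw [← hM, ← hN]
  simp only [Phi_hs]
  rw [hφ K L N M hN' (inter_of_inf hM)]
  ring

lemma Phi_growth {φ : ConvexBody V → ℂ} (hφ : MemVal φ) :
    ∃ B, 0 ≤ B ∧ ∀ F : CS V, Cvx F → ‖Phi φ F‖ ≤ B * (1 + ‖F‖) ^ Module.finrank ℝ V := by
  obtain ⟨B, hB, h⟩ := growth hφ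
  refine ⟨B, hB, fun F hF => ?_⟩
  obtain ⟨K, rfl⟩ := exists_hs hF
  rw [Phi_hs]
  refine h _ (norm_nonneg _) K ?_
  have : (K : Set V) ⊆ ((‖hs K‖₊ : ℝ≥0) • ballBody V : ConvexBody V) := by
    refine subset_of_hs_le fun u => ?_
    rw [hs_smul, hs_ballBody]
    have := (le_abs_self _).trans ((hs K).norm_coe_le_norm u)
    simpa using this
  refine this.trans ?_
  rintro _ ⟨b, hb, rfl⟩
  have hb : ‖b‖ ≤ 1 := mem_ballBody.1 hb
  rw [mem_closedBall_zero_iff]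
  change ‖(‖hs K‖ : ℝ) • b‖ ≤ _
  rw [norm_smul, norm_norm]
  nlinarith [norm_nonneg (hs K)]

lemma Phi_poly {φ : ConvexBody V → ℂ} (hφ : MemVal φ) {F H : CS V} (hF : Cvx F) (hH : Cvx H) :
    ∃ p : Polynomial ℂ, p.natDegree ≤ Module.finrank ℝ V ∧
      ∀ t : ℝ, 0 ≤ t → Phi φ (F + t • H) = p.eval (t : ℂ) := by
  obtain ⟨K, rfl⟩ := exists_hs hF
  obtain ⟨L, rfl⟩ := exists_hs hH
  obtain ⟨p, hp, h⟩ := mcmullen hφ K L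
  refine ⟨p, hp, fun t ht => ?_⟩
  have := h t.toNNReal
  rw [Real.coe_toNNReal t ht] at this
  rw [← Phi_hs φ, hs_add, hs_smul, Real.coe_toNNReal t ht] at this
  exact this

/-- Composition of a function on the sphere with an isometry. -/
noncomputable def rot (g : V ≃ₗᵢ[ℝ] V) (F : CS V) : CS V :=
  F.comp ⟨fun u => ⟨g u, by simp⟩, by fun_prop⟩

lemma rot_apply (g : V ≃ₗᵢ[ℝ] V) (F : CS V) (u : sphere (0 : V) 1) :
    rot g F u = F ⟨g u, by simp⟩ := rfl

lemma hV_mapIsom (g : V ≃ₗᵢ[ℝ] V) (K : ConvexBody V) (x : V) :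
    hV (ConvexBody.mapIsom g K) (g x) = hV K x := by
  refine le_antisymm (hV_le ?_) (hV_le fun z hz => ?_)
  · rintro _ ⟨z, hz, rfl⟩
    simpa using inner_le_hV hz x
  · rw [← g.inner_map_map]
    exact inner_le_hV (K := ConvexBody.mapIsom g K) ⟨z, hz, rfl⟩ _

lemma rot_hs (g : V ≃ₗᵢ[ℝ] V) (K : ConvexBody V) :
    rot g (hs (ConvexBody.mapIsom g K)) = hs K := by
  ext u; simp [rot_apply, hV_mapIsom]

lemma lift_rot (g : V ≃ₗᵢ[ℝ] V) (F : CS V) (x : V) : lift (rot g F) x = lift F (g x) := by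
  by_cases hx : x = 0
  · simp [hx, lift_zero]
  · have : g x ≠ 0 := by simpa using hx
    rw [lift_of_ne _ hx, lift_of_ne _ this, rot_apply]
    simp [nrm]

lemma Cvx.rot {F : CS V} (hF : Cvx F) (g : V ≃ₗᵢ[ℝ] V) : Cvx (rot g F) := by
  intro x y; simp only [lift_rot, map_add]; exact hF _ _

lemma Phi_rot {φ : ConvexBody V → ℂ} {g : V ≃ₗᵢ[ℝ] V}
    (hg : ∀ K, φ (ConvexBody.mapIsom g K) = φ K) {F : CS V} (hF : Cvx F) :
    Phi φ (rot g F) = Phi φ F := by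
  obtain ⟨K, hK⟩ := exists_hs (hF.rot g)
  have : hs (ConvexBody.mapIsom g K) = F := by
    have e := rot_hs g K
    rw [hK] at e
    ext u
    have := DFunLike.congr_fun e ⟨g.symm u, by simp⟩
    simpa [rot_apply] using this
  rw [← hK, Phi_hs, ← this, Phi_hs, hg]

end Support

/-! ### Extension of a valuation to differences of support functions -/

section Ext
open Polynomial

lemma poly_eq_of_large {p q : ℂ[X]} (T : ℝ) (h : ∀ t : ℝ, T ≤ t → p.eval (t : ℂ) = q.eval (t : ℂ)) :
    p = q := by
  refine Polynomial.eq_of_infinite_eval_eq p q ?_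
  refine Set.Infinite.mono (s := (fun t : ℝ => (t : ℂ)) '' Set.Ici T) ?_
    ((Set.Ici_infinite T).image Complex.ofReal_injective.injOn)
  rintro _ ⟨t, ht, rfl⟩
  exact h t ht

lemma natDegree_lg_le {d j : ℕ} (hj : j ∈ Finset.range (d + 1)) : (lg d j).natDegree ≤ d := by
  unfold lg
  rw [Polynomial.natDegree_le_iff_degree_le, Lagrange.degree_basis (by
      intro a _ b _ h; exact Nat.cast_injective h) hj]
  simp

lemma eval_bound (p : ℂ[X]) {d : ℕ} (hd : p.natDegree ≤ d) :
    ∃ c, 0 ≤ c ∧ ∀ z : ℂ, ‖p.eval z‖ ≤ c * (1 + ‖z‖) ^ d := by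
  refine ⟨∑ i ∈ Finset.range (d + 1), ‖p.coeff i‖, by positivity, fun z => ?_⟩
  rw [Polynomial.eval_eq_sum_range' (Nat.lt_succ_of_le hd), Finset.sum_mul]
  refine (norm_sum_le _ _).trans (Finset.sum_le_sum fun i hi => ?_)
  rw [norm_mul, norm_pow]
  refine mul_le_mul_of_nonneg_left ?_ (norm_nonneg _)
  calc ‖z‖ ^ i ≤ (1 + ‖z‖) ^ i := by gcongr; linarith
    _ ≤ (1 + ‖z‖) ^ d := pow_le_pow_right₀ (by linarith [norm_nonneg z]) (by
      have := Finset.mem_range.1 hi; omega)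

variable {V : Type*} [NormedAddCommGroup V] [InnerProductSpace ℝ V] [FiniteDimensional ℝ V]

/-- `F` is a difference of sublinear functions with control `C`: both `C + F` and `C - F` are
sublinear, and `|F| ≤ C`. -/
def Adm (C : ℝ) (F : CS V) : Prop := Cvx (F + C • 1) ∧ Cvx (-F + C • 1) ∧ ‖F‖ ≤ C

lemma Adm.nonneg {C : ℝ} {F : CS V} (h : Adm C F) : 0 ≤ C := (norm_nonneg _).trans h.2.2

lemma Cvx.add_const {F : CS V} {c d : ℝ} (h : Cvx (F + c • 1)) (hcd : c ≤ d) : Cvx (F + d • 1) := by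
  have := h.add (cvx_const (V := V) (sub_nonneg.2 hcd))
  convert this using 1
  rw [add_assoc, ← add_smul]; congr 2; ring

lemma Adm.mono {C D : ℝ} {F : CS V} (h : Adm C F) (hCD : C ≤ D) : Adm D F :=
  ⟨h.1.add_const hCD, h.2.1.add_const hCD, h.2.2.trans hCD⟩

lemma Adm.add {C D : ℝ} {F G : CS V} (h : Adm C F) (h' : Adm D G) : Adm (C + D) (F + G) := by
  refine ⟨?_, ?_, (norm_add_le _ _).trans (add_le_add h.2.2 h'.2.2)⟩
  · convert h.1.add h'.1 using 1; rw [add_smul]; abel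
  · convert h.2.1.add h'.2.1 using 1; rw [add_smul]; abel

lemma Adm.neg {C : ℝ} {F : CS V} (h : Adm C F) : Adm C (-F) :=
  ⟨h.2.1, by rw [neg_neg]; exact h.1, by rw [norm_neg]; exact h.2.2⟩

lemma Adm.smul {C : ℝ} {F : CS V} (h : Adm C F) (a : ℝ) : Adm (|a| * C) (a • F) := by
  have key : ∀ a : ℝ, 0 ≤ a → Adm (a * C) (a • F) := by
    intro a ha
    refine ⟨?_, ?_, ?_⟩
    · convert h.1.smul ha using 1; rw [smul_add, smul_smul]
    · convert h.2.1.smul ha using 1; rw [smul_add, smul_smul, smul_neg]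
    · rw [norm_smul, Real.norm_eq_abs, abs_of_nonneg ha]; exact mul_le_mul_of_nonneg_left h.2.2 ha
  rcases le_total 0 a with ha | ha
  · rw [abs_of_nonneg ha]; exact key a ha
  · rw [abs_of_nonpos ha]
    have := (key (-a) (by linarith)).neg
    rwa [neg_smul, neg_neg] at this

lemma adm_zero {C : ℝ} (hC : 0 ≤ C) : Adm C (0 : CS V) :=
  ⟨by rw [zero_add]; exact cvx_const hC, by rw [neg_zero, zero_add]; exact cvx_const hC, by simpa⟩

lemma adm_one : Adm 1 (1 : CS V) := by
  refine ⟨?_, ?_, ?_⟩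
  · have := cvx_const (V := V) (c := 2) (by norm_num)
    convert this using 1; rw [one_smul]; ext; simp; norm_num
  · have := cvx_const (V := V) (c := 0) le_rfl
    convert this using 1; simp
  · rw [ContinuousMap.norm_le _ zero_le_one]; simp

/-- The space of functions on the sphere that are differences of support functions. -/
def W (V : Type*) [NormedAddCommGroup V] [InnerProductSpace ℝ V] [FiniteDimensional ℝ V] :
    Submodule ℝ (CS V) where
  carrier := {F | ∃ C, Adm C F}
  add_mem' := by rintro F G ⟨C, h⟩ ⟨D, h'⟩; exact ⟨_, h.add h'⟩
  zero_mem' := ⟨0, adm_zero le_rfl⟩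
  smul_mem' := by rintro a F ⟨C, h⟩; exact ⟨_, h.smul a⟩

lemma Adm.mem {C : ℝ} {F : CS V} (h : Adm C F) : F ∈ W V := ⟨C, h⟩

lemma one_mem_W : (1 : CS V) ∈ W V := adm_one.mem

lemma isClosed_adm (C : ℝ) : IsClosed {F : CS V | Adm C F} := by
  have e : {F : CS V | Adm C F} = ((fun F => F + C • 1) ⁻¹' {F | Cvx F}) ∩
      (((fun F => -F + C • 1) ⁻¹' {F | Cvx F}) ∩ {F | ‖F‖ ≤ C}) := by
    ext F; rfl
  rw [e]
  exact (isClosed_cvx.preimage (by fun_prop)).inter ((isClosed_cvx.preimage (by fun_prop)).inter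
    (isClosed_le (by fun_prop) (by fun_prop)))

lemma convex_adm (C : ℝ) : Convex ℝ {F : CS V | Adm C F} := by
  intro F hF G hG a b ha hb hab
  have := (Adm.smul hF a).add (Adm.smul hG b)
  rwa [abs_of_nonneg ha, abs_of_nonneg hb, ← add_mul, hab, one_mul] at this

lemma Adm.rot {C : ℝ} {F : CS V} (h : Adm C F) (g : V ≃ₗᵢ[ℝ] V) : Adm C (rot g F) :=
  ⟨h.1.rot g, h.2.1.rot g, by
    rw [ContinuousMap.norm_le _ h.nonneg]
    intro x
    exact (F.norm_coe_le_norm _).trans h.2.2⟩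

variable {φ : ConvexBody V → ℂ}

lemma exists_hat (hφ : MemVal φ) {F : CS V} (hF : ∃ c : ℝ, Cvx (F + c • 1)) :
    ∃ p : ℂ[X], p.natDegree ≤ Module.finrank ℝ V ∧
      ∀ t : ℝ, Cvx (F + t • 1) → Phi φ (F + t • 1) = p.eval (t : ℂ) := by
  have key : ∀ c : ℝ, Cvx (F + c • 1) → ∃ p : ℂ[X], p.natDegree ≤ Module.finrank ℝ V ∧
      ∀ t : ℝ, c ≤ t → Phi φ (F + t • 1) = p.eval (t : ℂ) := by
    intro c hc
    obtain ⟨p, hp, h⟩ := Phi_poly hφ hc (cvx_hs (ballBody V))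
    rw [hs_ballBody] at h
    refine ⟨p.comp (X - Polynomial.C (c : ℂ)), ?_, fun t ht => ?_⟩
    · rw [Polynomial.natDegree_comp, Polynomial.natDegree_X_sub_C, mul_one]; exact hp
    · have := h (t - c) (by linarith)
      rw [add_assoc, ← add_smul, add_sub_cancel] at this
      rw [this]; simp
  obtain ⟨c, hc⟩ := hF
  obtain ⟨p, hp, h⟩ := key c hc
  refine ⟨p, hp, fun t ht => ?_⟩
  obtain ⟨q, hq, h'⟩ := key t ht
  have : p = q := poly_eq_of_large (max c t) fun s hs => by
    rw [← h s ((le_max_left _ _).trans hs), ← h' s ((le_max_right _ _).trans hs)]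
  rw [this]; exact h' t le_rfl

open Classical in
/-- The extension of a valuation to differences of support functions: the value at `t = 0` of the
polynomial `t ↦ φ (F + t)`, which is defined a priori only for large `t`. -/
noncomputable def hat (φ : ConvexBody V → ℂ) (F : CS V) : ℂ :=
  if h : ∃ p : ℂ[X], p.natDegree ≤ Module.finrank ℝ V ∧
      ∀ t : ℝ, Cvx (F + t • 1) → Phi φ (F + t • 1) = p.eval (t : ℂ) then h.choose.eval 0 else 0

lemma hat_spec (hφ : MemVal φ) {F : CS V} (hF : ∃ c : ℝ, Cvx (F + c • 1)) :
    ∃ p : ℂ[X], p.natDegree ≤ Module.finrank ℝ V ∧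
      (∀ t : ℝ, Cvx (F + t • 1) → Phi φ (F + t • 1) = p.eval (t : ℂ)) ∧ hat φ F = p.eval 0 := by
  have h := exists_hat hφ hF
  refine ⟨h.choose, h.choose_spec.1, h.choose_spec.2, ?_⟩
  rw [hat, dif_pos h]

lemma semi {F : CS V} (hF : F ∈ W V) : ∃ c : ℝ, Cvx (F + c • 1) := by
  obtain ⟨C, h⟩ := hF; exact ⟨C, h.1⟩

lemma hat_unique (hφ : MemVal φ) {F : CS V} (hF : ∃ c : ℝ, Cvx (F + c • 1)) {p : ℂ[X]} {T : ℝ}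
    (h : ∀ t : ℝ, T ≤ t → Phi φ (F + t • 1) = p.eval (t : ℂ)) : hat φ F = p.eval 0 := by
  obtain ⟨q, -, hq, e⟩ := hat_spec hφ hF
  obtain ⟨c, hc⟩ := hF
  suffices q = p by rw [e, this]
  refine poly_eq_of_large (max T c) fun t ht => ?_
  rw [← hq t (hc.add_const ((le_max_right _ _).trans ht)), h t ((le_max_left _ _).trans ht)]

lemma hat_of_cvx (hφ : MemVal φ) {F : CS V} (hF : Cvx F) : hat φ F = Phi φ F := by
  have h0 : Cvx (F + (0 : ℝ) • 1) := by simpa using hF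
  obtain ⟨q, -, hq, e⟩ := hat_spec hφ ⟨0, h0⟩
  rw [e]
  have := hq 0 h0
  simpa using this.symm

lemma hat_eq_sum (hφ : MemVal φ) {F : CS V} {c : ℝ} (hF : Cvx (F + c • 1)) :
    hat φ F = ∑ j ∈ Finset.range (Module.finrank ℝ V + 1),
      Phi φ (F + (c + j) • 1) * (lg (Module.finrank ℝ V) j).eval (-(c : ℂ)) := by
  obtain ⟨q, hdeg, hq, e⟩ := hat_spec hφ ⟨c, hF⟩
  have hd : (q.comp (X + Polynomial.C (c : ℂ))).natDegree ≤ Module.finrank ℝ V := by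
    rw [Polynomial.natDegree_comp, Polynomial.natDegree_X_add_C, mul_one]; exact hdeg
  have := eval_eq_lg hd (-(c : ℂ))
  rw [Polynomial.eval_comp] at this
  simp only [eval_add, eval_X, eval_C, neg_add_cancel] at this
  rw [e, this]
  refine Finset.sum_congr rfl fun j _ => ?_
  rw [hq _ (hF.add_const (by simp))]
  congr 1
  rw [Polynomial.eval_comp]
  simp [add_comm]

/-- A linear relation which holds after adding any large constant holds for the extension. -/
lemma hat_relation (hφ : MemVal φ) {ι : Type*} (s : Finset ι) (a : ι → ℂ) (F : ι → CS V)
    (hF : ∀ i, F i ∈ W V) (T : ℝ)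
    (h : ∀ t : ℝ, T ≤ t → ∑ i ∈ s, a i * Phi φ (F i + t • 1) = 0) :
    ∑ i ∈ s, a i * hat φ (F i) = 0 := by
  choose c hc using fun i => semi (hF i)
  choose p hp hp' hp0 using fun i => hat_spec hφ ⟨c i, hc i⟩
  obtain ⟨M, hM⟩ : ∃ M, ∀ i ∈ s, c i ≤ M := ⟨∑ i ∈ s, |c i|, fun i hi =>
    (le_abs_self _).trans (Finset.single_le_sum (f := fun i => |c i|) (fun _ _ => abs_nonneg _) hi)⟩
  have : ∑ i ∈ s, Polynomial.C (a i) * p i = 0 := poly_eq_of_large (max T M) fun t ht => by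
    rw [Polynomial.eval_finsetSum, Polynomial.eval_zero, ← h t ((le_max_left _ _).trans ht)]
    refine Finset.sum_congr rfl fun i hi => ?_
    rw [Polynomial.eval_mul, Polynomial.eval_C,
      hp' i t ((hc i).add_const ((hM i hi).trans ((le_max_right _ _).trans ht)))]
  have := congrArg (Polynomial.eval 0) this
  rw [Polynomial.eval_finsetSum, Polynomial.eval_zero] at this
  rw [← this]
  refine Finset.sum_congr rfl fun i hi => ?_
  rw [Polynomial.eval_mul, Polynomial.eval_C, hp0]

lemma hat_rot (hφ : MemVal φ) {g : V ≃ₗᵢ[ℝ] V} (hg : ∀ K, φ (ConvexBody.mapIsom g K) = φ K)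
    {F : CS V} (hF : F ∈ W V) : hat φ (rot g F) = hat φ F := by
  obtain ⟨p, -, hp, e⟩ := hat_spec hφ (semi hF)
  obtain ⟨C, hC⟩ := hF
  rw [e]
  refine hat_unique hφ ⟨C, (hC.rot g).1⟩ (T := C) fun t ht => ?_
  have h1 := hC.1.add_const ht
  rw [← hp t h1, ← Phi_rot hg h1]
  rfl

/-- The extension is modular for nonnegative functions with disjoint supports. After adding a large
constant all four functions are support functions, `h + f + a` being the maximum and `h` the minimum
of the other two, and the valuation property applies. -/
lemma hat_local (hφ : MemVal φ) {h f a : CS V} (hh : h ∈ W V) (hf : f ∈ W V) (ha : a ∈ W V)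
    (hf0 : 0 ≤ f) (ha0 : 0 ≤ a) (hfa : f * a = 0) :
    hat φ (h + f + a) + hat φ h = hat φ (h + f) + hat φ (h + a) := by
  have hffa : ∀ u, f u = 0 ∨ a u = 0 := fun u => by
    have := DFunLike.congr_fun hfa u
    simpa using this
  obtain ⟨C1, h1⟩ := (W V).add_mem (W V |>.add_mem hh hf) ha
  obtain ⟨C2, h2⟩ := hh
  obtain ⟨C3, h3⟩ := (W V).add_mem ⟨_, h2⟩ hf
  obtain ⟨C4, h4⟩ := (W V).add_mem ⟨_, h2⟩ ha
  have := hat_relation hφ (Finset.univ : Finset (Fin 4)) ![1, 1, -1, -1]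
    ![h + f + a, h, h + f, h + a] (by
      intro i; fin_cases i
      exacts [⟨_, h1⟩, ⟨_, h2⟩, ⟨_, h3⟩, ⟨_, h4⟩]) (max C2 (max C3 C4)) (by
      intro t ht
      simp only [max_le_iff] at ht
      have k := Phi_sup_inf hφ.1 (h3.1.add_const ht.2.1) (h4.1.add_const ht.2.2)
      have e1 : (h + f + t • 1) ⊔ (h + a + t • 1) = h + f + a + t • 1 := by
        ext u
        have p1 : 0 ≤ f u := hf0 u
        have p2 : 0 ≤ a u := ha0 u
        rcases hffa u with h | h <;> simp [h, p1, p2]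
      have e2 : (h + f + t • 1) ⊓ (h + a + t • 1) = h + t • 1 := by
        ext u
        have p1 : 0 ≤ f u := hf0 u
        have p2 : 0 ≤ a u := ha0 u
        rcases hffa u with h | h <;> simp [h, p1, p2]
      rw [e1, e2] at k
      have k := k (h2.1.add_const ht.1)
      simp [Fin.sum_univ_four]
      linear_combination k)
  simp [Fin.sum_univ_four] at this
  linear_combination this

/-- The extension is polynomial along lines. -/
lemma hat_line (hφ : MemVal φ) {F H : CS V} (hF : F ∈ W V) (hH : H ∈ W V) :
    ∃ p : ℂ[X], p.natDegree ≤ 2 * Module.finrank ℝ V ∧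
      ∀ t : ℝ, hat φ (F + t • H) = p.eval (t : ℂ) := by
  set n := Module.finrank ℝ V
  have key : ∀ T : ℝ, 0 ≤ T → ∃ p : ℂ[X], p.natDegree ≤ 2 * n ∧
      ∀ t : ℝ, -T ≤ t → hat φ (F + t • H) = p.eval (t : ℂ) := by
    intro T hT
    obtain ⟨c1, h1⟩ := (W V).sub_mem hF ((W V).smul_mem T hH)
    obtain ⟨c2, h2⟩ := hH
    set c := max c1 c2
    have hA : Cvx (F - T • H + c • 1) := h1.1.add_const (le_max_left _ _)
    have hB : Cvx (H + c • 1) := h2.1.add_const (le_max_right _ _)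
    set A := F - T • H + c • 1
    set B := H + c • 1
    have hc : 0 ≤ c := h2.nonneg.trans (le_max_right _ _)
    have hAj : ∀ j : ℕ, Cvx (A + (j : ℝ) • B) := fun j => hA.add (hB.smul (by positivity))
    choose q hqd hq using fun j : ℕ => Phi_poly hφ (hAj j) (cvx_hs (ballBody V))
    simp only [hs_ballBody] at hq
    have joint : ∀ s y : ℝ, 0 ≤ s → 0 ≤ y → Phi φ (A + s • B + y • 1) =
        ∑ j ∈ Finset.range (n + 1), (q j).eval (y : ℂ) * (lg n j).eval (s : ℂ) := by
      intro s y hs hy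
      obtain ⟨r, hr, hr'⟩ := Phi_poly hφ (hA.add (cvx_const hy)) hB
      have e : ∀ s : ℝ, A + s • B + y • 1 = A + y • 1 + s • B := fun s => by abel
      rw [e, hr' s hs, eval_eq_lg hr]
      refine Finset.sum_congr rfl fun j _ => ?_
      rw [← hq j y hy, e, hr' j (by positivity)]
      norm_cast
    refine ⟨∑ j ∈ Finset.range (n + 1), (q j).comp
      (Polynomial.C (-(c : ℂ)) * (X + Polynomial.C ((T : ℂ) + 1))) *
        (lg n j).comp (X + Polynomial.C (T : ℂ)), ?_, fun t ht => ?_⟩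
    · refine Polynomial.natDegree_sum_le_of_forall_le _ _ fun j hj => ?_
      refine Polynomial.natDegree_mul_le.trans ?_
      rw [two_mul]
      refine add_le_add ?_ ?_
      · refine Polynomial.natDegree_comp_le.trans ?_
        have h1 : (Polynomial.C (-(c : ℂ)) * (X + Polynomial.C ((T : ℂ) + 1))).natDegree ≤ 1 :=
          (Polynomial.natDegree_C_mul_le _ _).trans (Polynomial.natDegree_X_add_C _).le
        calc _ ≤ n * 1 := Nat.mul_le_mul (hqd _) h1
          _ = n := mul_one n
      · rw [Polynomial.natDegree_comp, Polynomial.natDegree_X_add_C, mul_one]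
        exact natDegree_lg_le hj
    · have hs : 0 ≤ t + T := by linarith
      have := hat_unique hφ (F := F + t • H) (T := c * (t + T + 1))
        (semi ((W V).add_mem hF ((W V).smul_mem t ⟨_, h2⟩)))
        (p := ∑ j ∈ Finset.range (n + 1), (q j).comp
          (X + Polynomial.C (-(c * (t + T + 1)) : ℂ)) * Polynomial.C ((lg n j).eval ((t + T : ℝ) : ℂ))) (by
        intro x hx
        have e : F + t • H + x • 1 = A + (t + T) • B + (x - c * (t + T + 1)) • 1 := by
          ext u; simp [A, B]; ring
        rw [e, joint _ _ hs (by linarith), Polynomial.eval_finsetSum]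
        refine Finset.sum_congr rfl fun j _ => ?_
        rw [Polynomial.eval_mul, Polynomial.eval_C, Polynomial.eval_comp]
        congr 2
        simp; ring)
      rw [this, Polynomial.eval_finsetSum, Polynomial.eval_finsetSum]
      refine Finset.sum_congr rfl fun j _ => ?_
      simp only [eval_mul, eval_comp, eval_add, eval_X, eval_C]
      congr 2
      · ring
      · push_cast; ring
  obtain ⟨p, hp, h⟩ := key 0 le_rfl
  refine ⟨p, hp, fun t => ?_⟩
  obtain ⟨q, hq, h'⟩ := key |t| (abs_nonneg t)
  have : p = q := poly_eq_of_large 0 fun s hs => by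
    rw [← h s (by linarith), ← h' s (by linarith [abs_nonneg t])]
  rw [this]
  exact h' t (neg_abs_le t)

lemma hat_continuousOn (hφ : MemVal φ) (C : ℝ) : ContinuousOn (hat φ) {F : CS V | Adm C F} := by
  have : ContinuousOn (fun F : CS V => ∑ j ∈ Finset.range (Module.finrank ℝ V + 1),
      Phi φ (F + (C + j) • 1) * (lg (Module.finrank ℝ V) j).eval (-(C : ℂ))) {F : CS V | Adm C F} := by
    refine continuousOn_finsetSum _ fun j _ => ContinuousOn.mul ?_ continuousOn_const
    refine (Phi_continuousOn hφ.2.2).comp (by fun_prop) fun F hF => ?_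
    exact hF.1.add_const (by simp)
  exact this.congr fun F hF => hat_eq_sum hφ hF.1

lemma hat_bound (hφ : MemVal φ) : ∃ B, 0 ≤ B ∧ ∀ (C : ℝ) (F : CS V), Adm C F →
    ‖hat φ F‖ ≤ B * (1 + C) ^ (2 * Module.finrank ℝ V) := by
  set n := Module.finrank ℝ V
  obtain ⟨B, hB, h⟩ := Phi_growth hφ
  have hex : ∀ j ∈ Finset.range (n + 1), ∃ c, 0 ≤ c ∧
      ∀ z : ℂ, ‖(lg n j).eval z‖ ≤ c * (1 + ‖z‖) ^ n :=
    fun j hj => eval_bound (lg n j) (natDegree_lg_le hj)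
  choose! c hc hc' using hex
  refine ⟨∑ j ∈ Finset.range (n + 1), B * (2 + j) ^ n * c j, Finset.sum_nonneg fun j hj => by
    have := hc j hj; positivity, fun C F hF => ?_⟩
  have hC := hF.nonneg
  rw [hat_eq_sum hφ hF.1, Finset.sum_mul]
  refine (norm_sum_le _ _).trans (Finset.sum_le_sum fun j hj => ?_)
  rw [norm_mul]
  have h1 := h _ (hF.1.add_const (d := C + j) (by simp))
  have h2 : ‖F + (C + j) • (1 : CS V)‖ ≤ C + (C + j) := by
    refine (norm_add_le _ _).trans (add_le_add hF.2.2 ?_)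
    rw [norm_smul, Real.norm_eq_abs, abs_of_nonneg (by positivity)]
    nlinarith [(adm_one (V := V)).2.2, norm_nonneg (1 : CS V), (by positivity : 0 ≤ C + (j : ℝ))]
  have h3 : ‖Phi φ (F + (C + j) • 1)‖ ≤ B * ((2 + j) * (1 + C)) ^ n := by
    refine h1.trans (mul_le_mul_of_nonneg_left ?_ hB)
    gcongr
    nlinarith [(by positivity : 0 ≤ C * j)]
  have h4 := hc' j hj (-(C : ℂ))
  rw [norm_neg, Complex.norm_real, Real.norm_eq_abs, abs_of_nonneg hC] at h4
  calc _ ≤ (B * ((2 + j) * (1 + C)) ^ n) * (c j * (1 + C) ^ n) := by gcongr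
    _ = _ := by rw [mul_pow]; ring

end Ext

/-! ### The derivative of the extension and its locality -/

section Deriv
open Polynomial

variable {V : Type*} [NormedAddCommGroup V] [InnerProductSpace ℝ V] [FiniteDimensional ℝ V]
variable {φ : ConvexBody V → ℂ}

/-- A bound for the degree of the extension along lines. -/
noncomputable abbrev dd (V : Type*) [NormedAddCommGroup V] [InnerProductSpace ℝ V] : ℕ :=
  2 * Module.finrank ℝ V

lemma hat_lg (hφ : MemVal φ) {F H : CS V} (hF : F ∈ W V) (hH : H ∈ W V) (t : ℝ) :
    hat φ (F + t • H) = ∑ j ∈ Finset.range (dd V + 1),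
      hat φ (F + (j : ℝ) • H) * (lg (dd V) j).eval (t : ℂ) := by
  obtain ⟨p, hp, h⟩ := hat_line hφ hF hH
  rw [h, eval_eq_lg hp]
  refine Finset.sum_congr rfl fun j _ => ?_
  rw [h]; norm_cast

/-- The derivative at `t = 0` of `t ↦ hat φ (F + t H)`. -/
noncomputable def Dh (φ : ConvexBody V → ℂ) (F H : CS V) : ℂ :=
  ∑ j ∈ Finset.range (dd V + 1), hat φ (F + (j : ℝ) • H) * (derivative (lg (dd V) j)).eval 0

lemma Dh_eq (hφ : MemVal φ) {F H : CS V} (hF : F ∈ W V) (hH : H ∈ W V) {p : ℂ[X]}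
    (h : ∀ t : ℝ, hat φ (F + t • H) = p.eval (t : ℂ)) : Dh φ F H = (derivative p).eval 0 := by
  have : p = ∑ j ∈ Finset.range (dd V + 1), Polynomial.C (hat φ (F + (j : ℝ) • H)) * lg (dd V) j :=
    poly_eq_of_large 0 fun t _ => by
      rw [← h, hat_lg hφ hF hH, Polynomial.eval_finsetSum]; simp
  rw [this, derivative_sum, Polynomial.eval_finsetSum]
  simp [Dh]

lemma sum_lg (d : ℕ) : ∑ j ∈ Finset.range (d + 1), lg d j = 1 :=
  poly_eq_of_large 0 fun t _ => by
    have := eval_eq_lg (p := (1 : ℂ[X])) (d := d) (by simp) (t : ℂ)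
    rw [this, Polynomial.eval_finsetSum]; simp

lemma sum_lg_deriv (d : ℕ) (z : ℂ) :
    ∑ j ∈ Finset.range (d + 1), (derivative (lg d j)).eval z = 0 := by
  rw [← Polynomial.eval_finsetSum, ← derivative_sum, sum_lg]; simp

lemma Dh_add_smul (hφ : MemVal φ) {F H G : CS V} (hF : F ∈ W V) (hH : H ∈ W V) (hG : G ∈ W V)
    (a b : ℝ) : Dh φ F (a • H + b • G) = a * Dh φ F H + b * Dh φ F G := by
  set r := Finset.range (dd V + 1)
  have h2 : ∀ s t : ℝ, hat φ (F + s • H + t • G) = ∑ i ∈ r, ∑ j ∈ r,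
      hat φ (F + (i : ℝ) • H + (j : ℝ) • G) * (lg (dd V) i).eval (s : ℂ) * (lg (dd V) j).eval (t : ℂ) := by
    intro s t
    rw [hat_lg hφ ((W V).add_mem hF ((W V).smul_mem s hH)) hG, Finset.sum_comm]
    refine Finset.sum_congr rfl fun j _ => ?_
    have e : ∀ s : ℝ, F + s • H + (j : ℝ) • G = F + (j : ℝ) • G + s • H := fun s => by abel
    simp only [e]
    rw [hat_lg hφ ((W V).add_mem hF ((W V).smul_mem _ hG)) hH, Finset.sum_mul]
  rw [Dh_eq hφ hF ((W V).add_mem ((W V).smul_mem a hH) ((W V).smul_mem b hG))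
    (p := ∑ i ∈ r, ∑ j ∈ r, Polynomial.C (hat φ (F + (i : ℝ) • H + (j : ℝ) • G)) *
      (lg (dd V) i).comp (Polynomial.C (a : ℂ) * X) * (lg (dd V) j).comp (Polynomial.C (b : ℂ) * X))]
  · simp only [derivative_sum, Polynomial.eval_finsetSum, derivative_mul, derivative_comp,
      derivative_C, derivative_X, zero_mul, zero_add, mul_one, eval_mul, eval_add, eval_C, eval_comp, eval_X,
      mul_zero]
    have eH : ∀ i : ℕ, ∑ j ∈ r, hat φ (F + (i : ℝ) • H + (j : ℝ) • G) * (lg (dd V) j).eval 0 =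
        hat φ (F + (i : ℝ) • H) := fun i => by
      have := hat_lg hφ ((W V).add_mem hF ((W V).smul_mem (i : ℝ) hH)) hG 0
      simpa using this.symm
    have eG : ∀ j : ℕ, ∑ i ∈ r, hat φ (F + (i : ℝ) • H + (j : ℝ) • G) * (lg (dd V) i).eval 0 =
        hat φ (F + (j : ℝ) • G) := fun j => by
      have e : ∀ s : ℝ, F + s • H + (j : ℝ) • G = F + (j : ℝ) • G + s • H := fun s => by abel
      have := hat_lg hφ ((W V).add_mem hF ((W V).smul_mem (j : ℝ) hG)) hH 0
      simp only [e]
      simpa using this.symm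
    have e3 : Dh φ F H = ∑ i ∈ r, (∑ j ∈ r, hat φ (F + (i : ℝ) • H + (j : ℝ) • G) * (lg (dd V) j).eval 0) *
        (derivative (lg (dd V) i)).eval 0 := by simp only [eH]; rfl
    have e4 : Dh φ F G = ∑ j ∈ r, (∑ i ∈ r, hat φ (F + (i : ℝ) • H + (j : ℝ) • G) * (lg (dd V) i).eval 0) *
        (derivative (lg (dd V) j)).eval 0 := by simp only [eG]; rfl
    simp only [Finset.sum_mul] at e3 e4
    rw [Finset.sum_comm] at e4
    rw [e3, e4]
    simp only [Finset.mul_sum, ← Finset.sum_add_distrib]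
    refine Finset.sum_congr rfl fun i _ => Finset.sum_congr rfl fun j _ => ?_
    ring
  · intro t
    have e : F + t • (a • H + b • G) = F + (a * t) • H + (b * t) • G := by
      ext; simp; ring
    rw [e, h2]
    simp [Polynomial.eval_finsetSum]

lemma Dh_local_aux (hφ : MemVal φ) {h f a : CS V} (hh : h ∈ W V) (hf : f ∈ W V) (ha : a ∈ W V)
    (hf0 : 0 ≤ f) (ha0 : 0 ≤ a) (hfa : f * a = 0) : Dh φ (h + a) f = Dh φ h f := by
  have key : ∀ j : ℕ, hat φ (h + a + (j : ℝ) • f) =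
      hat φ (h + (j : ℝ) • f) + (hat φ (h + a) - hat φ h) := fun j => by
    have := hat_local hφ (f := (j : ℝ) • f) hh ((W V).smul_mem _ hf) ha
      (smul_nonneg (by positivity) hf0) ha0 (by rw [smul_mul_assoc, hfa, smul_zero])
    have e : h + a + (j : ℝ) • f = h + (j : ℝ) • f + a := by abel
    rw [e]
    linear_combination this
  simp only [Dh, key, add_mul, Finset.sum_add_distrib]
  rw [← Finset.mul_sum, sum_lg_deriv, mul_zero, add_zero]

/-- The derivative in the direction `χ h` sees `h` only near the support of `χ`. -/
lemma Dh_local (hφ : MemVal φ) {h χ η : CS V} (hh : h ∈ W V) (hχ : χ ∈ W V) (hη : η ∈ W V)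
    (hχh : χ * h ∈ W V) (hηh : η * h ∈ W V)
    (hχ0 : 0 ≤ χ) (hη1 : η ≤ 1) (hχη : χ * (1 - η) = 0) :
    Dh φ h (χ * h) = Dh φ (η * h) (χ * h) := by
  set c := ‖h‖
  have hc : 0 ≤ c := norm_nonneg _
  have hhc : 0 ≤ h + c • 1 := by
    intro u
    have := (neg_abs_le _).trans' (neg_le_neg (h.norm_coe_le_norm u))
    simp; linarith
  have h1η : 0 ≤ 1 - η := sub_nonneg.2 hη1
  have ha2 : c • (1 - η) ∈ W V := (W V).smul_mem _ ((W V).sub_mem one_mem_W hη)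
  -- `h` and `η * h` agree after adding nonnegative functions supported where `1 - η` is, and by
  -- `Dh_local_aux` such additions do not affect the derivative in directions supported where `χ` is
  have e1 : (1 - η) * (h + c • 1) = (h - η * h) + c • (1 - η) := by
    ext u; simp; ring
  have ha1 : (1 - η) * (h + c • 1) ∈ W V := by
    rw [e1]; exact (W V).add_mem ((W V).sub_mem hh hηh) ha2
  have key : ∀ f : CS V, f ∈ W V → 0 ≤ f → f * (1 - η) = 0 → Dh φ h f = Dh φ (η * h) f := by
    intro f hf hf0 hfη
    rw [← Dh_local_aux hφ hh hf ha2 hf0 (smul_nonneg hc h1η) (by rw [mul_smul_comm, hfη, smul_zero]),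
      ← Dh_local_aux hφ hηh hf ha1 hf0 (mul_nonneg h1η hhc) (by rw [← mul_assoc, hfη, zero_mul])]
    congr 1
    rw [e1]; abel
  have e2 : χ * h = (1 : ℝ) • (χ * (h + c • 1)) + (-c) • χ := by
    ext u; simp; ring
  have hm : χ * (h + c • 1) ∈ W V := by
    have : χ * (h + c • 1) = χ * h + c • χ := by ext u; simp; ring
    rw [this]; exact (W V).add_mem hχh ((W V).smul_mem _ hχ)
  rw [e2, Dh_add_smul hφ hh hm hχ, Dh_add_smul hφ hηh hm hχ, key _ hχ hχ0 hχη,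
    key _ hm (mul_nonneg hχ0 hhc)]
  have : χ * (h + c • 1) * (1 - η) = χ * (1 - η) * (h + c • 1) := by ring
  rw [this, hχη, zero_mul]

lemma Dh_rot (hφ : MemVal φ) {g : V ≃ₗᵢ[ℝ] V} (hg : ∀ K, φ (ConvexBody.mapIsom g K) = φ K)
    {F H : CS V} (hF : F ∈ W V) (hH : H ∈ W V) : Dh φ (rot g F) (rot g H) = Dh φ F H := by
  unfold Dh
  refine Finset.sum_congr rfl fun j _ => ?_
  rw [← hat_rot hφ hg ((W V).add_mem hF ((W V).smul_mem _ hH))]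
  rfl

/-- Lipschitz estimate for the extension. -/
lemma hat_lip (hφ : MemVal φ) : ∃ B, 0 ≤ B ∧ ∀ (A δ : ℝ) (F R : CS V), Adm A F → Adm δ R → δ ≤ 1 →
    ‖hat φ (F + R) - hat φ F‖ ≤ B * δ * (1 + A) ^ dd V := by
  obtain ⟨B, hB, h⟩ := hat_bound hφ
  have hex : ∀ j ∈ Finset.range (dd V + 1), ∃ c, 0 ≤ c ∧
      ∀ t : ℝ, 0 ≤ t → t ≤ 1 → ‖(lg (dd V) j).eval (t : ℂ) - (lg (dd V) j).eval 0‖ ≤ c * t := by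
    intro j _
    obtain ⟨c, hc, hc'⟩ := eval_bound (divX (lg (dd V) j)) le_rfl
    refine ⟨c * 2 ^ (divX (lg (dd V) j)).natDegree, by positivity, fun t ht ht1 => ?_⟩
    have e : (lg (dd V) j).eval (t : ℂ) - (lg (dd V) j).eval 0 =
        (divX (lg (dd V) j)).eval (t : ℂ) * t := by
      conv_lhs => rw [← divX_mul_X_add (lg (dd V) j)]
      simp
    rw [e, norm_mul, Complex.norm_real, Real.norm_eq_abs, abs_of_nonneg ht]
    refine mul_le_mul_of_nonneg_right ((hc' _).trans ?_) ht
    rw [Complex.norm_real, Real.norm_eq_abs, abs_of_nonneg ht]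
    gcongr
    linarith
  choose! c hc hc' using hex
  refine ⟨∑ j ∈ Finset.range (dd V + 1), B * (1 + j) ^ dd V * c j, Finset.sum_nonneg fun j hj => by
    have := hc j hj; positivity, fun A δ F R hF hR hδ => ?_⟩
  have hA := hF.nonneg
  rcases hR.nonneg.eq_or_lt with h0 | h0
  · subst h0
    have : R = 0 := by simpa using hR.2.2
    simp [this]
  set H := δ⁻¹ • R
  have hH : Adm 1 H := by
    have := hR.smul δ⁻¹
    rwa [abs_of_pos (by positivity), inv_mul_cancel₀ h0.ne'] at this
  have hRH : R = δ • H := by simp [H, smul_smul, h0.ne']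
  have e0 := hat_lg hφ hF.mem hH.mem 0
  rw [zero_smul, add_zero] at e0
  rw [hRH, hat_lg hφ hF.mem hH.mem δ, e0, ← Finset.sum_sub_distrib, Finset.sum_mul, Finset.sum_mul]
  refine (norm_sum_le _ _).trans (Finset.sum_le_sum fun j hj => ?_)
  rw [← mul_sub, norm_mul]
  have h1 := h _ _ (hF.add (hH.smul (j : ℝ)))
  have h2 := hc' j hj δ h0.le hδ
  rw [abs_of_nonneg (by positivity), mul_one] at h1
  have h3 : B * (1 + (A + j)) ^ dd V ≤ B * ((1 + j) * (1 + A)) ^ dd V := by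
    gcongr
    nlinarith [(by positivity : 0 ≤ A * j)]
  calc _ ≤ (B * ((1 + j) * (1 + A)) ^ dd V) * (c j * δ) :=
        mul_le_mul (h1.trans h3) (by simpa using h2) (norm_nonneg _) (by positivity)
    _ = _ := by rw [mul_pow]; ring

/-- Stability of the derivative under small perturbations. -/
lemma Dh_lip (hφ : MemVal φ) : ∃ B, 0 ≤ B ∧ ∀ (A δ : ℝ) (F H R S : CS V), Adm A F → Adm A H →
    Adm δ R → Adm δ S → δ * (1 + dd V) ≤ 1 →
    ‖Dh φ (F + R) (H + S) - Dh φ F H‖ ≤ B * δ * (1 + A) ^ dd V := by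
  obtain ⟨B, hB, h⟩ := hat_lip hφ
  refine ⟨∑ j ∈ Finset.range (dd V + 1), B * (1 + j) * (1 + j) ^ dd V *
    ‖(derivative (lg (dd V) j)).eval 0‖, by positivity, fun A δ F H R S hF hH hR hS hδ => ?_⟩
  have hA := hF.nonneg
  have hδ0 := hR.nonneg
  rw [Dh, Dh, ← Finset.sum_sub_distrib, Finset.sum_mul, Finset.sum_mul]
  refine (norm_sum_le _ _).trans (Finset.sum_le_sum fun j hj => ?_)
  rw [← sub_mul, norm_mul]
  have hj' : (j : ℝ) ≤ dd V := by
    have := Finset.mem_range.1 hj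
    exact_mod_cast Nat.lt_succ_iff.1 this
  have h1 := h _ _ _ _ (hF.add (hH.smul (j : ℝ))) (hR.add (hS.smul (j : ℝ))) (by
    rw [abs_of_nonneg (by positivity)]
    nlinarith)
  rw [abs_of_nonneg (by positivity)] at h1
  have e : F + R + (j : ℝ) • (H + S) = F + (j : ℝ) • H + (R + (j : ℝ) • S) := by
    rw [smul_add]; abel
  rw [e]
  calc _ ≤ (B * (δ + j * δ) * (1 + (A + j * A)) ^ dd V) * ‖(derivative (lg (dd V) j)).eval 0‖ := by
        gcongr
    _ ≤ (B * (δ + j * δ) * ((1 + j) * (1 + A)) ^ dd V) * ‖(derivative (lg (dd V) j)).eval 0‖ := by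
        gcongr
        nlinarith
    _ = _ := by rw [mul_pow]; ring

/-- The extension is polynomial on finite-dimensional spaces. -/
lemma hat_multi (hφ : MemVal φ) {ι : Type*} [Fintype ι] [DecidableEq ι] {F : CS V} (hF : F ∈ W V) (b : ι → CS V)
    (hb : ∀ i, b i ∈ W V) : ∃ a : (ι → Fin (dd V + 1)) → ℂ, ∀ c : ι → ℝ,
      hat φ (F + ∑ i, c i • b i) = ∑ k, a k * ∏ i, (c i : ℂ) ^ (k i : ℕ) := by
  let m : Finset ι → (ι → Fin (dd V + 1)) → (ι → ℝ) → ℂ := fun s k c => ∏ i ∈ s, (c i : ℂ) ^ (k i : ℕ)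
  have key : ∀ s : Finset ι, ∀ F ∈ W V, (fun c : ι → ℝ => hat φ (F + ∑ i ∈ s, c i • b i)) ∈
      Submodule.span ℂ (Set.range (m s)) := by
    intro s
    induction s using Finset.induction_on with
    | empty =>
      intro F _
      have : (fun c : ι → ℝ => hat φ (F + ∑ i ∈ (∅ : Finset ι), c i • b i)) = hat φ F • m ∅ 0 := by
        ext c; simp [m]
      rw [this]
      exact Submodule.smul_mem _ _ (Submodule.subset_span ⟨0, rfl⟩)
    | insert i0 s hi ih =>
      intro F hF
      have hmul : ∀ e : Fin (dd V + 1), ∀ f ∈ Submodule.span ℂ (Set.range (m s)),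
          (fun c : ι → ℝ => (c i0 : ℂ) ^ (e : ℕ) * f c) ∈ Submodule.span ℂ (Set.range (m (insert i0 s))) := by
        intro e f hf
        induction hf using Submodule.span_induction with
        | mem f hf =>
          obtain ⟨k, rfl⟩ := hf
          refine Submodule.subset_span ⟨Function.update k i0 e, ?_⟩
          ext c
          simp only [m]
          rw [Finset.prod_insert hi, Function.update_self]
          congr 1
          refine Finset.prod_congr rfl fun i his => ?_
          rw [Function.update_of_ne (by rintro rfl; exact hi his)]
        | zero => simp only [Pi.zero_apply, mul_zero]; exact Submodule.zero_mem _
        | add f g _ _ h1 h2 =>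
          simp only [Pi.add_apply, mul_add]; exact Submodule.add_mem _ h1 h2
        | smul a f _ h1 =>
          simp only [Pi.smul_apply, smul_eq_mul, mul_left_comm _ a]
          exact Submodule.smul_mem _ a h1
      have hexp : (fun c : ι → ℝ => hat φ (F + ∑ i ∈ insert i0 s, c i • b i)) =
          ∑ j ∈ Finset.range (dd V + 1), ∑ e : Fin (dd V + 1), (lg (dd V) j).coeff e •
            fun c : ι → ℝ => (c i0 : ℂ) ^ (e : ℕ) * hat φ ((F + (j : ℝ) • b i0) + ∑ i ∈ s, c i • b i) := by
        ext c
        have hs : ∑ i ∈ s, c i • b i ∈ W V := Submodule.sum_mem _ fun i _ => (W V).smul_mem _ (hb i)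
        have e1 : ∀ t : ℝ, F + t • b i0 + ∑ i ∈ s, c i • b i = (F + ∑ i ∈ s, c i • b i) + t • b i0 :=
          fun t => by abel
        rw [Finset.sum_insert hi, ← add_assoc, e1, hat_lg hφ ((W V).add_mem hF hs) (hb i0)]
        simp only [Finset.sum_apply, Pi.smul_apply, smul_eq_mul, e1]
        refine Finset.sum_congr rfl fun j hj => ?_
        rw [Polynomial.eval_eq_sum_range' (Nat.lt_succ_of_le (natDegree_lg_le hj)),
          Finset.sum_range, Finset.mul_sum]
        refine Finset.sum_congr rfl fun e _ => ?_
        ring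
      rw [hexp]
      exact Submodule.sum_mem _ fun j _ => Submodule.sum_mem _ fun e _ =>
        Submodule.smul_mem _ _ (hmul e _ (ih _ ((W V).add_mem hF ((W V).smul_mem _ (hb i0)))))
  obtain ⟨a, ha⟩ := (Submodule.mem_span_range_iff_exists_fun ℂ).1 (key Finset.univ F hF)
  refine ⟨a, fun c => ?_⟩
  have := congrFun ha c
  simp only [Finset.sum_apply, Pi.smul_apply, smul_eq_mul] at this
  exact this.symm

end Deriv

/-! ### Differentiable functions are differences of support functions -/

section Crit
variable {V : Type*} [NormedAddCommGroup V] [InnerProductSpace ℝ V] [FiniteDimensional ℝ V]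

lemma cvx_of_support {F : CS V} {C : ℝ} (hF : ∀ u, |F u| ≤ C)
    (h : ∀ x : sphere (0 : V) 1, ∃ w : V, F x ≤ inner ℝ w x ∧ ∀ y : sphere (0 : V) 1,
      inner ℝ w y ≤ F y + C * (1 - inner ℝ (x : V) y)) : Cvx (F + C • 1) := by
  intro a b
  by_cases hab : a + b = 0
  · have hb : b = -a := (neg_eq_of_add_eq_zero_right hab).symm
    rw [hab, lift_zero]
    have : ∀ z, 0 ≤ lift (F + C • 1) z := fun z => by
      have := lift_mono (F := (0 : ℝ) • F) (G := F + C • 1) (fun u => by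
        have := neg_le_of_abs_le (hF u); simp; linarith) z
      rwa [lift_csmul, zero_mul] at this
    exact add_nonneg (this a) (this b)
  · obtain ⟨w, hw, hw'⟩ := h (nrm (a + b) hab)
    set x := nrm (a + b) hab
    have hlow : ∀ z, inner ℝ (w + C • (x : V)) z ≤ lift (F + C • 1) z := by
      intro z
      by_cases hz : z = 0
      · simp [hz, lift_zero]
      · rw [lift_of_ne _ hz]
        conv_lhs => rw [← norm_smul_nrm z hz, real_inner_smul_right]
        refine mul_le_mul_of_nonneg_left ?_ (norm_nonneg _)
        have := hw' (nrm z hz)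
        rw [inner_add_left, real_inner_smul_left]
        simp
        linarith
    have hxx : inner ℝ (x : V) (x : V) = 1 := by rw [real_inner_self_eq_norm_sq]; simp
    have hup : lift (F + C • 1) (a + b) ≤ inner ℝ (w + C • (x : V)) (a + b) := by
      rw [lift_of_ne _ hab]
      conv_rhs => rw [← norm_smul_nrm (a + b) hab, real_inner_smul_right]
      refine mul_le_mul_of_nonneg_left ?_ (norm_nonneg _)
      rw [inner_add_left, real_inner_smul_left]
      change F x + C * 1 ≤ inner ℝ w (x : V) + C * inner ℝ (x : V) (x : V)
      rw [hxx]; linarith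
    rw [inner_add_right] at hup
    linarith [hlow a, hlow b]

lemma one_sub_inner (x y : sphere (0 : V) 1) :
    1 - inner ℝ (x : V) y = ‖(y : V) - x‖ ^ 2 / 2 := by
  rw [norm_sub_sq_real, real_inner_comm]
  simp
  ring

/-- A function on the sphere with a quadratic Taylor estimate is a difference of support
functions, with explicit control. -/
lemma adm_of_quad {F : CS V} {K M : ℝ} (hM : 0 ≤ M) (h : ∀ x : sphere (0 : V) 1, ∃ p : V, |F x| ≤ K ∧
    |F x - inner ℝ p x| ≤ K ∧ ∀ y : sphere (0 : V) 1,
      |F y - F x - inner ℝ p ((y : V) - x)| ≤ M * ‖(y : V) - x‖ ^ 2) (hK : 0 ≤ K) :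
    Adm (K + 2 * M) F := by
  have hb : ∀ u, |F u| ≤ K + 2 * M := fun u => by
    obtain ⟨p, h1, -⟩ := h u; linarith
  have hxx : ∀ x : sphere (0 : V) 1, inner ℝ (x : V) (x : V) = 1 := fun x => by
    rw [real_inner_self_eq_norm_sq]; simp
  refine ⟨cvx_of_support hb ?_, cvx_of_support (by simpa using hb) ?_, ?_⟩
  · intro x
    obtain ⟨p, h1, h2, h3⟩ := h x
    -- the linear function of `y` which agrees with `F` to first order at `x` along the sphere
    refine ⟨p + (F x - inner ℝ p x) • (x : V), ?_, fun y => ?_⟩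
    · rw [inner_add_left, real_inner_smul_left, hxx]; linarith
    · have := h3 y
      rw [inner_sub_right] at this
      rw [inner_add_left, real_inner_smul_left]
      have e := one_sub_inner x y
      have e2 : 0 ≤ 1 - inner ℝ (x : V) y := by rw [e]; positivity
      have h4 := abs_le.1 this
      have h5 := abs_le.1 h2
      have e3 : M * ‖(y : V) - x‖ ^ 2 = 2 * M * (1 - inner ℝ (x : V) y) := by rw [e]; ring
      nlinarith
  · intro x
    obtain ⟨p, h1, h2, h3⟩ := h x
    refine ⟨-(p + (F x - inner ℝ p x) • (x : V)), ?_, fun y => ?_⟩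
    · rw [inner_neg_left, inner_add_left, real_inner_smul_left, hxx]; simp
    · have := h3 y
      rw [inner_sub_right] at this
      rw [inner_neg_left, inner_add_left, real_inner_smul_left]
      have e := one_sub_inner x y
      have e2 : 0 ≤ 1 - inner ℝ (x : V) y := by rw [e]; positivity
      have h4 := abs_le.1 this
      have h5 := abs_le.1 h2
      have e3 : M * ‖(y : V) - x‖ ^ 2 = 2 * M * (1 - inner ℝ (x : V) y) := by rw [e]; ring
      simp only [ContinuousMap.neg_apply]
      nlinarith
  · rw [ContinuousMap.norm_le _ (by positivity)]; exact hb

/-- The restriction to the sphere of `f` rescaled around `x₀` by the factor `ε`. -/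
noncomputable def sc (x₀ : V) (ε : ℝ) (f : C(V, ℝ)) : CS V :=
  ⟨fun u => f (ε⁻¹ • ((u : V) - x₀)), by fun_prop⟩

lemma sc_apply (x₀ : V) (ε : ℝ) (f : C(V, ℝ)) (u : sphere (0 : V) 1) :
    sc x₀ ε f u = f (ε⁻¹ • ((u : V) - x₀)) := rfl

lemma bound_fderiv {F : Type*} [NormedAddCommGroup F] [NormedSpace ℝ F] {f : V → F}
    (hf : ContDiff ℝ ∞ f) (hc : HasCompactSupport f) : ∃ M, 0 ≤ M ∧ ∀ x, ‖fderiv ℝ f x‖ ≤ M := by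
  have hf1 : ContDiff ℝ ∞ (fderiv ℝ f) := hf.fderiv_right (by simp)
  obtain ⟨M1, h1⟩ := (hc.fderiv (𝕜 := ℝ)).exists_bound_of_continuous hf1.continuous
  exact ⟨M1, (norm_nonneg _).trans (h1 0), h1⟩

/-- A smooth compactly supported function is bounded, with bounded derivative and a uniform
quadratic Taylor estimate. -/
lemma quad_of_smooth {f : V → ℝ} (hf : ContDiff ℝ ∞ f) (hc : HasCompactSupport f) :
    ∃ M0 M1 M2 : ℝ, 0 ≤ M0 ∧ 0 ≤ M1 ∧ 0 ≤ M2 ∧ (∀ x, |f x| ≤ M0) ∧ (∀ x, ‖fderiv ℝ f x‖ ≤ M1) ∧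
      ∀ x y, |f y - f x - fderiv ℝ f x (y - x)| ≤ M2 * ‖y - x‖ ^ 2 := by
  have hf1 : ContDiff ℝ ∞ (fderiv ℝ f) := hf.fderiv_right (by simp)
  obtain ⟨M0, h0⟩ := hc.exists_bound_of_continuous hf.continuous
  have p0 : 0 ≤ M0 := (norm_nonneg _).trans (h0 0)
  obtain ⟨M1, p1, h1⟩ := bound_fderiv hf hc
  obtain ⟨M2, p2, h2⟩ := bound_fderiv hf1 (hc.fderiv (𝕜 := ℝ))
  have hd : Differentiable ℝ f := hf.differentiable (by simp)
  have hd1 : Differentiable ℝ (fderiv ℝ f) := hf1.differentiable (by simp)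
  have hlip : ∀ x y, ‖fderiv ℝ f y - fderiv ℝ f x‖ ≤ M2 * ‖y - x‖ := fun x y =>
    (convex_univ).norm_image_sub_le_of_norm_fderiv_le (fun z _ => hd1 z) (fun z _ => h2 z)
      (Set.mem_univ x) (Set.mem_univ y)
  have hquad : ∀ x y, |f y - f x - fderiv ℝ f x (y - x)| ≤ M2 * ‖y - x‖ ^ 2 := by
    intro x y
    have := (convex_segment x y).norm_image_sub_le_of_norm_hasFDerivWithin_le'
      (f := f) (f' := fderiv ℝ f) (φ := fderiv ℝ f x) (C := M2 * ‖y - x‖)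
      (fun z _ => (hd z).hasFDerivAt.hasFDerivWithinAt) (fun z hz => by
        refine (hlip x z).trans (mul_le_mul_of_nonneg_left ?_ p2)
        obtain ⟨a, b, ha, hb, hab, rfl⟩ := hz
        have : a • x + b • y - x = b • (y - x) := by
          have : a = 1 - b := by linarith
          rw [this]; module
        rw [this, norm_smul, Real.norm_eq_abs, abs_of_nonneg hb]
        nlinarith [norm_nonneg (y - x)])
      (left_mem_segment ℝ x y) (right_mem_segment ℝ x y)
    rw [Real.norm_eq_abs] at this
    rw [pow_two, ← mul_assoc]; exact this
  exact ⟨M0, M1, M2, p0, p1, p2, h0, h1, hquad⟩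

lemma adm_sc {f : C(V, ℝ)} (hf : ContDiff ℝ ∞ f) (hc : HasCompactSupport f) :
    ∃ A, 0 ≤ A ∧ ∀ (x₀ : V) (ε : ℝ), 0 < ε → ε ≤ 1 → Adm (A / ε ^ 2) (sc x₀ ε f) := by
  obtain ⟨M0, M1, M2, p0, p1, p2, h0, h1, hquad⟩ := quad_of_smooth hf hc
  refine ⟨M0 + M1 + 2 * M2, by positivity, fun x₀ ε hε hε1 => ?_⟩
  have hε2 : ε ^ 2 ≤ ε := by nlinarith
  have hε3 : ε ^ 2 ≤ 1 := by nlinarith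
  refine Adm.mono (C := (M0 + M1 / ε) + 2 * (M2 / ε ^ 2)) (adm_of_quad (by positivity) ?_ (by positivity)) ?_
  · intro x
    set L := fderiv ℝ f (ε⁻¹ • ((x : V) - x₀))
    have hL : ∀ v, inner ℝ ((InnerProductSpace.toDual ℝ V).symm (ε⁻¹ • L)) v = L (ε⁻¹ • v) := fun v => by
      rw [InnerProductSpace.toDual_symm_apply]; simp
    refine ⟨(InnerProductSpace.toDual ℝ V).symm (ε⁻¹ • L), ?_, ?_, fun y => ?_⟩
    · have := h0 (ε⁻¹ • ((x : V) - x₀))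
      rw [sc_apply]
      have : 0 ≤ M1 / ε := by positivity
      linarith
    · rw [hL, sc_apply]
      refine (abs_sub _ _).trans (add_le_add (h0 _) ?_)
      have := L.le_opNorm (ε⁻¹ • (x : V))
      rw [norm_smul, norm_inv, Real.norm_of_nonneg hε.le, norm_eq_of_mem_sphere, mul_one] at this
      rw [← Real.norm_eq_abs]
      refine this.trans ?_
      rw [div_eq_mul_inv]
      exact mul_le_mul_of_nonneg_right (h1 _) (by positivity)
    · rw [hL, sc_apply, sc_apply]
      have := hquad (ε⁻¹ • ((x : V) - x₀)) (ε⁻¹ • ((y : V) - x₀))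
      have e : ε⁻¹ • ((y : V) - x₀) - ε⁻¹ • ((x : V) - x₀) = ε⁻¹ • ((y : V) - x) := by module
      rw [e, norm_smul, norm_inv, Real.norm_of_nonneg hε.le] at this
      refine this.trans (le_of_eq ?_)
      field_simp
  · rw [add_div, add_div, mul_div_assoc]
    have a1 : M0 ≤ M0 / ε ^ 2 := by rw [le_div_iff₀ (by positivity)]; nlinarith
    have a2 : M1 / ε ≤ M1 / ε ^ 2 := div_le_div_of_nonneg_left p1 (by positivity) hε2
    linarith

/-- The ridge function `u ↦ P ⟪w, u⟫`. -/
noncomputable def ridge (w : V) (P : Polynomial ℝ) : CS V :=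
  ⟨fun u => P.eval (inner ℝ w (u : V)), by fun_prop⟩

lemma ridge_apply (w : V) (P : Polynomial ℝ) (u : sphere (0 : V) 1) :
    ridge w P u = P.eval (inner ℝ w (u : V)) := rfl

lemma adm_ridge {w : V} {P : Polynomial ℝ} {r M : ℝ} (hw : ‖w‖ ≤ r)
    (h0 : ∀ t, |t| ≤ r → |P.eval t| ≤ M) (h1 : ∀ t, |t| ≤ r → |P.derivative.eval t| ≤ M)
    (h2 : ∀ t, |t| ≤ r → |P.derivative.derivative.eval t| ≤ M) :
    Adm (M + M * r + 2 * (M * r ^ 2)) (ridge w P) := by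
  have hr : 0 ≤ r := (norm_nonneg _).trans hw
  have hM : 0 ≤ M := (abs_nonneg _).trans (h0 0 (by simpa))
  have hlip : ∀ a b, |a| ≤ r → |b| ≤ r →
      |P.derivative.eval b - P.derivative.eval a| ≤ M * |b - a| := by
    intro a b ha hb
    have := (convex_Icc (-r) r).norm_image_sub_le_of_norm_hasDerivWithin_le
      (f := fun t => P.derivative.eval t) (f' := fun t => P.derivative.derivative.eval t) (C := M)
      (fun t _ => (P.derivative.hasDerivAt t).hasDerivWithinAt)
      (fun t ht => by rw [Real.norm_eq_abs]; exact h2 t (abs_le.2 ht)) (abs_le.1 ha) (abs_le.1 hb)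
    simpa [Real.norm_eq_abs] using this
  have hquad : ∀ a b, |a| ≤ r → |b| ≤ r →
      |P.eval b - P.eval a - P.derivative.eval a * (b - a)| ≤ M * |b - a| ^ 2 := by
    intro a b ha hb
    have hseg : ∀ t ∈ segment ℝ a b, |t| ≤ r ∧ |t - a| ≤ |b - a| := by
      rintro _ ⟨c, d, hc, hd, hcd, rfl⟩
      constructor
      · simp only [smul_eq_mul]
        refine (abs_add_le _ _).trans ?_
        rw [abs_mul, abs_mul, abs_of_nonneg hc, abs_of_nonneg hd]
        nlinarith
      · have : c • a + d • b - a = d * (b - a) := by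
          have : c = 1 - d := by linarith
          simp only [this, smul_eq_mul]; ring
        rw [this, abs_mul, abs_of_nonneg hd]
        nlinarith [abs_nonneg (b - a)]
    have := (convex_segment a b).norm_image_sub_le_of_norm_hasDerivWithin_le
      (f := fun t => P.eval t - P.derivative.eval a * t)
      (f' := fun t => P.derivative.eval t - P.derivative.eval a) (C := M * |b - a|)
      (fun t _ => ((P.hasDerivAt t).sub (by
        simpa using (hasDerivAt_id t).const_mul (P.derivative.eval a))).hasDerivWithinAt)
      (fun t ht => by
        rw [Real.norm_eq_abs]
        exact (hlip a t ha (hseg t ht).1).trans (mul_le_mul_of_nonneg_left (hseg t ht).2 hM))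
      (left_mem_segment ℝ a b) (right_mem_segment ℝ a b)
    rw [Real.norm_eq_abs, Real.norm_eq_abs] at this
    calc _ = |P.eval b - P.derivative.eval a * b - (P.eval a - P.derivative.eval a * a)| := by
          congr 1; ring
      _ ≤ _ := this
      _ = _ := by ring
  have hin : ∀ x : sphere (0 : V) 1, |inner ℝ w (x : V)| ≤ r := fun x =>
    (abs_real_inner_le_norm _ _).trans (by simpa using hw)
  refine adm_of_quad (by positivity) (fun x => ?_) (by positivity)
  refine ⟨P.derivative.eval (inner ℝ w (x : V)) • w, ?_, ?_, fun y => ?_⟩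
  · rw [ridge_apply]
    have := h0 _ (hin x)
    have : 0 ≤ M * r := by positivity
    linarith
  · rw [ridge_apply, real_inner_smul_left]
    refine (abs_sub _ _).trans (add_le_add (h0 _ (hin x)) ?_)
    rw [abs_mul]
    exact mul_le_mul (h1 _ (hin x)) (hin x) (abs_nonneg _) hM
  · rw [ridge_apply, ridge_apply, real_inner_smul_left, inner_sub_right]
    refine (hquad _ _ (hin x) (hin y)).trans ?_
    rw [mul_assoc, ← mul_pow, ← inner_sub_right]
    gcongr
    refine (abs_real_inner_le_norm _ _).trans ?_
    gcongr

lemma ridge_mem (w : V) (P : Polynomial ℝ) : ridge w P ∈ W V := by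
  have hb : ∀ Q : Polynomial ℝ, ∃ M, ∀ t : ℝ, |t| ≤ ‖w‖ → |Q.eval t| ≤ M := fun Q => by
    obtain ⟨M, hM⟩ := (isCompact_Icc (a := -‖w‖) (b := ‖w‖)).exists_bound_of_continuousOn
      (f := fun t => Q.eval t) (by fun_prop)
    exact ⟨M, fun t ht => hM t (abs_le.1 ht)⟩
  obtain ⟨M0, h0⟩ := hb P
  obtain ⟨M1, h1⟩ := hb P.derivative
  obtain ⟨M2, h2⟩ := hb P.derivative.derivative
  refine (adm_ridge (M := max M0 (max M1 M2)) le_rfl (fun t ht => (h0 t ht).trans ?_) (fun t ht => (h1 t ht).trans ?_)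
    fun t ht => (h2 t ht).trans ?_).mem <;> simp

end Crit

/-! ### Averaging over a transitive family of isometries -/

section Average
variable {V : Type*} [NormedAddCommGroup V] [InnerProductSpace ℝ V] [FiniteDimensional ℝ V]

/-- The covering numbers of the unit ball grow polynomially in the inverse radius. -/
lemma exists_cover (V : Type*) [NormedAddCommGroup V] [InnerProductSpace ℝ V]
    [FiniteDimensional ℝ V] : ∃ M : ℕ, ∀ k : ℕ, ∃ t : Finset V, t.card ≤ 2 ^ (M * k) ∧
      ∀ x ∈ closedBall (0 : V) 1, ∃ y ∈ t, x ∈ closedBall y ((1 / 2) ^ k) := by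
  classical
  obtain ⟨t₁, -, ht₁f, ht₁⟩ := (isCompact_closedBall (0 : V) 1).finite_cover_balls
    (e := 1 / 2) (by norm_num)
  refine ⟨ht₁f.toFinset.card, fun k => ?_⟩
  induction k with
  | zero => exact ⟨{0}, by simp, fun x hx => ⟨0, by simp, by simpa using hx⟩⟩
  | succ k ih =>
    obtain ⟨t, hc, ht⟩ := ih
    refine ⟨(t ×ˢ ht₁f.toFinset).image fun p => p.1 + (1 / 2 : ℝ) ^ k • p.2, ?_, fun x hx => ?_⟩
    · refine Finset.card_image_le.trans ?_
      rw [Finset.card_product, mul_add, mul_one, pow_add]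
      exact Nat.mul_le_mul hc Nat.lt_two_pow_self.le
    · obtain ⟨y, hy, hxy⟩ := ht x hx
      have h2 : (2 : ℝ) ^ k • (x - y) ∈ closedBall (0 : V) 1 := by
        rw [mem_closedBall, dist_eq_norm] at hxy
        rw [mem_closedBall_zero_iff, norm_smul, norm_pow, Real.norm_ofNat]
        refine (mul_le_mul_of_nonneg_left hxy (by positivity)).trans (le_of_eq ?_)
        rw [← mul_pow]; norm_num
      obtain ⟨z, hz, hxz⟩ := Set.mem_iUnion₂.1 (ht₁ h2)
      refine ⟨_, Finset.mem_image.2 ⟨(y, z), by simp [hy, hz], rfl⟩, ?_⟩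
      rw [mem_ball, dist_eq_norm] at hxz
      rw [mem_closedBall, dist_eq_norm]
      have : x - (y + (1 / 2 : ℝ) ^ k • z) = (1 / 2 : ℝ) ^ k • ((2 : ℝ) ^ k • (x - y) - z) := by
        rw [smul_sub, smul_smul, ← mul_pow]; norm_num; abel
      dsimp only
      rw [this, norm_smul, pow_succ]
      refine mul_le_mul (by simp) hxz.le (by positivity) (by positivity)

variable {Γ : Type*} [TopologicalSpace Γ] [CompactSpace Γ] [MeasurableSpace Γ] [BorelSpace Γ]
  {μ : Measure Γ} [IsProbabilityMeasure μ] {ρ : Γ → V ≃ₗᵢ[ℝ] V}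

lemma integrable_cont {F : Type*} [NormedAddCommGroup F] {f : Γ → F} (hf : Continuous f) :
    Integrable f μ := hf.integrable_of_hasCompactSupport (HasCompactSupport.of_compactSpace f)

lemma continuous_rot (hρ : Continuous fun p : Γ × V => (ρ p.1).symm p.2) (F : CS V) :
    Continuous fun g => rot (ρ g).symm F := by
  refine ContinuousMap.continuous_of_continuous_uncurry _ ?_
  refine F.continuous.comp (Continuous.subtype_mk ?_ _)
  exact hρ.comp (f := fun p : Γ × sphere (0 : V) 1 => (p.1, (p.2 : V))) (by fun_prop)

/-- The mean of the rotated bumps is bounded below by a power of the radius. -/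
lemma mean_lower (hρ : Continuous fun p : Γ × V => (ρ p.1).symm p.2)
    (hμ : ∀ (f : CS V) (x y : sphere (0 : V) 1),
      ∫ g, rot (ρ g).symm f x ∂μ = ∫ g, rot (ρ g).symm f y ∂μ) (x₀ : sphere (0 : V) 1)
    {M : ℕ} (hM : ∀ k : ℕ, ∃ t : Finset V, t.card ≤ 2 ^ (M * k) ∧
      ∀ x ∈ closedBall (0 : V) 1, ∃ y ∈ t, x ∈ closedBall y ((1 / 2) ^ k))
    {b : C(V, ℝ)} (hb0 : ∀ x, 0 ≤ b x) (hb1 : ∀ x ∈ closedBall (0 : V) 1, b x = 1) (k : ℕ)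
    (x : sphere (0 : V) 1) :
    ((1 / 2 : ℝ) ^ k) ^ M ≤ ∫ g, rot (ρ g).symm (sc (x₀ : V) (2 * (1 / 2) ^ k) b) x ∂μ := by
  classical
  obtain ⟨t, hc, ht⟩ := hM k
  set β := sc (x₀ : V) (2 * (1 / 2) ^ k) b with hβ
  have hch : ∀ y : V, ∃ z : sphere (0 : V) 1, (∃ z' : sphere (0 : V) 1, (z' : V) ∈ closedBall y ((1 / 2) ^ k)) →
      (z : V) ∈ closedBall y ((1 / 2) ^ k) := fun y => by
    by_cases h : ∃ z' : sphere (0 : V) 1, (z' : V) ∈ closedBall y ((1 / 2) ^ k)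
    · exact ⟨h.choose, fun _ => h.choose_spec⟩
    · exact ⟨x₀, fun h' => absurd h' h⟩
  choose z hz using hch
  set m := ∫ g, rot (ρ g).symm β x ∂μ
  have hi : ∀ y, Integrable (fun g => rot (ρ g).symm β y) μ := fun y =>
    integrable_cont ((continuous_rot hρ β).eval_const y)
  have h1 : ∫ g, ∑ y ∈ t, rot (ρ g).symm β (z y) ∂μ = t.card * m := by
    rw [integral_finsetSum _ fun y _ => hi _, Finset.sum_congr rfl fun y _ => hμ β (z y) x]
    simp [m]
  have h2 : (1 : ℝ) ≤ ∫ g, ∑ y ∈ t, rot (ρ g).symm β (z y) ∂μ := by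
    have : ∫ _, (1 : ℝ) ∂μ = (1 : ℝ) := by simp
    refine this.symm.trans_le ?_
    refine integral_mono (integrable_const _) (integrable_finsetSum _ fun y _ => hi _) fun g => ?_
    have hgx : ρ g x₀ ∈ closedBall (0 : V) 1 := by simp
    obtain ⟨y, hy, hy'⟩ := ht _ hgx
    have hzy := hz y ⟨⟨ρ g x₀, by simp⟩, hy'⟩
    have : rot (ρ g).symm β (z y) = 1 := by
      rw [rot_apply, hβ, sc_apply]
      refine hb1 _ ?_
      rw [mem_closedBall_zero_iff, norm_smul]
      have e : ‖(ρ g).symm (z y : V) - x₀‖ = ‖(z y : V) - ρ g x₀‖ := by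
        rw [← (ρ g).norm_map, map_sub]; simp
      have hd : ‖(z y : V) - ρ g x₀‖ ≤ 2 * (1 / 2) ^ k := by
        rw [← dist_eq_norm]
        refine (dist_triangle_right _ _ y).trans ?_
        have := mem_closedBall.1 hzy
        have := mem_closedBall.1 hy'
        linarith
      simp only [e]
      rw [norm_inv, Real.norm_of_nonneg (by positivity), inv_mul_le_iff₀ (by positivity), mul_one]
      exact hd
    show (1 : ℝ) ≤ ∑ y ∈ t, rot (ρ g).symm β (z y)
    refine this.symm.trans_le ?_
    exact Finset.single_le_sum (f := fun y => rot (ρ g).symm β (z y)) (fun y _ => hb0 _) hy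
  have hm0 : 0 ≤ m := integral_nonneg fun g => hb0 _
  have h3 : (1 : ℝ) ≤ 2 ^ (M * k) * m := by
    rw [h1] at h2
    refine h2.trans (mul_le_mul_of_nonneg_right ?_ hm0)
    exact_mod_cast hc
  rw [← pow_mul, one_div, inv_pow, mul_comm k M, inv_le_iff_one_le_mul₀ (by positivity), mul_comm]
  exact h3

variable {φ : ConvexBody V → ℂ}

lemma Dh_continuousOn (hφ : MemVal φ) {h : CS V} (hh : h ∈ W V) (C : ℝ) :
    ContinuousOn (Dh φ h) {f : CS V | Adm C f} := by
  obtain ⟨A, hA⟩ := hh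
  refine continuousOn_finsetSum _ fun j _ => ContinuousOn.mul ?_ continuousOn_const
  refine (hat_continuousOn hφ (A + |(j : ℝ)| * C)).comp (by fun_prop) fun f hf => ?_
  exact hA.add (Adm.smul hf _)

/-- The derivative commutes with averaging of uniformly admissible directions. -/
lemma Dh_integral (hφ : MemVal φ) {h : CS V} (hh : h ∈ W V) {C : ℝ} {f : Γ → CS V}
    (hf : Continuous f) (hC : ∀ g, Adm C (f g)) :
    Continuous (fun g => Dh φ h (f g)) ∧ Dh φ h (∫ g, f g ∂μ) = ∫ g, Dh φ h (f g) ∂μ := by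
  have hcont : Continuous (fun g => Dh φ h (f g)) :=
    (Dh_continuousOn hφ hh C).comp_continuous hf hC
  refine ⟨hcont, ?_⟩
  let S : Set (CS V × ℂ) := {p | Adm C p.1 ∧ p.2 = Dh φ h p.1}
  have hS : IsClosed S := by
    have h1 : IsClosed ({f : CS V | Adm C f} ×ˢ (Set.univ : Set ℂ)) := (isClosed_adm C).prod isClosed_univ
    have h2 : ContinuousOn (fun p : CS V × ℂ => p.2 - Dh φ h p.1) ({f : CS V | Adm C f} ×ˢ (Set.univ : Set ℂ)) :=
      continuousOn_snd.sub ((Dh_continuousOn hφ hh C).comp continuousOn_fst fun p hp => hp.1)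
    have h3 := h2.preimage_isClosed_of_isClosed h1 (isClosed_singleton (x := (0 : ℂ)))
    convert h3 using 1
    ext p
    simp only [S, Set.mem_ofPred_eq, Set.mem_inter_iff, Set.mem_prod, Set.mem_univ, and_true,
      Set.mem_preimage, Set.mem_singleton_iff, sub_eq_zero]
  have hSc : Convex ℝ S := by
    rintro ⟨f, x⟩ ⟨hf, hx⟩ ⟨f', x'⟩ ⟨hf', hx'⟩ a b ha hb hab
    refine ⟨convex_adm C hf hf' ha hb hab, ?_⟩
    dsimp only at hx hx' hf hf'
    simp only [Prod.smul_mk, Prod.mk_add_mk, hx, hx']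
    rw [Dh_add_smul hφ hh hf.mem hf'.mem]; simp
  have h4 := hSc.integral_mem (μ := μ) hS (f := fun g => (f g, Dh φ h (f g)))
    (Filter.Eventually.of_forall fun g => ⟨hC g, rfl⟩) (integrable_cont (hf.prodMk hcont))
  rw [integral_pair (integrable_cont hf) (integrable_cont hcont)] at h4
  exact h4.2.symm

end Average

/-! ### Polynomial test functions and their Taylor expansions -/

section Test
variable {V : Type*} [NormedAddCommGroup V] [InnerProductSpace ℝ V] [FiniteDimensional ℝ V]

/-- The monomial `y ↦ ∏ j, y_{s j}` in orthonormal coordinates. -/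
noncomputable def mono {k : ℕ} (s : Fin k → Fin (Module.finrank ℝ V)) : C(V, ℝ) :=
  ⟨fun y => ∏ j, inner ℝ (stdOrthonormalBasis ℝ V (s j)) y, by fun_prop⟩

lemma mono_apply {k : ℕ} (s : Fin k → Fin (Module.finrank ℝ V)) (y : V) :
    mono s y = ∏ j, inner ℝ (stdOrthonormalBasis ℝ V (s j)) y := rfl

lemma mono_smul {k : ℕ} (s : Fin k → Fin (Module.finrank ℝ V)) (t : ℝ) (y : V) :
    mono s (t • y) = t ^ k * mono s y := by
  simp [mono_apply, inner_smul_right, Finset.prod_mul_distrib]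

lemma contDiff_mono {k : ℕ} (s : Fin k → Fin (Module.finrank ℝ V)) : ContDiff ℝ ∞ (mono s) := by
  show ContDiff ℝ ∞ fun y : V => ∏ j, inner ℝ (stdOrthonormalBasis ℝ V (s j)) y
  exact contDiff_prod fun j _ => contDiff_const.inner ℝ contDiff_id

lemma inner_pow (w y : V) (k : ℕ) : (inner ℝ w y : ℝ) ^ k =
    ∑ s : Fin k → Fin (Module.finrank ℝ V), mono s w * mono s y := by
  have : (inner ℝ w y : ℝ) = ∑ i, inner ℝ (stdOrthonormalBasis ℝ V i) w *
      inner ℝ (stdOrthonormalBasis ℝ V i) y := by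
    rw [← (stdOrthonormalBasis ℝ V).sum_inner_mul_inner w y]
    refine Finset.sum_congr rfl fun i _ => ?_
    rw [real_inner_comm]
  rw [this, Fintype.sum_pow]
  refine Finset.sum_congr rfl fun s _ => ?_
  rw [mono_apply, mono_apply, Finset.prod_mul_distrib]

/-- Formal data of a polynomial test function `∑ a ⟪w, x⟫ ^ d`. -/
abbrev Test (V : Type*) := (V × ℕ) →₀ ℝ

/-- The test function on the sphere attached to formal data. -/
noncomputable def tf (τ : Test V) : CS V := τ.sum fun p a => a • ridge p.1 (Polynomial.X ^ p.2)

lemma tf_mem (τ : Test V) : tf τ ∈ W V :=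
  (W V).sum_mem fun _ _ => (W V).smul_mem _ (ridge_mem _ _)

lemma tf_apply (τ : Test V) (u : sphere (0 : V) 1) :
    tf τ u = τ.sum fun p a => a * (inner ℝ p.1 (u : V)) ^ p.2 := by
  simp [tf, Finsupp.sum, ContinuousMap.sum_apply, ridge_apply]

lemma tf_smul (t : ℝ) (τ : Test V) : tf (t • τ) = t • tf τ := by
  unfold tf
  rw [Finsupp.sum_smul_index (by simp), Finsupp.smul_sum]
  simp [mul_smul]

lemma tf_add (σ τ : Test V) : tf (σ + τ) = tf σ + tf τ :=
  Finsupp.sum_add_index' (by simp) (by intros; rw [add_smul])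

/-- The Taylor coefficients at `x₀` of a test function composed with an isometry. -/
noncomputable def cf (x₀ : V) (τ : Test V) (g : V ≃ₗᵢ[ℝ] V) {k : ℕ}
    (s : Fin k → Fin (Module.finrank ℝ V)) : ℝ :=
  τ.sum fun p a => a * (p.2.choose k) * (inner ℝ (g.symm p.1) x₀) ^ (p.2 - k) * mono s (g.symm p.1)

lemma inner_pow_expand (w x₀ u : V) {d D : ℕ} (hd : d ≤ D) : (inner ℝ w u : ℝ) ^ d =
    ∑ k ∈ Finset.range (D + 1), ∑ s : Fin k → Fin (Module.finrank ℝ V),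
      (d.choose k) * (inner ℝ w x₀) ^ (d - k) * mono s w * mono s (u - x₀) := by
  have h1 : (inner ℝ w u : ℝ) = inner ℝ w (u - x₀) + inner ℝ w x₀ := by
    rw [← inner_add_right]; simp
  have h2 : Finset.range (d + 1) ⊆ Finset.range (D + 1) := by
    intro i; simp; omega
  rw [h1, add_pow, Finset.sum_subset h2]
  · refine Finset.sum_congr rfl fun k _ => ?_
    rw [inner_pow, Finset.sum_mul, Finset.sum_mul]
    exact Finset.sum_congr rfl fun s _ => by ring
  · intro k _ hk
    rw [Nat.choose_eq_zero_of_lt (by simpa using hk)]; simp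

lemma rot_tf (x₀ : V) (τ : Test V) (g : V ≃ₗᵢ[ℝ] V) {D : ℕ} (hD : ∀ p ∈ τ.support, p.2 ≤ D)
    (u : sphere (0 : V) 1) : rot g (tf τ) u = ∑ k ∈ Finset.range (D + 1),
      ∑ s : Fin k → Fin (Module.finrank ℝ V), cf x₀ τ g s * mono s ((u : V) - x₀) := by
  rw [rot_apply, tf_apply]
  simp only [cf, Finsupp.sum, Finset.sum_mul]
  have e : ∀ p : V × ℕ, (inner ℝ p.1 (g u) : ℝ) = inner ℝ (g.symm p.1) (u : V) := fun p => by
    have := g.inner_map_map (g.symm p.1) (u : V)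
    rwa [g.apply_symm_apply] at this
  rw [Finset.sum_congr rfl fun p hp => by rw [e, inner_pow_expand (g.symm p.1) x₀ u (hD p hp)]]
  simp only [Finset.mul_sum]
  rw [Finset.sum_comm]
  refine Finset.sum_congr rfl fun k _ => ?_
  rw [Finset.sum_comm]
  refine Finset.sum_congr rfl fun s _ => Finset.sum_congr rfl fun p _ => by ring

/-- The localized monomials: the monomial in `u - x₀` of multi-index `s`, cut off by `f` rescaled
around `x₀` by the factor `ε`. -/
noncomputable def pf (x₀ : V) (ε : ℝ) (f : C(V, ℝ)) {k : ℕ}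
    (s : Fin k → Fin (Module.finrank ℝ V)) : CS V := ε ^ k • sc x₀ ε (f * mono s)

lemma pf_apply (x₀ : V) {ε : ℝ} (hε : ε ≠ 0) (f : C(V, ℝ)) {k : ℕ}
    (s : Fin k → Fin (Module.finrank ℝ V)) (u : sphere (0 : V) 1) :
    pf x₀ ε f s u = sc x₀ ε f u * mono s ((u : V) - x₀) := by
  simp only [pf, ContinuousMap.smul_apply, sc_apply, ContinuousMap.mul_apply, mono_smul, smul_eq_mul]
  have : ε ^ k * ε⁻¹ ^ k = 1 := by rw [← mul_pow, mul_inv_cancel₀ hε, one_pow]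
  linear_combination f (ε⁻¹ • ((u : V) - x₀)) * mono s ((u : V) - x₀) * this

lemma adm_pf {f : C(V, ℝ)} (hf : ContDiff ℝ ∞ f) (hc : HasCompactSupport f) {k : ℕ}
    (s : Fin k → Fin (Module.finrank ℝ V)) : ∃ A, 0 ≤ A ∧ ∀ (x₀ : V) (ε : ℝ), 0 < ε → ε ≤ 1 →
      Adm (A * ε ^ k / ε ^ 2) (pf x₀ ε f s) := by
  obtain ⟨A, hA, h⟩ := adm_sc (f := f * mono s) (hf.mul (contDiff_mono s)) hc.mul_right
  refine ⟨A, hA, fun x₀ ε h0 h1 => ?_⟩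
  have := (h x₀ ε h0 h1).smul (ε ^ k)
  rw [abs_of_pos (by positivity)] at this
  have e : A * ε ^ k / ε ^ 2 = ε ^ k * (A / ε ^ 2) := by ring
  rw [e]; exact this

lemma Adm.sum {ι : Type*} {t : Finset ι} {C : ι → ℝ} {F : ι → CS V} (h : ∀ i ∈ t, Adm (C i) (F i)) :
    Adm (∑ i ∈ t, C i) (∑ i ∈ t, F i) := by
  classical
  induction t using Finset.induction_on with
  | empty => simpa using adm_zero le_rfl
  | insert a t ha ih =>
    rw [Finset.sum_insert ha, Finset.sum_insert ha]
    exact (h a (by simp)).add (ih fun i hi => h i (by simp [hi]))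

/-- The part of the localized Taylor expansion with degrees in `t`. -/
noncomputable def tp (x₀ : V) (ε : ℝ) (f : C(V, ℝ)) (τ : Test V) (g : V ≃ₗᵢ[ℝ] V) (t : Finset ℕ) :
    CS V := ∑ k ∈ t, ∑ s : Fin k → Fin (Module.finrank ℝ V), cf x₀ τ g s • pf x₀ ε f s

lemma tp_eq (x₀ : V) {ε : ℝ} (hε : ε ≠ 0) (f : C(V, ℝ)) (τ : Test V) (g : V ≃ₗᵢ[ℝ] V) {N D : ℕ}
    (hD : ∀ p ∈ τ.support, p.2 ≤ D) (hN : N ≤ D) : sc x₀ ε f * rot g (tf τ) =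
      tp x₀ ε f τ g (Finset.range (N + 1)) + tp x₀ ε f τ g (Finset.Ico (N + 1) (D + 1)) := by
  unfold tp
  rw [Finset.sum_range_add_sum_Ico _ (by omega)]
  ext u
  simp only [ContinuousMap.mul_apply, rot_tf x₀ τ g hD, ContinuousMap.sum_apply,
    ContinuousMap.smul_apply, pf_apply x₀ hε, Finset.mul_sum, smul_eq_mul]
  refine Finset.sum_congr rfl fun k _ => Finset.sum_congr rfl fun s _ => by ring

variable {Γ : Type*} [TopologicalSpace Γ] [CompactSpace Γ] [MeasurableSpace Γ] [BorelSpace Γ]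
  {μ : Measure Γ} [IsProbabilityMeasure μ] {ρ : Γ → V ≃ₗᵢ[ℝ] V}

lemma continuous_cf (hρ : Continuous fun p : Γ × V => (ρ p.1).symm p.2) (x₀ : V) (τ : Test V) {k : ℕ}
    (s : Fin k → Fin (Module.finrank ℝ V)) : Continuous fun g => cf x₀ τ (ρ g) s := by
  have : ∀ w : V, Continuous fun g => (ρ g).symm w := fun w =>
    hρ.comp (f := fun g => (g, w)) (by fun_prop)
  refine continuous_finsetSum _ fun p _ => ?_
  have h1 := this p.1
  exact (continuous_const.mul ((h1.inner continuous_const).pow _)).mul ((mono s).continuous.comp h1)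

lemma adm_tp (hρ : Continuous fun p : Γ × V => (ρ p.1).symm p.2) (x₀ : V)
    {f : C(V, ℝ)} (hf : ContDiff ℝ ∞ f) (hc : HasCompactSupport f) (τ : Test V) (t : Finset ℕ) {a : ℕ}
    (ha : ∀ k ∈ t, a ≤ k) : ∃ A, 0 ≤ A ∧ ∀ (ε : ℝ), 0 < ε → ε ≤ 1 → ∀ g,
      Adm (A * ε ^ a / ε ^ 2) (tp x₀ ε f τ (ρ g) t) := by
  have h1 : ∀ (k : ℕ) (s : Fin k → Fin (Module.finrank ℝ V)), ∃ c, 0 ≤ c ∧ ∀ g, |cf x₀ τ (ρ g) s| ≤ c := by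
    intro k s
    obtain ⟨c, hc⟩ := isCompact_univ.exists_bound_of_continuousOn
      (continuous_cf hρ x₀ τ s).continuousOn
    exact ⟨max c 0, le_max_right _ _, fun g => (hc g trivial).trans (le_max_left _ _)⟩
  choose c hc0 hc1 using h1
  have h2 : ∀ (k : ℕ) (s : Fin k → Fin (Module.finrank ℝ V)), _ := fun k s => adm_pf hf hc s
  choose A hA0 hA1 using h2
  refine ⟨∑ k ∈ t, ∑ s, c k s * A k s, Finset.sum_nonneg fun k _ => Finset.sum_nonneg fun s _ =>
    mul_nonneg (hc0 _ _) (hA0 _ _), fun ε h0 h1 g => ?_⟩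
  rw [Finset.sum_mul, Finset.sum_div]
  refine Adm.sum fun k hk => ?_
  rw [Finset.sum_mul, Finset.sum_div]
  refine Adm.sum fun s _ => ?_
  refine Adm.mono ((hA1 k s x₀ ε h0 h1).smul _) ?_
  rw [← mul_div_assoc, ← mul_assoc]
  have := hA0 k s
  have := hc0 k s
  have := pow_le_pow_of_le_one h0.le h1 (ha k hk)
  gcongr
  exact hc1 k s g

end Test

/-! ### Invariant valuations have derivatives in a fixed finite-dimensional space -/

section FiniteDim
variable {V : Type*} [NormedAddCommGroup V] [InnerProductSpace ℝ V] [FiniteDimensional ℝ V]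
variable {φ : ConvexBody V → ℂ}

lemma Dh_multi (hφ : MemVal φ) {ι : Type*} [Fintype ι] [DecidableEq ι] (b b' : ι → CS V)
    (hb : ∀ i, b i ∈ W V) (hb' : ∀ i, b' i ∈ W V) : ∃ q : (ι → Fin (dd V + 1)) → ℂ, ∀ c : ι → ℝ,
      Dh φ (∑ i, c i • b i) (∑ i, c i • b' i) = ∑ k, q k * ∏ i, (c i : ℂ) ^ (k i : ℕ) := by
  have := fun j : ℕ => hat_multi hφ (W V).zero_mem (fun i => b i + (j : ℝ) • b' i)
    (fun i => (W V).add_mem (hb i) ((W V).smul_mem _ (hb' i)))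
  choose a ha using this
  refine ⟨fun k => ∑ j ∈ Finset.range (dd V + 1), a j k *
    (Polynomial.derivative (lg (dd V) j)).eval 0, fun c => ?_⟩
  have e : ∀ j : ℕ, hat φ (∑ i, c i • b i + (j : ℝ) • ∑ i, c i • b' i) =
      ∑ k, a j k * ∏ i, (c i : ℂ) ^ (k i : ℕ) := fun j => by
    rw [← ha j c, zero_add, Finset.smul_sum, ← Finset.sum_add_distrib]
    congr 1
    refine Finset.sum_congr rfl fun i _ => ?_
    rw [smul_add, smul_comm]
  simp only [Dh, e, Finset.sum_mul]
  rw [Finset.sum_comm]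
  exact Finset.sum_congr rfl fun k _ => Finset.sum_congr rfl fun j _ => by ring

variable {Γ : Type*} [TopologicalSpace Γ] [CompactSpace Γ] [MeasurableSpace Γ] [BorelSpace Γ]
  {μ : Measure Γ} [IsProbabilityMeasure μ] {ρ : Γ → V ≃ₗᵢ[ℝ] V}

/-- Multi-indices of degree at most `N`. -/
abbrev Idx (n N : ℕ) := Σ k : Fin (N + 1), (Fin k → Fin n)

lemma tp_range (x₀ : V) (ε : ℝ) (f : C(V, ℝ)) (τ : Test V) (g : V ≃ₗᵢ[ℝ] V) (N : ℕ) :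
    tp x₀ ε f τ g (Finset.range (N + 1)) =
      ∑ i : Idx (Module.finrank ℝ V) N, cf x₀ τ g i.2 • pf x₀ ε f i.2 := by
  rw [Fintype.sum_sigma]
  exact (Fin.sum_univ_eq_sum_range (fun k => ∑ s : Fin k → Fin (Module.finrank ℝ V),
    cf x₀ τ g s • pf x₀ ε f s) (N + 1)).symm

/-- The averaged monomials in the Taylor coefficients. -/
noncomputable def Jm (μ : Measure Γ) (ρ : Γ → V ≃ₗᵢ[ℝ] V) (x₀ : V) (N : ℕ)
    (κ : Idx (Module.finrank ℝ V) N → Fin (dd V + 1)) (τ : Test V) : ℂ :=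
  ∫ g, ∏ i, ((cf x₀ τ (ρ g) i.2 : ℝ) : ℂ) ^ (κ i : ℕ) ∂μ

/-- Averaging identity: the derivative at a test function is a mean of localized derivatives. -/
lemma Dh_average (hφ : MemVal φ) (hinv : ∀ g K, φ (ConvexBody.mapIsom (ρ g) K) = φ K)
    (hρ : Continuous fun p : Γ × V => (ρ p.1).symm p.2)
    (hμ : ∀ (f : CS V) (x y : sphere (0 : V) 1),
      ∫ g, rot (ρ g).symm f x ∂μ = ∫ g, rot (ρ g).symm f y ∂μ) (x₀ : sphere (0 : V) 1)
    {h β η : CS V} {C D : ℝ} (hh : h ∈ W V) (hβ : β ∈ W V) (hη : η ∈ W V)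
    (hβh : ∀ g, Adm C (β * rot (ρ g) h)) (hηh : ∀ g, Adm D (η * rot (ρ g) h))
    (hβ0 : 0 ≤ β) (hη1 : η ≤ 1) (hβη : β * (1 - η) = 0) :
    Continuous (fun g => Dh φ (η * rot (ρ g) h) (β * rot (ρ g) h)) ∧
    ((∫ g, rot (ρ g).symm β x₀ ∂μ : ℝ) : ℂ) * Dh φ h h =
      ∫ g, Dh φ (η * rot (ρ g) h) (β * rot (ρ g) h) ∂μ := by
  set f : Γ → CS V := fun g => rot (ρ g).symm β * h with hf
  have hrf : ∀ g, rot (ρ g) (f g) = β * rot (ρ g) h := fun g => by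
    ext u; simp [hf, rot_apply]
  have hfr : ∀ g, f g = rot (ρ g).symm (β * rot (ρ g) h) := fun g => by
    ext u; simp [hf, rot_apply]
  have hfA : ∀ g, Adm C (f g) := fun g => by rw [hfr]; exact (hβh g).rot _
  have hfc : Continuous f := (continuous_rot hρ β).mul continuous_const
  have hD : ∀ g, Dh φ h (f g) = Dh φ (η * rot (ρ g) h) (β * rot (ρ g) h) := fun g => by
    have hhg : rot (ρ g) h ∈ W V := by
      obtain ⟨A, hA⟩ := hh
      exact (hA.rot _).mem
    rw [← Dh_rot hφ (hinv g) hh (hfA g).mem, hrf,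
      Dh_local hφ hhg hβ hη (hβh g).mem (hηh g).mem hβ0 hη1 hβη]
  obtain ⟨h1, h2⟩ := Dh_integral (μ := μ) hφ hh hfc hfA
  simp only [hD] at h1 h2
  refine ⟨h1, ?_⟩
  rw [← h2]
  have hint : ∫ g, f g ∂μ = (∫ g, rot (ρ g).symm β x₀ ∂μ) • h + (0 : ℝ) • h := by
    ext x
    rw [ContinuousMap.integral_apply (integrable_cont hfc)]
    simp only [hf, ContinuousMap.mul_apply, ContinuousMap.add_apply, ContinuousMap.smul_apply]
    rw [integral_mul_const, hμ β x x₀]; simp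
  rw [hint, Dh_add_smul hφ hh hh hh]; simp

end FiniteDim

section FiniteDim
variable {V : Type*} [NormedAddCommGroup V] [InnerProductSpace ℝ V] [FiniteDimensional ℝ V]
variable {φ : ConvexBody V → ℂ}
variable {Γ : Type*} [TopologicalSpace Γ] [CompactSpace Γ] [MeasurableSpace Γ] [BorelSpace Γ]
  {μ : Measure Γ} [IsProbabilityMeasure μ] {ρ : Γ → V ≃ₗᵢ[ℝ] V}

lemma integral_trunc (hφ : MemVal φ) (hρ : Continuous fun p : Γ × V => (ρ p.1).symm p.2)
    (x₀ : V) (N : ℕ) {b₁ b₂ : C(V, ℝ)} (h1 : ContDiff ℝ ∞ b₁) (h1c : HasCompactSupport b₁)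
    (h2 : ContDiff ℝ ∞ b₂) (h2c : HasCompactSupport b₂) (ε : ℝ) (h0 : 0 < ε) (hε : ε ≤ 1) :
    ∃ q : (Idx (Module.finrank ℝ V) N → Fin (dd V + 1)) → ℂ, ∀ τ : Test V,
      Integrable (fun g => Dh φ (tp x₀ ε b₂ τ (ρ g) (Finset.range (N + 1)))
        (tp x₀ ε b₁ τ (ρ g) (Finset.range (N + 1)))) μ ∧
      ∫ g, Dh φ (tp x₀ ε b₂ τ (ρ g) (Finset.range (N + 1)))
        (tp x₀ ε b₁ τ (ρ g) (Finset.range (N + 1))) ∂μ = ∑ κ, q κ * Jm μ ρ x₀ N κ τ := by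
  obtain ⟨q, hq⟩ := Dh_multi hφ (fun i : Idx (Module.finrank ℝ V) N => pf x₀ ε b₂ i.2)
    (fun i => pf x₀ ε b₁ i.2)
    (fun i => by obtain ⟨A, -, hA⟩ := adm_pf h2 h2c i.2; exact (hA x₀ ε h0 hε).mem)
    (fun i => by obtain ⟨A, -, hA⟩ := adm_pf h1 h1c i.2; exact (hA x₀ ε h0 hε).mem)
  refine ⟨q, fun τ => ?_⟩
  have hi : ∀ κ : Idx (Module.finrank ℝ V) N → Fin (dd V + 1),
      Integrable (fun g => q κ * ∏ i, ((cf x₀ τ (ρ g) i.2 : ℝ) : ℂ) ^ (κ i : ℕ)) μ := fun κ =>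
    integrable_cont (continuous_const.mul (continuous_finsetProd _ fun i _ =>
      (Complex.continuous_ofReal.comp (continuous_cf hρ x₀ τ i.2)).pow _))
  simp only [tp_range, hq]
  refine ⟨integrable_finsetSum _ fun κ _ => hi κ, ?_⟩
  rw [integral_finsetSum _ fun κ _ => hi κ]
  refine Finset.sum_congr rfl fun κ _ => ?_
  rw [integral_const_mul]; rfl

/-- The elementary size estimate behind the convergence of the truncated averages. -/
lemma size_estimate {B A r : ℝ} {d M : ℕ} (hB : 0 ≤ B) (hA : 0 ≤ A) (hr : 0 < r) (hr1 : 2 * r ≤ 1) :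
    B * (A * (2 * r) ^ (2 * d + M + 3) / (2 * r) ^ 2) * (1 + A / (2 * r) ^ 2) ^ d ≤
      r ^ M * (B * A * (1 + A) ^ d * 2 ^ (M + 1) * r) := by
  set ε := 2 * r with hε
  have hε0 : 0 < ε := by positivity
  have h1 : 1 + A / ε ^ 2 ≤ (1 + A) / ε ^ 2 := by
    rw [add_div]
    have : 1 ≤ 1 / ε ^ 2 := by rw [le_div_iff₀ (by positivity)]; nlinarith
    linarith
  calc _ ≤ B * (A * ε ^ (2 * d + M + 3) / ε ^ 2) * ((1 + A) / ε ^ 2) ^ d := by gcongr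
    _ = B * A * (1 + A) ^ d * ε ^ (M + 1) := by
        rw [div_pow, ← pow_mul, show 2 * d + M + 3 = 2 * d + 2 + (M + 1) by ring, pow_add, pow_add]
        field_simp
    _ = _ := by rw [hε, mul_pow, pow_succ r]; ring

lemma exists_bumps (V : Type*) [NormedAddCommGroup V] [InnerProductSpace ℝ V]
    [FiniteDimensional ℝ V] : ∃ b₁ b₂ : C(V, ℝ), ContDiff ℝ ∞ b₁ ∧ HasCompactSupport b₁ ∧
      ContDiff ℝ ∞ b₂ ∧ HasCompactSupport b₂ ∧ (∀ x, 0 ≤ b₁ x) ∧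
      (∀ x ∈ closedBall (0 : V) 1, b₁ x = 1) ∧ (∀ x, b₂ x ≤ 1) ∧ ∀ x, b₁ x * (1 - b₂ x) = 0 := by
  let f₁ : ContDiffBump (0 : V) := ⟨1, 2, by norm_num, by norm_num⟩
  let f₂ : ContDiffBump (0 : V) := ⟨2, 3, by norm_num, by norm_num⟩
  refine ⟨⟨f₁, f₁.continuous⟩, ⟨f₂, f₂.continuous⟩, f₁.contDiff, f₁.hasCompactSupport, f₂.contDiff,
    f₂.hasCompactSupport, fun x => f₁.nonneg, fun x hx => f₁.one_of_mem_closedBall hx,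
    fun x => f₂.le_one, fun x => ?_⟩
  show f₁ x * (1 - f₂ x) = 0
  rcases le_total (dist x 0) 2 with h | h
  · rw [f₂.one_of_mem_closedBall h]; simp
  · rw [f₁.zero_of_le_dist h]; simp

/-- For all invariant valuations `φ`, the functionals `τ ↦ Dh φ h_τ h_τ` lie in one and the same
finite-dimensional space. The bump has radius of order `r k = 2 ^ -(k + 1)`, and its mean `m k` is at
least `r k ^ M`. Truncating the Taylor expansions at degree `N` perturbs the arguments of `Dh` by
`O (r ^ (N - 1))`, while their size is `O (r ^ -2)`, so the error is `O (r ^ (N - 1 - 2 * dd V))`; for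
`N = 2 * dd V + M + 2` it is small compared with `m k`. -/
theorem finite_span (hρ : Continuous fun p : Γ × V => (ρ p.1).symm p.2)
    (hμ : ∀ (f : CS V) (x y : sphere (0 : V) 1),
      ∫ g, rot (ρ g).symm f x ∂μ = ∫ g, rot (ρ g).symm f y ∂μ) (x₀ : sphere (0 : V) 1) :
    ∃ N, ∀ φ : ConvexBody V → ℂ, MemVal φ → (∀ g K, φ (ConvexBody.mapIsom (ρ g) K) = φ K) →
      (fun τ : Test V => Dh φ (tf τ) (tf τ)) ∈ Submodule.span ℂ (Set.range (Jm μ ρ (x₀ : V) N)) := by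
  classical
  obtain ⟨M, hM⟩ := exists_cover V
  obtain ⟨b₁, b₂, h1, h1c, h2, h2c, hb0, hb1, hb2, hb12⟩ := exists_bumps V
  set N := 2 * dd V + M + 2 with hN
  refine ⟨N, fun φ hφ hinv => ?_⟩
  set r : ℕ → ℝ := fun k => (1 / 2) ^ (k + 1) with hr
  have hr0 : ∀ k, 0 < r k := fun k => by positivity
  have hr1 : ∀ k, 2 * r k ≤ 1 := fun k => by
    have : (1 / 2 : ℝ) ^ k ≤ 1 := pow_le_one₀ (by norm_num) (by norm_num)
    simp only [hr, pow_succ]; linarith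
  have hrl : Filter.Tendsto r Filter.atTop (nhds 0) :=
    (tendsto_pow_atTop_nhds_zero_of_lt_one (by norm_num) (by norm_num)).comp
      (Filter.tendsto_add_atTop_nat 1)
  have := fun k => integral_trunc (μ := μ) hφ hρ (x₀ : V) N h1 h1c h2 h2c (2 * r k)
    (by have := hr0 k; positivity) (hr1 k)
  choose q hqi hq using this
  set m : ℕ → ℝ := fun k => ∫ g, rot (ρ g).symm (sc (x₀ : V) (2 * r k) b₁) x₀ ∂μ with hm
  have hmr : ∀ k, r k ^ M ≤ m k := fun k => mean_lower hρ hμ x₀ hM hb0 hb1 (k + 1) x₀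
  have hm0 : ∀ k, 0 < m k := fun k => (pow_pos (hr0 k) M).trans_le (hmr k)
  have hcl : IsClosed (Submodule.span ℂ (Set.range (Jm μ ρ (x₀ : V) N)) : Set (Test V → ℂ)) := by
    have : FiniteDimensional ℂ (Submodule.span ℂ (Set.range (Jm μ ρ (x₀ : V) N))) :=
      FiniteDimensional.span_of_finite ℂ (Set.finite_range _)
    exact Submodule.closed_of_finiteDimensional _
  refine hcl.mem_of_tendsto (f := fun k : ℕ => ∑ κ, ((m k : ℂ)⁻¹ * q k κ) • Jm μ ρ (x₀ : V) N κ)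
    (b := Filter.atTop) ?_ (Filter.Eventually.of_forall fun k => Submodule.sum_mem _ fun κ _ =>
      Submodule.smul_mem _ _ (Submodule.subset_span ⟨κ, rfl⟩))
  rw [tendsto_pi_nhds]
  intro τ
  set D := N + τ.support.sup Prod.snd
  have hD : ∀ p ∈ τ.support, p.2 ≤ D := fun p hp =>
    (Finset.le_sup (f := Prod.snd) hp).trans (Nat.le_add_left _ _)
  have hND : N ≤ D := Nat.le_add_right _ _
  have hz : ∀ k ∈ Finset.range (N + 1), 0 ≤ k := fun k _ => Nat.zero_le k
  have hI : ∀ k ∈ Finset.Ico (N + 1) (D + 1), N + 1 ≤ k := fun k hk => (Finset.mem_Ico.1 hk).1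
  obtain ⟨A₁, p1, hA₁⟩ := adm_tp hρ (x₀ : V) h1 h1c τ (Finset.range (N + 1)) hz
  obtain ⟨A₂, p2, hA₂⟩ := adm_tp hρ (x₀ : V) h2 h2c τ (Finset.range (N + 1)) hz
  obtain ⟨A₃, p3, hA₃⟩ := adm_tp hρ (x₀ : V) h1 h1c τ (Finset.Ico (N + 1) (D + 1)) hI
  obtain ⟨A₄, p4, hA₄⟩ := adm_tp hρ (x₀ : V) h2 h2c τ (Finset.Ico (N + 1) (D + 1)) hI
  obtain ⟨B, hB, hlip⟩ := Dh_lip hφ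
  set A := A₁ + A₂ + A₃ + A₄ with hA
  have pA : 0 ≤ A := by positivity
  set δ : ℕ → ℝ := fun k => A * (2 * r k) ^ (N + 1) / (2 * r k) ^ 2 with hδ
  -- the truncation error in the integrand
  have herr : ∀ k, δ k * (1 + dd V) ≤ 1 → ∀ g,
      ‖Dh φ (sc (x₀ : V) (2 * r k) b₂ * rot (ρ g) (tf τ)) (sc (x₀ : V) (2 * r k) b₁ * rot (ρ g) (tf τ)) -
        Dh φ (tp x₀ (2 * r k) b₂ τ (ρ g) (Finset.range (N + 1)))
          (tp x₀ (2 * r k) b₁ τ (ρ g) (Finset.range (N + 1)))‖ ≤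
        r k ^ M * (B * A * (1 + A) ^ dd V * 2 ^ (M + 1) * r k) := by
    intro k hk g
    have hε : 0 < 2 * r k := by have := hr0 k; positivity
    rw [tp_eq _ hε.ne' _ _ _ hD hND, tp_eq _ hε.ne' _ _ _ hD hND]
    refine (hlip (A / (2 * r k) ^ 2) (δ k) _ _ _ _ ((hA₂ _ hε (hr1 k) g).mono ?_)
      ((hA₁ _ hε (hr1 k) g).mono ?_) ((hA₄ _ hε (hr1 k) g).mono ?_)
      ((hA₃ _ hε (hr1 k) g).mono ?_) hk).trans (size_estimate hB pA (hr0 k) (hr1 k))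
    · rw [pow_zero, mul_one]; gcongr; linarith
    · rw [pow_zero, mul_one]; gcongr; linarith
    · simp only [hδ]; gcongr; linarith
    · simp only [hδ]; gcongr; linarith
  have hδl : Filter.Tendsto (fun k => δ k * (1 + dd V)) Filter.atTop (nhds 0) := by
    have e : ∀ k, δ k * (1 + dd V) = A * (2 * r k) ^ (2 * dd V + M + 1) * (1 + dd V) := fun k => by
      simp only [hδ, hN]
      have := (hr0 k).ne'
      rw [show 2 * dd V + M + 2 + 1 = 2 * dd V + M + 1 + 2 by ring, pow_add _ _ 2]
      field_simp
    simp only [e]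
    have := (((hrl.const_mul 2).pow (2 * dd V + M + 1)).const_mul A).mul_const (1 + (dd V : ℝ))
    simpa using this
  have hev : ∀ᶠ k in Filter.atTop, δ k * (1 + dd V) ≤ 1 := hδl.eventually_le_const one_pos
  rw [tendsto_iff_norm_sub_tendsto_zero]
  have hlim : Filter.Tendsto (fun k => B * A * (1 + A) ^ dd V * 2 ^ (M + 1) * r k) Filter.atTop (nhds 0) := by
    simpa using hrl.const_mul (B * A * (1 + A) ^ dd V * 2 ^ (M + 1))
  refine squeeze_zero' (Filter.Eventually.of_forall fun k => norm_nonneg _) (hev.mono fun k hk => ?_) hlim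
  have hε : 0 < 2 * r k := by have := hr0 k; positivity
  obtain ⟨C₁, -, hC₁⟩ := adm_sc h1 h1c
  obtain ⟨C₂, -, hC₂⟩ := adm_sc h2 h2c
  obtain ⟨hc, hav⟩ := Dh_average (μ := μ) hφ hinv hρ hμ x₀ (tf_mem τ) (hC₁ x₀ _ hε (hr1 k)).mem
    (hC₂ x₀ _ hε (hr1 k)).mem
    (fun g => by
      rw [tp_eq _ hε.ne' _ _ _ hD hND]
      exact (hA₁ _ hε (hr1 k) g).add (hA₃ _ hε (hr1 k) g))
    (fun g => by
      rw [tp_eq _ hε.ne' _ _ _ hD hND]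
      exact (hA₂ _ hε (hr1 k) g).add (hA₄ _ hε (hr1 k) g))
    (fun u => hb0 _) (fun u => hb2 _) (by ext u; exact hb12 _)
  have hmc : (m k : ℂ) ≠ 0 := by exact_mod_cast (hm0 k).ne'
  have e : (∑ κ, ((m k : ℂ)⁻¹ * q k κ) • Jm μ ρ (x₀ : V) N κ) τ - Dh φ (tf τ) (tf τ) =
      -((m k : ℂ)⁻¹ * ∫ g, (Dh φ (sc (x₀ : V) (2 * r k) b₂ * rot (ρ g) (tf τ))
        (sc (x₀ : V) (2 * r k) b₁ * rot (ρ g) (tf τ)) -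
        Dh φ (tp x₀ (2 * r k) b₂ τ (ρ g) (Finset.range (N + 1)))
          (tp x₀ (2 * r k) b₁ τ (ρ g) (Finset.range (N + 1)))) ∂μ) := by
    rw [integral_sub (integrable_cont hc) (hqi k τ), ← hav, hq k τ, mul_sub, ← mul_assoc,
      inv_mul_cancel₀ hmc, one_mul, neg_sub, Finset.mul_sum, Finset.sum_apply]
    simp only [Pi.smul_apply, smul_eq_mul, mul_assoc]
  rw [e, norm_neg, norm_mul, norm_inv, Complex.norm_real, Real.norm_of_nonneg (hm0 k).le,
    inv_mul_le_iff₀ (hm0 k)]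
  refine (norm_integral_le_of_norm_le_const (Filter.Eventually.of_forall (herr k hk))).trans ?_
  rw [probReal_univ, mul_one]
  have := (hr0 k).le
  exact mul_le_mul_of_nonneg_right (hmr k) (by positivity)

end FiniteDim

/-! ### Density of polynomials and the kernel of the derivative -/

section Kernel
variable {V : Type*} [NormedAddCommGroup V] [InnerProductSpace ℝ V] [FiniteDimensional ℝ V]
variable {φ : ConvexBody V → ℂ}

/-- If the derivative vanishes radially on test functions, the extension is constant on them. -/
lemma hat_tf_const (hφ : MemVal φ) (h : ∀ τ : Test V, Dh φ (tf τ) (tf τ) = 0) (τ : Test V) :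
    hat φ (tf τ) = hat φ 0 := by
  obtain ⟨p, -, hp⟩ := hat_line hφ (W V).zero_mem (tf_mem τ)
  have hd : Polynomial.derivative p = 0 := by
    refine poly_eq_of_large 1 fun t ht => ?_
    have h1 : Dh φ (t • tf τ) (tf τ) = (Polynomial.derivative (p.comp (Polynomial.X + Polynomial.C (t : ℂ)))).eval 0 := by
      refine Dh_eq hφ ((W V).smul_mem _ (tf_mem τ)) (tf_mem τ) fun s => ?_
      rw [Polynomial.eval_comp, Polynomial.eval_add, Polynomial.eval_X, Polynomial.eval_C,
        ← add_smul, add_comm t s]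
      have := hp (s + t)
      rw [zero_add] at this
      rw [this]; push_cast; rfl
    have h2 := h (t • τ)
    have h3 := Dh_add_smul hφ ((W V).smul_mem t (tf_mem τ)) (tf_mem τ) (tf_mem τ) t 0
    rw [zero_smul, add_zero, ← tf_smul, h2, tf_smul, h1] at h3
    have ht0 : (t : ℂ) ≠ 0 := by
      have : t ≠ 0 := by positivity
      exact_mod_cast this
    have h4 : (Polynomial.derivative (p.comp (Polynomial.X + Polynomial.C (t : ℂ)))).eval 0 = 0 := by
      simpa [ht0] using h3.symm
    rw [Polynomial.derivative_comp] at h4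
    simpa using h4
  have hc := Polynomial.eq_C_of_natDegree_eq_zero (Polynomial.derivative_eq_zero.1 hd)
  have h1 := hp 1
  have h0 := hp 0
  rw [hc, Polynomial.eval_C] at h0 h1
  simp only [one_smul, zero_smul, zero_add, add_zero] at h0 h1
  rw [h0, h1]

/-- The space of polynomial test functions. -/
noncomputable def T (V : Type*) [NormedAddCommGroup V] [InnerProductSpace ℝ V]
    [FiniteDimensional ℝ V] : Submodule ℝ (CS V) where
  carrier := Set.range (tf (V := V))
  add_mem' := by rintro _ _ ⟨σ, rfl⟩ ⟨τ, rfl⟩; exact ⟨σ + τ, tf_add σ τ⟩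
  zero_mem' := ⟨0, by simp [tf]⟩
  smul_mem' := by rintro c _ ⟨σ, rfl⟩; exact ⟨c • σ, tf_smul c σ⟩

lemma ridge_pow_mem_T (w : V) (d : ℕ) : ridge w (Polynomial.X ^ d) ∈ T V :=
  ⟨Finsupp.single (w, d) 1, by simp [tf]⟩

/-- The exponential ridge function. -/
noncomputable def ew (w : V) : CS V := ⟨fun u => Real.exp (inner ℝ w (u : V)), by fun_prop⟩

lemma ew_apply (w : V) (u : sphere (0 : V) 1) : ew w u = Real.exp (inner ℝ w (u : V)) := rfl

lemma ew_mem_closure (w : V) : ew w ∈ (T V).topologicalClosure := by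
  set F : ℕ → CS V := fun N => ∑ k ∈ Finset.range N, ((k.factorial : ℝ)⁻¹) • ridge w (Polynomial.X ^ k)
  have hF : ∀ N, F N ∈ T V := fun N =>
    (T V).sum_mem fun k _ => (T V).smul_mem _ (ridge_pow_mem_T w k)
  refine mem_closure_of_tendsto (f := F) (b := Filter.atTop) ?_ (Filter.Eventually.of_forall hF)
  have hs : ∀ t : ℝ, HasSum (fun k : ℕ => (k.factorial : ℝ)⁻¹ * t ^ k) (Real.exp t) := fun t => by
    rw [Real.exp_eq_exp_ℝ]
    simpa using NormedSpace.exp_series_hasSum_exp' (𝕂 := ℝ) t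
  have hlim : Filter.Tendsto (fun N => Real.exp ‖w‖ -
      ∑ k ∈ Finset.range N, (k.factorial : ℝ)⁻¹ * ‖w‖ ^ k) Filter.atTop (nhds 0) := by
    simpa using (hs ‖w‖).tendsto_sum_nat.const_sub (Real.exp ‖w‖)
  rw [tendsto_iff_norm_sub_tendsto_zero]
  refine squeeze_zero (fun _ => norm_nonneg _) (fun N => ?_) hlim
  have tail : ∀ t : ℝ, HasSum (fun k : ℕ => ((k + N).factorial : ℝ)⁻¹ * t ^ (k + N))
      (Real.exp t - ∑ k ∈ Finset.range N, (k.factorial : ℝ)⁻¹ * t ^ k) := fun t =>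
    (hasSum_nat_add_iff' N).2 (hs t)
  have hnn : 0 ≤ Real.exp ‖w‖ - ∑ k ∈ Finset.range N, (k.factorial : ℝ)⁻¹ * ‖w‖ ^ k :=
    (tail ‖w‖).nonneg fun k => by positivity
  rw [ContinuousMap.norm_le _ hnn]
  intro u
  have hu : |inner ℝ w (u : V)| ≤ ‖w‖ := (abs_real_inner_le_norm _ _).trans (by simp)
  have e : (F N - ew w) u = -(Real.exp (inner ℝ w (u : V)) -
      ∑ k ∈ Finset.range N, (k.factorial : ℝ)⁻¹ * (inner ℝ w (u : V)) ^ k) := by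
    simp [F, ContinuousMap.sum_apply, ridge_apply, ew_apply]
  rw [e, norm_neg, ← (tail _).tsum_eq, ← (tail ‖w‖).tsum_eq]
  refine tsum_of_norm_bounded (tail ‖w‖).summable.hasSum fun k => ?_
  rw [norm_mul, norm_inv, norm_pow, RCLike.norm_natCast, Real.norm_eq_abs]
  gcongr

/-- Polynomials are dense in the continuous functions on the sphere. -/
lemma dense_T : (T V).topologicalClosure = ⊤ := by
  let S : Submonoid (CS V) :=
    { carrier := Set.range (ew (V := V))
      mul_mem' := by
        rintro _ _ ⟨w, rfl⟩ ⟨w', rfl⟩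
        exact ⟨w + w', by ext u; simp [ew_apply, inner_add_left, Real.exp_add]⟩
      one_mem' := ⟨0, by ext u; simp [ew_apply]⟩ }
  have hA : Subalgebra.toSubmodule (Algebra.adjoin ℝ (S : Set (CS V))) = Submodule.span ℝ (S : Set (CS V)) := by
    rw [Algebra.adjoin_eq_span, Submonoid.closure_eq]
  have hle : Submodule.span ℝ (S : Set (CS V)) ≤ (T V).topologicalClosure := by
    rw [Submodule.span_le]
    rintro _ ⟨w, rfl⟩
    exact ew_mem_closure w
  have htop := ContinuousMap.subalgebra_topologicalClosure_eq_top_of_separatesPoints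
    (Algebra.adjoin ℝ (S : Set (CS V))) (by
      intro x y hxy
      refine ⟨_, ⟨ew (x : V), Algebra.subset_adjoin ⟨_, rfl⟩, rfl⟩, ?_⟩
      intro h
      change ew (x : V) x = ew (x : V) y at h
      rw [ew_apply, ew_apply, Real.exp_eq_exp, real_inner_self_eq_norm_sq, norm_eq_of_mem_sphere,
        one_pow, eq_comm] at h
      exact hxy (Subtype.ext ((inner_eq_one_iff_of_norm_eq_one (by simp) (by simp)).1 h)))
  rw [eq_top_iff]
  intro F _
  have hF : F ∈ closure ((Algebra.adjoin ℝ (S : Set (CS V)) : Subalgebra ℝ (CS V)) : Set (CS V)) := by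
    have : F ∈ (Algebra.adjoin ℝ (S : Set (CS V))).topologicalClosure := by rw [htop]; trivial
    exact this
  refine closure_minimal (fun f hf => ?_) (T V).isClosed_topologicalClosure hF
  refine hle ?_
  rw [← hA]; exact hf

/-- Ridge powers of a fixed degree span a finite-dimensional, hence closed, space. -/
lemma integral_ridge_mem {Γ : Type*} [TopologicalSpace Γ] [CompactSpace Γ] [MeasurableSpace Γ]
    [BorelSpace Γ] {μ : Measure Γ} [IsProbabilityMeasure μ] (d : ℕ) {f : Γ → CS V} (hf : Continuous f)
    (h : ∀ g, ∃ (c : ℝ) (w : V), f g = c • ridge w (Polynomial.X ^ d)) : ∫ g, f g ∂μ ∈ T V := by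
  let r : (Fin d → Fin (Module.finrank ℝ V)) → CS V := fun s => ⟨fun u => mono s u, by fun_prop⟩
  set U := Submodule.span ℝ (Set.range fun w : V => ridge w (Polynomial.X ^ d)) with hU
  have hUle : U ≤ Submodule.span ℝ (Set.range r) := by
    rw [hU, Submodule.span_le]
    rintro _ ⟨w, rfl⟩
    have : ridge w (Polynomial.X ^ d) = ∑ s, mono s w • r s := by
      ext u; simp [ridge_apply, inner_pow, ContinuousMap.sum_apply, r]
    dsimp only
    rw [this]
    exact Submodule.sum_mem _ fun s _ => Submodule.smul_mem _ _ (Submodule.subset_span ⟨s, rfl⟩)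
  have : FiniteDimensional ℝ (Submodule.span ℝ (Set.range r)) :=
    FiniteDimensional.span_of_finite ℝ (Set.finite_range _)
  have : FiniteDimensional ℝ U := Submodule.finiteDimensional_of_le hUle
  have hcl : IsClosed (U : Set (CS V)) := Submodule.closed_of_finiteDimensional _
  have hUT : U ≤ T V := by
    rw [hU, Submodule.span_le]
    rintro _ ⟨w, rfl⟩
    exact ridge_pow_mem_T w d
  refine hUT (U.convex.integral_mem hcl (Filter.Eventually.of_forall fun g => ?_) (integrable_cont hf))
  obtain ⟨c, w, e⟩ := h g
  rw [e]
  exact U.smul_mem _ (Submodule.subset_span ⟨w, rfl⟩)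

end Kernel

/-! ### Convolution with representative functions on the group -/

section Conv
variable {V : Type*} [NormedAddCommGroup V] [InnerProductSpace ℝ V] [FiniteDimensional ℝ V]
variable {Γ : Type*} [TopologicalSpace Γ] [CompactSpace Γ] [MeasurableSpace Γ] [BorelSpace Γ]
  [Group Γ] [IsTopologicalGroup Γ]
  {μ : Measure Γ} [IsProbabilityMeasure μ] [μ.IsMulLeftInvariant] {ρ : Γ →* V ≃ₗᵢ[ℝ] V}

lemma rot_add (g : V ≃ₗᵢ[ℝ] V) (F H : CS V) : rot g (F + H) = rot g F + rot g H := rfl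

lemma rot_csmul (g : V ≃ₗᵢ[ℝ] V) (c : ℝ) (F : CS V) : rot g (c • F) = c • rot g F := rfl

lemma norm_rot_le (g : V ≃ₗᵢ[ℝ] V) (F : CS V) : ‖rot g F‖ ≤ ‖F‖ :=
  (ContinuousMap.norm_le _ (norm_nonneg _)).2 fun u => by
    rw [rot_apply]; exact F.norm_coe_le_norm _

lemma rot_ridge (g : V ≃ₗᵢ[ℝ] V) (w : V) (P : Polynomial ℝ) :
    rot g.symm (ridge w P) = ridge (g w) P := by
  ext u
  rw [rot_apply, ridge_apply, ridge_apply]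
  congr 1
  rw [← g.inner_map_map]; simp

lemma mul_symm_apply (k g : Γ) (x : V) : (ρ (k * g)).symm (ρ k x) = (ρ g).symm x := by
  rw [LinearIsometryEquiv.symm_apply_eq, map_mul]; simp

/-- Transitivity makes the average of a rotated function independent of the point. -/
lemma average_const (htr : ∀ x y : V, ‖x‖ = 1 → ‖y‖ = 1 → ∃ k, ρ k x = y) (f : CS V)
    (x y : sphere (0 : V) 1) :
    ∫ g, rot (ρ g).symm f x ∂μ = ∫ g, rot (ρ g).symm f y ∂μ := by
  obtain ⟨k, hk⟩ := htr x y (by simp) (by simp)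
  rw [← integral_mul_left_eq_self (fun g => rot (ρ g).symm f y) k]
  refine integral_congr_ae (Filter.Eventually.of_forall fun g => ?_)
  simp only [rot_apply]
  congr 2
  rw [← hk, mul_symm_apply]

/-- Convolution with the weight `ψ` on the group, as an operator on functions on the sphere. -/
noncomputable def R (μ : Measure Γ) (ρ : Γ →* V ≃ₗᵢ[ℝ] V) (ψ : Γ → ℝ) (h : CS V) : CS V :=
  ∫ g, ψ g • rot (ρ g).symm h ∂μ

lemma continuous_R_integrand (hρ : Continuous fun p : Γ × V => (ρ p.1).symm p.2) {ψ : Γ → ℝ}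
    (hψ : Continuous ψ) (h : CS V) : Continuous fun g => ψ g • rot (ρ g).symm h :=
  hψ.smul (continuous_rot hρ h)

lemma R_add (hρ : Continuous fun p : Γ × V => (ρ p.1).symm p.2) {ψ : Γ → ℝ}
    (hψ : Continuous ψ) (h h' : CS V) : R μ ρ ψ (h + h') = R μ ρ ψ h + R μ ρ ψ h' := by
  rw [R, R, R, ← integral_add (integrable_cont (continuous_R_integrand hρ hψ h))
    (integrable_cont (continuous_R_integrand hρ hψ h'))]
  simp only [rot_add, smul_add]

lemma R_smul {ψ : Γ → ℝ} (c : ℝ) (h : CS V) : R μ ρ ψ (c • h) = c • R μ ρ ψ h := by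
  rw [R, R, ← integral_smul]
  simp only [rot_csmul, smul_comm c]

lemma R_norm {ψ : Γ → ℝ}
    (hψ : Continuous ψ) (h : CS V) : ‖R μ ρ ψ h‖ ≤ (∫ g, |ψ g| ∂μ) * ‖h‖ := by
  rw [R, ← integral_mul_const]
  refine norm_integral_le_of_norm_le (integrable_cont (by fun_prop))
    (Filter.Eventually.of_forall fun g => ?_)
  rw [norm_smul, Real.norm_eq_abs]
  exact mul_le_mul_of_nonneg_left (norm_rot_le _ _) (abs_nonneg _)

/-- `R` as a continuous linear map. -/
noncomputable def Rl (μ : Measure Γ) [IsProbabilityMeasure μ] [μ.IsMulLeftInvariant] (ρ : Γ →* V ≃ₗᵢ[ℝ] V)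
    (hρ : Continuous fun p : Γ × V => (ρ p.1).symm p.2) {ψ : Γ → ℝ}
    (hψ : Continuous ψ) : CS V →L[ℝ] CS V :=
  LinearMap.mkContinuous ⟨⟨R μ ρ ψ, R_add hρ hψ⟩, R_smul⟩ _ (R_norm hψ)

lemma R_apply (hρ : Continuous fun p : Γ × V => (ρ p.1).symm p.2) {ψ : Γ → ℝ}
    (hψ : Continuous ψ) (h : CS V) (x : sphere (0 : V) 1) :
    R μ ρ ψ h x = ∫ g, ψ g * rot (ρ g).symm h x ∂μ := by
  rw [R, ContinuousMap.integral_apply (integrable_cont (continuous_R_integrand hρ hψ h))]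
  rfl

/-- A representative function: `(k, g) ↦ ψ (k * g)` is a finite sum of products of a function of `k`
and a continuous function of `g`. -/
def Rep (ψ : Γ → ℝ) : Prop := ∃ (ι : Type) (_ : Fintype ι) (A B : ι → Γ → ℝ),
  (∀ s, Continuous (B s)) ∧ ∀ k g, ψ (k * g) = ∑ s, A s k * B s g

lemma Rep.pow {ψ : Γ → ℝ} (h : Rep ψ) (j : ℕ) : Rep (fun g => ψ g ^ j) := by
  obtain ⟨ι, _, A, B, hB, e⟩ := h
  classical
  refine ⟨Fin j → ι, inferInstance, fun s k => ∏ i, A (s i) k, fun s g => ∏ i, B (s i) g,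
    fun s => continuous_finsetProd _ fun i _ => hB _, fun k g => ?_⟩
  simp only [e, Fintype.sum_pow, Finset.prod_mul_distrib]

lemma R_apply_orbit (hρ : Continuous fun p : Γ × V => (ρ p.1).symm p.2) {ψ : Γ → ℝ}
    (hψ : Continuous ψ) (h : CS V) (x₀ : sphere (0 : V) 1) (k : Γ) :
    R μ ρ ψ h ⟨ρ k x₀, by simp⟩ = ∫ g, ψ (k * g) * rot (ρ g).symm h x₀ ∂μ := by
  rw [R_apply hρ hψ, ← integral_mul_left_eq_self _ k]
  refine integral_congr_ae (Filter.Eventually.of_forall fun g => ?_)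
  simp only [rot_apply]
  congr 3
  rw [mul_symm_apply]

/-- Convolution with a representative function has finite-dimensional range. -/
lemma R_range (hρ : Continuous fun p : Γ × V => (ρ p.1).symm p.2) {ψ : Γ → ℝ}
    (hψ : Continuous ψ) (hrep : Rep ψ) (x₀ : sphere (0 : V) 1)
    (htr : ∀ x y : V, ‖x‖ = 1 → ‖y‖ = 1 → ∃ k, ρ k x = y) :
    ∃ U : Submodule ℝ (CS V), FiniteDimensional ℝ U ∧ ∀ h, R μ ρ ψ h ∈ U := by
  obtain ⟨ι, _, A, B, hB, e⟩ := hrep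
  let ev : CS V →ₗ[ℝ] (Γ → ℝ) :=
    { toFun := fun F k => F ⟨ρ k x₀, by simp⟩
      map_add' := fun _ _ => rfl
      map_smul' := fun _ _ => rfl }
  have hev : Function.Injective ev := fun F H hFH => by
    ext x
    obtain ⟨k, hk⟩ := htr x₀ x (by simp) (by simp)
    have := congrFun hFH k
    have hx : (⟨ρ k x₀, by simp⟩ : sphere (0 : V) 1) = x := Subtype.ext hk
    change F ⟨ρ k x₀, _⟩ = H ⟨ρ k x₀, _⟩ at this
    rwa [hx] at this
  have hfin : FiniteDimensional ℝ (Submodule.span ℝ (Set.range A)) :=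
    FiniteDimensional.span_of_finite ℝ (Set.finite_range _)
  refine ⟨(Submodule.span ℝ (Set.range A)).comap ev, ?_, fun h => ?_⟩
  · refine FiniteDimensional.of_injective (ev.restrict (p := (Submodule.span ℝ (Set.range A)).comap ev)
      (q := Submodule.span ℝ (Set.range A)) fun x hx => hx) fun x y hxy => ?_
    exact Subtype.ext (hev (congrArg Subtype.val hxy))
  · rw [Submodule.mem_comap]
    have : ev (R μ ρ ψ h) = ∑ s, (∫ g, B s g * rot (ρ g).symm h x₀ ∂μ) • A s := by
      funext k
      change R μ ρ ψ h ⟨ρ k x₀, _⟩ = _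
      rw [R_apply_orbit hρ hψ]
      simp only [e, Finset.sum_mul, Finset.sum_apply, Pi.smul_apply, smul_eq_mul]
      rw [integral_finsetSum]
      · refine Finset.sum_congr rfl fun s _ => ?_
        rw [mul_comm, ← integral_const_mul]
        simp only [mul_assoc]
      · intro s _
        exact integrable_cont ((continuous_const.mul (hB s)).mul ((continuous_rot hρ h).eval_const x₀))
    rw [this]
    exact Submodule.sum_mem _ fun s _ => Submodule.smul_mem _ _ (Submodule.subset_span ⟨s, rfl⟩)

lemma R_mem_of_T (hρ : Continuous fun p : Γ × V => (ρ p.1).symm p.2) {ψ : Γ → ℝ}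
    (hψ : Continuous ψ) {h : CS V} (hh : h ∈ T V) : Rl μ ρ hρ hψ h ∈ T V := by
  obtain ⟨τ, rfl⟩ := hh
  rw [show tf τ = τ.sum fun p c => c • ridge p.1 (Polynomial.X ^ p.2) from rfl, Finsupp.sum, map_sum]
  refine Submodule.sum_mem _ fun p _ => ?_
  rw [map_smul]
  refine Submodule.smul_mem _ _ ?_
  refine integral_ridge_mem p.2 (continuous_R_integrand hρ hψ _) fun g => ⟨ψ g, ρ g p.1, ?_⟩
  rw [rot_ridge]

/-- Convolution with a representative function produces polynomials: its range is
finite-dimensional and polynomials are dense. -/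
lemma R_mem_T (hρ : Continuous fun p : Γ × V => (ρ p.1).symm p.2) {ψ : Γ → ℝ}
    (hψ : Continuous ψ) (hrep : Rep ψ) (x₀ : sphere (0 : V) 1)
    (htr : ∀ x y : V, ‖x‖ = 1 → ‖y‖ = 1 → ∃ k, ρ k x = y) (h : CS V) : R μ ρ ψ h ∈ T V := by
  obtain ⟨U, hU, hR⟩ := R_range (μ := μ) hρ hψ hrep x₀ htr
  have : FiniteDimensional ℝ (U ⊓ T V : Submodule ℝ (CS V)) :=
    Submodule.finiteDimensional_of_le inf_le_left
  have hcl : IsClosed ((U ⊓ T V : Submodule ℝ (CS V)) : Set (CS V)) :=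
    Submodule.closed_of_finiteDimensional _
  have hc : IsClosed (Rl μ ρ hρ hψ ⁻¹' ((U ⊓ T V : Submodule ℝ (CS V)) : Set (CS V))) :=
    hcl.preimage (Rl μ ρ hρ hψ).continuous
  have hh : h ∈ closure ((T V : Submodule ℝ (CS V)) : Set (CS V)) := by
    have : h ∈ (T V).topologicalClosure := by rw [dense_T]; trivial
    exact this
  have hsub : ((T V : Submodule ℝ (CS V)) : Set (CS V)) ⊆
      Rl μ ρ hρ hψ ⁻¹' ((U ⊓ T V : Submodule ℝ (CS V)) : Set (CS V)) :=
    fun f hf => ⟨hR f, R_mem_of_T hρ hψ hf⟩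
  exact (closure_minimal hsub hc hh).2

/-- The function `g ↦ dim V + tr (ρ g)`. It is nonnegative and representative, and when `ρ` is
injective it has its unique maximum at the identity. -/
noncomputable def th (ρ : Γ →* V ≃ₗᵢ[ℝ] V) (g : Γ) : ℝ :=
  ∑ i, (1 + inner ℝ (stdOrthonormalBasis ℝ V i) (ρ g (stdOrthonormalBasis ℝ V i)))

lemma continuous_act (hρ : Continuous fun p : Γ × V => (ρ p.1).symm p.2) (v : V) :
    Continuous fun g => ρ g v := by
  have : (fun g => ρ g v) = fun g => (ρ g⁻¹).symm v := by
    funext g; rw [map_inv]; rfl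
  rw [this]
  exact hρ.comp (f := fun g : Γ => (g⁻¹, v)) (by fun_prop)

lemma continuous_th (hρ : Continuous fun p : Γ × V => (ρ p.1).symm p.2) : Continuous (th ρ) := by
  refine continuous_finsetSum _ fun i _ => continuous_const.add ?_
  exact continuous_const.inner (continuous_act hρ _)

lemma th_rep (hρ : Continuous fun p : Γ × V => (ρ p.1).symm p.2) : Rep (th ρ) := by
  let e := stdOrthonormalBasis ℝ V
  let n := Module.finrank ℝ V
  refine ⟨Option (Fin n × Fin n), inferInstance,
    fun s k => s.elim 1 fun p => inner ℝ ((ρ k).symm (e p.1)) (e p.2),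
    fun s g => s.elim n fun p => inner ℝ (e p.2) (ρ g (e p.1)), ?_, fun k g => ?_⟩
  · rintro (_ | p)
    · exact continuous_const
    · exact continuous_const.inner (continuous_act hρ _)
  · rw [Fintype.sum_option, Fintype.sum_prod_type]
    simp only [Option.elim]
    rw [th, Finset.sum_add_distrib]
    simp only [Finset.sum_const, Finset.card_univ, Fintype.card_fin, nsmul_eq_mul, mul_one, one_mul]
    congr 1
    refine Finset.sum_congr rfl fun i _ => ?_
    rw [e.sum_inner_mul_inner, map_mul, ← (ρ k).inner_map_map ((ρ k).symm (e i))]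
    simp [e]

lemma inner_le_one' (ρ : Γ →* V ≃ₗᵢ[ℝ] V) (g : Γ) (i) :
    |inner ℝ (stdOrthonormalBasis ℝ V i) (ρ g (stdOrthonormalBasis ℝ V i))| ≤ 1 :=
  (abs_real_inner_le_norm _ _).trans (by simp)

lemma th_nonneg (ρ : Γ →* V ≃ₗᵢ[ℝ] V) (g : Γ) : 0 ≤ th ρ g :=
  Finset.sum_nonneg fun i _ => by linarith [(abs_le.1 (inner_le_one' ρ g i)).1]

lemma th_one (ρ : Γ →* V ≃ₗᵢ[ℝ] V) : th ρ 1 = 2 * Module.finrank ℝ V := by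
  simp [th]; ring

lemma th_lt (hinj : Function.Injective ρ) {g : Γ} (hg : g ≠ 1) : th ρ g < th ρ 1 := by
  by_contra hcon
  apply hg
  apply hinj
  rw [map_one]
  have hle : ∀ i ∈ Finset.univ, (1 + inner ℝ (stdOrthonormalBasis ℝ V i)
      (ρ g (stdOrthonormalBasis ℝ V i))) ≤ (2 : ℝ) := fun i _ => by
    linarith [(abs_le.1 (inner_le_one' ρ g i)).2]
  have hsum : th ρ g = ∑ i : Fin (Module.finrank ℝ V), (2 : ℝ) := by
    refine le_antisymm (Finset.sum_le_sum hle) ?_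
    rw [th_one] at hcon
    simpa [mul_comm] using hcon
  have heq := (Finset.sum_eq_sum_iff_of_le hle).1 hsum
  have hfix : ∀ i, ρ g (stdOrthonormalBasis ℝ V i) = stdOrthonormalBasis ℝ V i := fun i => by
    refine ((inner_eq_one_iff_of_norm_eq_one (𝕜 := ℝ) (by simp) (by simp)).1 ?_).symm
    linarith [heq i (Finset.mem_univ _)]
  have : ((ρ g).toLinearEquiv : V →ₗ[ℝ] V) = LinearMap.id :=
    (stdOrthonormalBasis ℝ V).toBasis.ext fun i => by simpa using hfix i
  ext x
  exact LinearMap.congr_fun this x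

/-- Every support function is a limit of polynomial support functions: the convolutions with the
normalized powers of `th`, which concentrate at the identity. -/
lemma exists_approx [TopologicalSpace.MetrizableSpace Γ] [μ.IsOpenPosMeasure]
    (hρ : Continuous fun p : Γ × V => (ρ p.1).symm p.2) (hinj : Function.Injective ρ)
    (x₀ : sphere (0 : V) 1)
    (htr : ∀ x y : V, ‖x‖ = 1 → ‖y‖ = 1 → ∃ k, ρ k x = y) (K : ConvexBody V) :
    ∃ F : ℕ → CS V, (∀ j, F j ∈ T V) ∧ (∀ j, Cvx (F j)) ∧
      Filter.Tendsto F Filter.atTop (nhds (hs K)) := by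
  have hth := continuous_th hρ
  refine ⟨fun j => (∫ g, th ρ g ^ j ∂μ)⁻¹ • R μ ρ (fun g => th ρ g ^ j) (hs K), fun j => ?_, fun j => ?_, ?_⟩
  · exact (T V).smul_mem _ (R_mem_T hρ (hth.pow j) ((th_rep hρ).pow j) x₀ htr _)
  · refine Cvx.smul ?_ (inv_nonneg.2 (integral_nonneg fun g => pow_nonneg (th_nonneg ρ g) j))
    have hc : Convex ℝ {F : CS V | Cvx F} := fun F hF H hH a b ha hb _ =>
      (Cvx.smul hF ha).add (Cvx.smul hH hb)
    refine hc.integral_mem isClosed_cvx (Filter.Eventually.of_forall fun g => ?_)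
      (integrable_cont (continuous_R_integrand hρ (hth.pow j) _))
    exact ((cvx_hs K).rot _).smul (pow_nonneg (th_nonneg ρ g) j)
  · have hpos : 0 < th ρ 1 := by
      rw [th_one]
      have : Nontrivial V := ⟨⟨(x₀ : V), 0, sph_ne x₀⟩⟩
      have := Module.finrank_pos (R := ℝ) (M := V)
      positivity
    have := tendsto_setIntegral_pow_smul_of_unique_maximum_of_isCompact_of_continuousOn
      (μ := μ) (s := Set.univ) (c := th ρ) (x₀ := (1 : Γ))
      (g := fun g => rot (ρ g).symm (hs K)) isCompact_univ hth.continuousOn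
      (fun y _ hy => th_lt hinj hy) (fun y _ => th_nonneg ρ y) hpos (by simp)
      (continuous_rot hρ _).continuousOn
    simp only [Measure.restrict_univ] at this
    have e : rot (ρ (1 : Γ)).symm (hs K) = hs K := by
      ext u; rw [map_one]; rfl
    rwa [e] at this

end Conv

/-! ### Finite-dimensionality of the space of invariant valuations -/

section FiniteDim
variable {V : Type*} [NormedAddCommGroup V] [InnerProductSpace ℝ V] [FiniteDimensional ℝ V]

lemma MemVal.add' {φ ψ : ConvexBody V → ℂ} (hφ : MemVal φ) (hψ : MemVal ψ) : MemVal (φ + ψ) := by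
  refine ⟨fun A B C D h h' => ?_, fun K x => ?_, hφ.2.2.add hψ.2.2⟩
  · simp only [Pi.add_apply, hφ.1 A B C D h h', hψ.1 A B C D h h']; ring
  · simp only [Pi.add_apply, hφ.2.1 K x, hψ.2.1 K x]

lemma MemVal.smul' {φ : ConvexBody V → ℂ} (hφ : MemVal φ) (c : ℂ) : MemVal (c • φ) := by
  refine ⟨fun A B C D h h' => ?_, fun K x => ?_, hφ.2.2.const_smul c⟩
  · simp only [Pi.smul_apply, smul_eq_mul, hφ.1 A B C D h h']; ring
  · simp only [Pi.smul_apply, hφ.2.1 K x]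

lemma memVal_zero : MemVal (0 : ConvexBody V → ℂ) :=
  ⟨fun A B C D h h' => by simp, fun K x => rfl, continuous_const⟩

lemma hat_add {φ ψ : ConvexBody V → ℂ} (hφ : MemVal φ) (hψ : MemVal ψ) {F : CS V} (hF : F ∈ W V) :
    hat (φ + ψ) F = hat φ F + hat ψ F := by
  obtain ⟨C, hC⟩ := hF
  rw [hat_eq_sum hφ hC.1, hat_eq_sum hψ hC.1, hat_eq_sum (MemVal.add' hφ hψ) hC.1,
    ← Finset.sum_add_distrib]
  refine Finset.sum_congr rfl fun j _ => ?_
  obtain ⟨K, hK⟩ := exists_hs (hC.1.add_const (d := C + j) (by simp))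
  rw [← hK, Phi_hs, Phi_hs, Phi_hs, Pi.add_apply]; ring

lemma hat_smul {φ : ConvexBody V → ℂ} (hφ : MemVal φ) (c : ℂ) {F : CS V} (hF : F ∈ W V) :
    hat (c • φ) F = c * hat φ F := by
  obtain ⟨C, hC⟩ := hF
  rw [hat_eq_sum hφ hC.1, hat_eq_sum (MemVal.smul' hφ c) hC.1, Finset.mul_sum]
  refine Finset.sum_congr rfl fun j _ => ?_
  obtain ⟨K, hK⟩ := exists_hs (hC.1.add_const (d := C + j) (by simp))
  rw [← hK, Phi_hs, Phi_hs, Pi.smul_apply, smul_eq_mul]; ring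

lemma Dh_add' {φ ψ : ConvexBody V → ℂ} (hφ : MemVal φ) (hψ : MemVal ψ) {F H : CS V} (hF : F ∈ W V)
    (hH : H ∈ W V) : Dh (φ + ψ) F H = Dh φ F H + Dh ψ F H := by
  rw [Dh, Dh, Dh, ← Finset.sum_add_distrib]
  refine Finset.sum_congr rfl fun j _ => ?_
  rw [hat_add hφ hψ ((W V).add_mem hF ((W V).smul_mem _ hH)), add_mul]

lemma Dh_smul' {φ : ConvexBody V → ℂ} (hφ : MemVal φ) (c : ℂ) {F H : CS V} (hF : F ∈ W V)
    (hH : H ∈ W V) : Dh (c • φ) F H = c * Dh φ F H := by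
  rw [Dh, Dh, Finset.mul_sum]
  refine Finset.sum_congr rfl fun j _ => ?_
  rw [hat_smul hφ c ((W V).add_mem hF ((W V).smul_mem _ hH)), mul_assoc]

/-- The space of continuous translation-invariant valuations invariant under a family of
isometries. -/
def ValG {Γ : Type*} (ρ : Γ → V ≃ₗᵢ[ℝ] V) : Submodule ℂ (ConvexBody V → ℂ) where
  carrier := {φ | MemVal φ ∧ ∀ g K, φ (ConvexBody.mapIsom (ρ g) K) = φ K}
  add_mem' := fun ⟨h, h'⟩ ⟨k, k'⟩ => ⟨MemVal.add' h k, fun g K => by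
    simp only [Pi.add_apply, h' g K, k' g K]⟩
  zero_mem' := ⟨memVal_zero, fun _ _ => rfl⟩
  smul_mem' := fun c _ ⟨h, h'⟩ => ⟨MemVal.smul' h c, fun g K => by
    simp only [Pi.smul_apply, h' g K]⟩

variable {Γ : Type*} [TopologicalSpace Γ] [CompactSpace Γ] [MeasurableSpace Γ] [BorelSpace Γ]
  [Group Γ] [IsTopologicalGroup Γ] [TopologicalSpace.MetrizableSpace Γ]

/-- The space of invariant valuations is finite-dimensional. The map sending `φ` to the radial
derivative of its extension on polynomials, together with the value at a point, is injective, and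
takes values in a finite-dimensional space. -/
theorem finite_ValG (μ : Measure Γ) [IsProbabilityMeasure μ] [μ.IsMulLeftInvariant]
    [μ.IsOpenPosMeasure] {ρ : Γ →* V ≃ₗᵢ[ℝ] V}
    (hρ : Continuous fun p : Γ × V => (ρ p.1).symm p.2) (hinj : Function.Injective ρ)
    (x₀ : sphere (0 : V) 1)
    (htr : ∀ x y : V, ‖x‖ = 1 → ‖y‖ = 1 → ∃ k, ρ k x = y) :
    FiniteDimensional ℂ (ValG ρ) := by
  obtain ⟨N, hN⟩ := finite_span (μ := μ) (ρ := ρ) hρ (average_const htr) x₀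
  set S := Submodule.span ℂ (Set.range (Jm μ ρ (x₀ : V) N))
  have : FiniteDimensional ℂ S := FiniteDimensional.span_of_finite ℂ (Set.finite_range _)
  let L : ValG ρ →ₗ[ℂ] S × ℂ :=
    { toFun := fun φ => (⟨fun τ => Dh φ.1 (tf τ) (tf τ), hN φ.1 φ.2.1 φ.2.2⟩, hat φ.1 0)
      map_add' := fun φ ψ => Prod.ext
        (Subtype.ext (funext fun τ => Dh_add' φ.2.1 ψ.2.1 (tf_mem τ) (tf_mem τ)))
        (hat_add φ.2.1 ψ.2.1 (W V).zero_mem)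
      map_smul' := fun c φ => Prod.ext
        (Subtype.ext (funext fun τ => Dh_smul' φ.2.1 c (tf_mem τ) (tf_mem τ)))
        (hat_smul φ.2.1 c (W V).zero_mem) }
  refine FiniteDimensional.of_injective L ((injective_iff_map_eq_zero L).2 fun φ hφ => ?_)
  have h1 : ∀ τ, Dh φ.1 (tf τ) (tf τ) = 0 := fun τ =>
    congrFun (congrArg Subtype.val (congrArg Prod.fst hφ)) τ
  have h2 : hat φ.1 0 = 0 := congrArg Prod.snd hφ
  refine Subtype.ext (funext fun K => ?_)
  obtain ⟨F, hT, hc, hlim⟩ := exists_approx (μ := μ) hρ hinj x₀ htr K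
  have h3 : Filter.Tendsto (fun j => Phi φ.1 (F j)) Filter.atTop (nhds (Phi φ.1 (hs K))) := by
    have := Phi_continuousOn φ.2.1.2.2 (hs K) (cvx_hs K)
    exact this.tendsto.comp (tendsto_nhdsWithin_iff.2 ⟨hlim, Filter.Eventually.of_forall hc⟩)
  have h4 : ∀ j, Phi φ.1 (F j) = 0 := fun j => by
    obtain ⟨τ, hτ⟩ := hT j
    rw [← hat_of_cvx φ.2.1 (hc j), ← hτ, hat_tf_const φ.2.1 h1, h2]
  simp only [h4, Phi_hs] at h3
  exact tendsto_nhds_unique h3 tendsto_const_nhds |>.trans rfl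

end FiniteDim

/-! ### Smoothing kernels on the space of endomorphisms -/

section Kernels
variable {V : Type*} [NormedAddCommGroup V] [InnerProductSpace ℝ V] [FiniteDimensional ℝ V]

lemma cov {M : Type*} [NormedAddCommGroup M] [NormedSpace ℝ M] [FiniteDimensional ℝ M]
    [MeasurableSpace M] [BorelSpace M] (ν : Measure M) [ν.IsAddHaarMeasure] (L : M ≃L[ℝ] M) :
    ∃ c : ℝ, 0 < c ∧ ∀ {X : Type} [NormedAddCommGroup X] [NormedSpace ℝ X] (f : M → X),
      ∫ A, f (L A) ∂ν = c • ∫ A, f A ∂ν := by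
  have hdet : LinearMap.det ((L : M →L[ℝ] M) : M →ₗ[ℝ] M) ≠ 0 :=
    (LinearEquiv.isUnit_det' L.toLinearEquiv).ne_zero
  refine ⟨|(LinearMap.det ((L : M →L[ℝ] M) : M →ₗ[ℝ] M))⁻¹|, abs_pos.2 (inv_ne_zero hdet), fun {X} _ _ f => ?_⟩
  have h := Measure.map_linearMap_addHaar_eq_smul_addHaar ν hdet
  have h2 := L.toHomeomorph.measurableEmbedding.integral_map (μ := ν) f
  change ∫ y, f y ∂(Measure.map ((L : M →L[ℝ] M) : M →ₗ[ℝ] M) ν) = ∫ x, f (L x) ∂ν at h2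
  rw [← h2, h, integral_smul_measure, ENNReal.toReal_ofReal (abs_nonneg _)]

/-- The squared Hilbert–Schmidt distance to the identity. -/
noncomputable def qd (A : V →L[ℝ] V) : ℝ :=
  ∑ i, ‖A (stdOrthonormalBasis ℝ V i) - stdOrthonormalBasis ℝ V i‖ ^ 2

lemma contDiff_qd : ContDiff ℝ ∞ (qd (V := V)) := by
  unfold qd
  refine ContDiff.sum fun i _ => ContDiff.norm_sq ℝ ?_
  exact ((ContinuousLinearMap.apply ℝ V (stdOrthonormalBasis ℝ V i)).contDiff).sub contDiff_const

lemma qd_nonneg (A : V →L[ℝ] V) : 0 ≤ qd A := Finset.sum_nonneg fun i _ => by positivity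

lemma norm_sub_one_le (A : V →L[ℝ] V) : ‖A - 1‖ ^ 2 ≤ qd A := by
  have h : ‖A - 1‖ ≤ √(qd A) := by
    refine ContinuousLinearMap.opNorm_le_bound _ (Real.sqrt_nonneg _) fun x => ?_
    set e := stdOrthonormalBasis ℝ V
    have hx : (A - 1) x = ∑ i, inner ℝ (e i) x • (A (e i) - e i) := by
      conv_lhs => rw [← e.sum_repr' x]
      simp
    rw [hx]
    refine (norm_sum_le _ _).trans ?_
    simp only [norm_smul]
    have h1 := Finset.sum_mul_sq_le_sq_mul_sq Finset.univ (fun i => ‖inner ℝ (e i) x‖)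
      (fun i => ‖A (e i) - e i‖)
    have h2 : ∑ i, ‖inner ℝ (e i) x‖ ^ 2 = ‖x‖ ^ 2 := e.sum_sq_norm_inner_right x
    rw [h2] at h1
    refine (Real.le_sqrt_of_sq_le h1).trans ?_
    rw [Real.sqrt_mul (by positivity), Real.sqrt_sq (norm_nonneg _), mul_comm]
    rfl
  calc ‖A - 1‖ ^ 2 ≤ √(qd A) ^ 2 := by gcongr
    _ = qd A := Real.sq_sqrt (qd_nonneg A)

/-- A linear isometry as a continuous linear map. -/
noncomputable def cl (k : V ≃ₗᵢ[ℝ] V) : V →L[ℝ] V := (k.toContinuousLinearEquiv : V →L[ℝ] V)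

@[simp] lemma cl_apply (k : V ≃ₗᵢ[ℝ] V) (x : V) : cl k x = k x := rfl

lemma qd_conj (k : V ≃ₗᵢ[ℝ] V) (A : V →L[ℝ] V) : qd (cl k * A * cl k.symm) = qd A := by
  have hq : ∀ (B : V →L[ℝ] V) (b : OrthonormalBasis (Fin (Module.finrank ℝ V)) ℝ V),
      ∑ i, ‖B (b i) - b i‖ ^ 2 = LinearMap.trace ℝ V
        ((ContinuousLinearMap.adjoint (B - 1) * (B - 1) : V →L[ℝ] V) : V →ₗ[ℝ] V) := fun B b => by
    rw [LinearMap.trace_eq_sum_inner _ b]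
    refine Finset.sum_congr rfl fun i _ => ?_
    have e : ((ContinuousLinearMap.adjoint (B - 1) * (B - 1) : V →L[ℝ] V) : V →ₗ[ℝ] V) (b i) =
      ContinuousLinearMap.adjoint (B - 1) ((B - 1) (b i)) := rfl
    rw [e, ContinuousLinearMap.adjoint_inner_right, real_inner_self_eq_norm_sq]
    simp
  have h1 : qd (cl k * A * cl k.symm) = ∑ i, ‖A (((stdOrthonormalBasis ℝ V).map k.symm) i) -
      ((stdOrthonormalBasis ℝ V).map k.symm) i‖ ^ 2 := by
    refine Finset.sum_congr rfl fun i _ => ?_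
    rw [← k.norm_map (A _ - _)]
    simp
  rw [h1, hq, qd, hq]

/-- Smooth probability densities near the identity that are invariant under conjugation by
isometries. -/
lemma exists_kernel (ν : Measure (V →L[ℝ] V)) [ν.IsAddHaarMeasure] {δ : ℝ} (hδ : 0 < δ) :
    ∃ r : (V →L[ℝ] V) → ℝ, ContDiff ℝ ∞ r ∧ (∀ A, 0 ≤ r A) ∧ ∫ A, r A ∂ν = 1 ∧
      (∀ A, r A ≠ 0 → ‖A - 1‖ < δ) ∧
      ∀ (k : V ≃ₗᵢ[ℝ] V) A, r (cl k * A * cl k.symm) = r A := by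
  let β : ContDiffBump (0 : ℝ) := ⟨δ ^ 2 / 2, δ ^ 2, by positivity, by linarith [sq_pos_of_pos hδ]⟩
  set r : (V →L[ℝ] V) → ℝ := fun A => β (qd A) with hr
  have hc : ContDiff ℝ ∞ r := β.contDiff.comp contDiff_qd
  have hsupp : ∀ A, r A ≠ 0 → ‖A - 1‖ < δ := fun A hA => by
    have h1 : qd A ∈ Function.support β := hA
    rw [β.support_eq, mem_ball, dist_zero_right, Real.norm_of_nonneg (qd_nonneg A)] at h1
    exact lt_of_pow_lt_pow_left₀ 2 hδ.le ((norm_sub_one_le A).trans_lt h1)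
  have hcs : HasCompactSupport r := HasCompactSupport.intro (isCompact_closedBall (1 : V →L[ℝ] V) δ)
    fun A hA => by
      by_contra h
      exact hA (by rw [mem_closedBall, dist_eq_norm]; exact (hsupp A h).le)
  have hpos : 0 < ∫ A, r A ∂ν := by
    refine hc.continuous.integral_pos_of_hasCompactSupport_nonneg_nonzero hcs (fun A => β.nonneg) (x := 1) ?_
    have : qd (1 : V →L[ℝ] V) = 0 := by simp [qd]
    rw [hr]; dsimp only
    rw [this, β.one_of_mem_closedBall (by simp [β.rIn_pos.le])]
    exact one_ne_zero
  refine ⟨fun A => (∫ A, r A ∂ν)⁻¹ * r A, contDiff_const.mul hc,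
    fun A => mul_nonneg (inv_nonneg.2 hpos.le) β.nonneg, ?_, fun A hA => hsupp A (right_ne_zero_of_mul hA),
    fun k A => by simp only [hr, qd_conj]⟩
  rw [integral_const_mul, inv_mul_cancel₀ hpos.ne']

end Kernels

/-! ### Smoothing of valuations -/

section Smoothing
variable {V : Type*} [NormedAddCommGroup V] [InnerProductSpace ℝ V] [FiniteDimensional ℝ V]

lemma mapCLM_mapCLM (A B : V →L[ℝ] V) (K : ConvexBody V) :
    ConvexBody.mapCLM A (ConvexBody.mapCLM B K) = ConvexBody.mapCLM (A * B) K := by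
  refine ConvexBody.ext (Set.Subset.antisymm ?_ ?_)
  · rintro _ ⟨_, ⟨x, hx, rfl⟩, rfl⟩; exact ⟨x, hx, rfl⟩
  · rintro _ ⟨x, hx, rfl⟩; exact ⟨_, ⟨x, hx, rfl⟩, rfl⟩

lemma mapCLM_one (K : ConvexBody V) : ConvexBody.mapCLM 1 K = K :=
  ConvexBody.ext (Set.image_id _)

lemma mapIsom_eq (k : V ≃ₗᵢ[ℝ] V) (K : ConvexBody V) :
    ConvexBody.mapIsom k K = ConvexBody.mapCLM (cl k) K := rfl

lemma mapCLM_add_singleton (A : V →L[ℝ] V) (K : ConvexBody V) (x : V) :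
    ConvexBody.mapCLM A (K + ConvexBody.singletonBody x) =
      ConvexBody.mapCLM A K + ConvexBody.singletonBody (A x) := by
  refine ConvexBody.ext ?_
  change A '' ((K + ConvexBody.singletonBody x : ConvexBody V) : Set V) =
    ((ConvexBody.mapCLM A K + ConvexBody.singletonBody (A x) : ConvexBody V) : Set V)
  rw [ConvexBody.coe_add, ConvexBody.coe_add, Set.image_add]
  congr 1
  exact Set.image_singleton

lemma dist_mapCLM_le (A B : V →L[ℝ] V) (K L : ConvexBody V) {R : ℝ} (hR0 : 0 ≤ R)
    (hR : ∀ x ∈ K, ‖x‖ ≤ R) :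
    dist (ConvexBody.mapCLM A K) (ConvexBody.mapCLM B L) ≤ ‖A - B‖ * R + ‖B‖ * dist K L := by
  have key : ∀ x ∈ K, ∀ y, dist x y ≤ dist K L → dist (A x) (B y) ≤ ‖A - B‖ * R + ‖B‖ * dist K L := by
    intro x hx y hxy
    have : A x - B y = (A - B) x + B (x - y) := by simp
    rw [dist_eq_norm, this]
    refine (norm_add_le _ _).trans (add_le_add ?_ ?_)
    · exact ((A - B).le_opNorm x).trans (mul_le_mul_of_nonneg_left (hR x hx) (norm_nonneg _))
    · refine (B.le_opNorm _).trans (mul_le_mul_of_nonneg_left ?_ (norm_nonneg _))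
      rwa [← dist_eq_norm]
  refine dist_body_le (by positivity) ?_ ?_
  · rintro _ ⟨x, hx, rfl⟩
    obtain ⟨y, hy, hxy⟩ := exists_dist_body_le (L := L) hx
    exact ⟨B y, ⟨y, hy, rfl⟩, key x hx y hxy⟩
  · rintro _ ⟨y, hy, rfl⟩
    obtain ⟨x, hx, hxy⟩ := exists_dist_body_le (L := K) hy
    refine ⟨A x, ⟨x, hx, rfl⟩, ?_⟩
    rw [dist_comm]
    exact key x hx y (by rw [dist_comm x y, dist_comm K L]; exact hxy)

lemma continuous_mapCLM :
    Continuous fun p : (V →L[ℝ] V) × ConvexBody V => ConvexBody.mapCLM p.1 p.2 := by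
  rw [continuous_iff_continuousAt]
  rintro ⟨A, K⟩
  obtain ⟨R, hR⟩ := K.isCompact.isBounded.subset_closedBall 0
  have hR' : ∀ x ∈ K, ‖x‖ ≤ max R 0 := fun x hx =>
    (mem_closedBall_zero_iff.1 (hR hx)).trans (le_max_left _ _)
  rw [ContinuousAt, tendsto_iff_dist_tendsto_zero]
  have hlim : Filter.Tendsto (fun p : (V →L[ℝ] V) × ConvexBody V =>
      ‖A - p.1‖ * max R 0 + ‖p.1‖ * dist K p.2) (nhds (A, K)) (nhds 0) := by
    have : Continuous (fun p : (V →L[ℝ] V) × ConvexBody V =>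
      ‖A - p.1‖ * max R 0 + ‖p.1‖ * dist K p.2) := by fun_prop
    simpa using this.tendsto (A, K)
  refine squeeze_zero (fun _ => dist_nonneg) (fun p => ?_) hlim
  rw [dist_comm]
  exact dist_mapCLM_le A p.1 K p.2 (le_max_right _ _) hR'

instance : CompactSpace (BallBodies V) := isCompact_iff_compactSpace.1 (isCompact_bodies 1)

/-- The orbit map `A ↦ φ (A ·)` into the bounded functions on bodies in the unit ball. -/
lemma exists_orbit {φ : ConvexBody V → ℂ} (hφ : Continuous φ) :
    ∃ v : (V →L[ℝ] V) → BoundedContinuousFunction (BallBodies V) ℂ, Continuous v ∧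
      ∀ A K, v A K = φ (ConvexBody.mapCLM A K.1) := by
  let f : C((V →L[ℝ] V) × BallBodies V, ℂ) :=
    ⟨fun p => φ (ConvexBody.mapCLM p.1 p.2.1), hφ.comp
      (continuous_mapCLM.comp (f := fun p : (V →L[ℝ] V) × BallBodies V => (p.1, p.2.1)) (by fun_prop))⟩
  refine ⟨fun A => BoundedContinuousFunction.mkOfCompact (f.curry A), ?_, fun A K => rfl⟩
  exact (ContinuousMap.isometryEquivBoundedOfCompact (BallBodies V) ℂ).continuous.comp f.curry.continuous

variable (ν : Measure (V →L[ℝ] V)) [ν.IsAddHaarMeasure]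

/-- Smoothness in `h` of the integral of `r (B h) v(B)` over `B`. -/
lemma contDiffOn_param {X : Type*} [NormedAddCommGroup X] [NormedSpace ℝ X] [CompleteSpace X]
    {r : (V →L[ℝ] V) → ℝ} (hr : ContDiff ℝ ∞ r) (hsupp : ∀ A, r A ≠ 0 → ‖A - 1‖ < 1)
    {v : (V →L[ℝ] V) → X} (hv : Continuous v) :
    ContDiffOn ℝ ∞ (fun h => ∫ B, r (B * h) • v B ∂ν) {h : V →L[ℝ] V | IsUnit h} := by
  intro h₀ hh₀
  refine ContDiffAt.contDiffWithinAt ?_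
  obtain ⟨u, rfl⟩ := hh₀
  -- on a neighbourhood of `u` the inverse is bounded, so `r (B h) ≠ 0` confines `B` to a ball
  set C : ℝ := ‖(↑u⁻¹ : V →L[ℝ] V)‖ + 1
  set s : Set (V →L[ℝ] V) := ball (u : V →L[ℝ] V) (1 / (2 * C)) with hs
  have hC : 0 < C := by positivity
  have hbd : ∀ h ∈ s, ∀ B, r (B * h) ≠ 0 → B ∈ closedBall (0 : V →L[ℝ] V) (4 * C) := by
    intro h hh B hB
    have h1 := hsupp _ hB
    have h2 : ‖B * h‖ ≤ 2 := by
      have := norm_add_le (B * h - 1) 1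
      have h3 : ‖(1 : V →L[ℝ] V)‖ ≤ 1 := ContinuousLinearMap.norm_id_le
      rw [sub_add_cancel] at this
      linarith
    have e : B = (B * h) * ↑u⁻¹ - B * ((h - u) * ↑u⁻¹) := by
      rw [sub_mul, Units.mul_inv, mul_sub, mul_one, mul_assoc]; abel
    have h4 : ‖B‖ ≤ 2 * C + ‖B‖ * (1 / 2) := by
      calc ‖B‖ = ‖(B * h) * ↑u⁻¹ - B * ((h - u) * ↑u⁻¹)‖ := by rw [← e]
        _ ≤ ‖B * h‖ * ‖(↑u⁻¹ : V →L[ℝ] V)‖ + ‖B‖ * (‖h - u‖ * ‖(↑u⁻¹ : V →L[ℝ] V)‖) := by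
          refine (norm_sub_le _ _).trans (add_le_add (norm_mul_le _ _) ?_)
          exact (norm_mul_le _ _).trans (mul_le_mul_of_nonneg_left (norm_mul_le _ _) (norm_nonneg _))
        _ ≤ 2 * C + ‖B‖ * (1 / (2 * C) * C) := by
          have hle : ‖(↑u⁻¹ : V →L[ℝ] V)‖ ≤ C := by simp [C]
          have : ‖h - u‖ ≤ 1 / (2 * C) := by rw [← dist_eq_norm]; exact (mem_ball.1 hh).le
          gcongr
        _ = 2 * C + ‖B‖ * (1 / 2) := by field_simp
    rw [mem_closedBall_zero_iff]; linarith
  have hconv := contDiffOn_convolution_right_with_param (μ := ν) (n := ⊤) (𝕜 := ℝ)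
    ((ContinuousLinearMap.lsmul ℝ ℝ : ℝ →L[ℝ] X →L[ℝ] X).flip)
    (f := v) (g := fun h B => r (-B * h)) (s := s) (k := closedBall (0 : V →L[ℝ] V) (4 * C)) isOpen_ball
    (isCompact_closedBall _ _) (fun h B hh hB => by
      by_contra hne
      have := hbd h hh (-B) hne
      rw [mem_closedBall_zero_iff, norm_neg] at this
      exact hB (mem_closedBall_zero_iff.2 this)) hv.locallyIntegrable (by
      refine ContDiff.contDiffOn ?_
      exact hr.comp ((contDiff_snd.neg).clm_comp contDiff_fst))
  have h2 : ContDiffOn ℝ ∞ (fun h => ∫ B, r (B * h) • v B ∂ν) s := by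
    have := hconv.comp (f := fun h : V →L[ℝ] V => (h, (0 : V →L[ℝ] V))) (s := s)
      (contDiff_id.prodMk contDiff_const).contDiffOn (fun h hh => ⟨hh, Set.mem_univ _⟩)
    refine this.congr fun h _ => ?_
    simp [convolution]
  exact h2.contDiffAt (isOpen_ball.mem_nhds (mem_ball_self (by positivity)))

/-- The average of `φ (A ·)` over the density `r`. -/
noncomputable def smo (r : (V →L[ℝ] V) → ℝ) (φ : ConvexBody V → ℂ) (K : ConvexBody V) : ℂ :=
  ∫ A, r A • φ (ConvexBody.mapCLM A K) ∂ν

variable {ν} {r : (V →L[ℝ] V) → ℝ} {φ : ConvexBody V → ℂ}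

lemma isUnit_of_supp (hsupp : ∀ A, r A ≠ 0 → ‖A - 1‖ < 1) {A : V →L[ℝ] V} (hA : r A ≠ 0) :
    IsUnit A := by
  have := isUnit_one_sub_of_norm_lt_one (x := 1 - A) (by rw [norm_sub_rev]; exact hsupp A hA)
  simpa using this

lemma integrable_smo (hr : ContDiff ℝ ∞ r) (hsupp : ∀ A, r A ≠ 0 → ‖A - 1‖ < 1)
    {X : Type*} [NormedAddCommGroup X] [NormedSpace ℝ X] {v : (V →L[ℝ] V) → X} (hv : Continuous v) :
    Integrable (fun A => r A • v A) ν := by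
  refine (hr.continuous.smul hv).integrable_of_hasCompactSupport
    (HasCompactSupport.intro (isCompact_closedBall (1 : V →L[ℝ] V) 1) fun A hA => ?_)
  by_contra h
  exact hA (by rw [mem_closedBall, dist_eq_norm]; exact (hsupp A (left_ne_zero_of_smul h)).le)

lemma continuous_mapCLM_left (hφ : Continuous φ) (K : ConvexBody V) :
    Continuous fun A : V →L[ℝ] V => φ (ConvexBody.mapCLM A K) :=
  hφ.comp (continuous_mapCLM.comp (f := fun A : V →L[ℝ] V => (A, K)) (by fun_prop))

lemma memVal_smo (hr : ContDiff ℝ ∞ r) (hsupp : ∀ A, r A ≠ 0 → ‖A - 1‖ < 1) (hφ : MemVal φ) :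
    MemVal (smo ν r φ) := by
  have hi : ∀ K, Integrable (fun A => r A • φ (ConvexBody.mapCLM A K)) ν := fun K =>
    integrable_smo hr hsupp (continuous_mapCLM_left hφ.2.2 K)
  refine ⟨fun A B C D hC hD => ?_, fun K x => ?_, ?_⟩
  · rw [smo, smo, smo, smo, ← integral_add (hi A) (hi B), 
      ← integral_sub (f := fun g => r g • φ (ConvexBody.mapCLM g A) + r g • φ (ConvexBody.mapCLM g B))
        ((hi A).add (hi B)) (hi D)]
    refine integral_congr_ae (Filter.Eventually.of_forall fun g => ?_)
    by_cases hg : r g = 0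
    · simp [hg]
    obtain ⟨u, hu⟩ := isUnit_of_supp hsupp hg
    have hinj : Function.Injective g := fun x y hxy => by
      have h1 : ∀ z, (↑u⁻¹ : V →L[ℝ] V) (g z) = z := fun z => by
        rw [← hu]; exact DFunLike.congr_fun (u.inv_mul) z
      rw [← h1 x, hxy, h1]
    have := hφ.1 (ConvexBody.mapCLM g A) (ConvexBody.mapCLM g B) (ConvexBody.mapCLM g C)
      (ConvexBody.mapCLM g D)
      (by change g '' (C : Set V) = g '' (A : Set V) ∪ g '' (B : Set V); rw [hC, Set.image_union])
      (by change g '' (D : Set V) = g '' (A : Set V) ∩ g '' (B : Set V)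
          rw [hD, Set.image_inter hinj])
    simp only [this, smul_add, smul_sub]
  · have := hφ.2.1
    simp only [smo, mapCLM_add_singleton, this _ _]
  · rw [← continuousOn_univ]
    refine continuousOn_integral_of_compact_support (isCompact_closedBall (1 : V →L[ℝ] V) 1)
      (f := fun K A => r A • φ (ConvexBody.mapCLM A K)) ?_ fun K A _ hA => ?_
    · refine Continuous.continuousOn ?_
      refine (hr.continuous.comp continuous_snd).smul (hφ.2.2.comp ?_)
      exact continuous_mapCLM.comp (f := fun p : ConvexBody V × (V →L[ℝ] V) => (p.2, p.1))
        (continuous_snd.prodMk continuous_fst)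
    · by_contra h
      exact hA (by rw [mem_closedBall, dist_eq_norm]; exact (hsupp A (left_ne_zero_of_smul h)).le)

/-- Conjugation by an isometry, as a linear automorphism of the endomorphisms. -/
noncomputable def conjL (k : V ≃ₗᵢ[ℝ] V) : (V →L[ℝ] V) ≃L[ℝ] (V →L[ℝ] V) :=
  k.toContinuousLinearEquiv.arrowCongr k.toContinuousLinearEquiv

lemma conjL_apply (k : V ≃ₗᵢ[ℝ] V) (A : V →L[ℝ] V) : conjL k A = cl k * A * cl k.symm := by
  ext x; rfl

lemma cl_mul_symm (k : V ≃ₗᵢ[ℝ] V) : cl k * cl k.symm = 1 := by ext x; simp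
lemma cl_symm_mul (k : V ≃ₗᵢ[ℝ] V) : cl k.symm * cl k = 1 := by ext x; simp

lemma smo_inv (hint : ∫ A, r A ∂ν = 1) (hconj : ∀ (k : V ≃ₗᵢ[ℝ] V) A, r (cl k * A * cl k.symm) = r A)
    {k : V ≃ₗᵢ[ℝ] V} (hk : ∀ K, φ (ConvexBody.mapIsom k K) = φ K) (K : ConvexBody V) :
    smo ν r φ (ConvexBody.mapIsom k K) = smo ν r φ K := by
  obtain ⟨c, -, hc⟩ := cov ν (conjL k)
  have h1 := hc r
  simp only [conjL_apply, hconj, hint, smul_eq_mul, mul_one] at h1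
  have h2 := hc fun A => r A • φ (ConvexBody.mapCLM A (ConvexBody.mapIsom k K))
  rw [← h1, one_smul] at h2
  rw [smo, ← h2, smo]
  refine integral_congr_ae (Filter.Eventually.of_forall fun A => ?_)
  simp only [conjL_apply, hconj]
  rw [mapIsom_eq, mapCLM_mapCLM, mul_assoc, cl_symm_mul, mul_one, ← mapCLM_mapCLM, ← mapIsom_eq, hk]

/-- Right multiplication by a unit, as a linear automorphism of the endomorphisms. -/
noncomputable def rmul (u : (V →L[ℝ] V)ˣ) : (V →L[ℝ] V) ≃L[ℝ] (V →L[ℝ] V) :=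
  LinearEquiv.toContinuousLinearEquiv
    { toFun := fun A => A * u
      invFun := fun A => A * ↑u⁻¹
      map_add' := fun A B => add_mul _ _ _
      map_smul' := fun c A => smul_mul_assoc _ _ _
      left_inv := fun A => by simp [mul_assoc]
      right_inv := fun A => by simp [mul_assoc] }

lemma smooth_smo (hr : ContDiff ℝ ∞ r) (hint : ∫ A, r A ∂ν = 1)
    (hsupp : ∀ A, r A ≠ 0 → ‖A - 1‖ < 1) (hφ : Continuous φ) : IsSmoothVal (smo ν r φ) := by
  obtain ⟨v, hv, hv'⟩ := exists_orbit hφ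
  have h1 := contDiffOn_param ν hr hsupp hv
  have h2 := contDiffOn_param ν hr hsupp (v := fun _ => (1 : ℝ)) continuous_const
  have hc : ∀ u : (V →L[ℝ] V)ˣ, ∃ c : ℝ, 0 < c ∧ ∫ B, r (B * u) • (1 : ℝ) ∂ν = c ∧
      ∀ K, ∫ B, r (B * u) • φ (ConvexBody.mapCLM B K) ∂ν =
        c • smo ν r φ (ConvexBody.mapCLM (↑u⁻¹) K) := fun u => by
    obtain ⟨c, hc0, hc⟩ := cov ν (rmul u)
    refine ⟨c, hc0, ?_, fun K => ?_⟩
    · have := hc r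
      rw [hint, smul_eq_mul, mul_one] at this
      simp only [smul_eq_mul, mul_one]
      exact this
    · rw [smo, ← hc fun A => r A • φ (ConvexBody.mapCLM A (ConvexBody.mapCLM (↑u⁻¹) K))]
      refine integral_congr_ae (Filter.Eventually.of_forall fun A => ?_)
      have : rmul u A = A * u := rfl
      simp only [this]
      rw [mapCLM_mapCLM, mul_assoc, Units.mul_inv, mul_one]
  refine ⟨fun g => (∫ B, r (B * g) • (1 : ℝ) ∂ν)⁻¹ • ∫ B, r (B * g) • v B ∂ν, fun g hg K => ?_,
    ContDiffOn.smul (h2.inv ?_) h1⟩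
  · obtain ⟨c, hc0, e1, e2⟩ := hc hg.unit
    rw [IsUnit.unit_spec] at e1 e2
    dsimp only
    rw [e1, BoundedContinuousFunction.coe_smul]
    have hint' : Integrable (fun B => r (B * g) • v B) ν := by
      refine ((hr.continuous.comp (by fun_prop)).smul hv).integrable_of_hasCompactSupport
        (HasCompactSupport.intro ((isCompact_closedBall (1 : V →L[ℝ] V) 1).image
          (rmul hg.unit).symm.continuous) fun B hB => ?_)
      by_contra h
      refine hB ⟨rmul hg.unit B, ?_, by simp⟩
      have e : rmul hg.unit B = B * g := rfl
      rw [mem_closedBall, dist_eq_norm, e]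
      exact (hsupp _ (left_ne_zero_of_smul h)).le
    have e3 : (∫ B, r (B * g) • v B ∂ν) K = ∫ B, r (B * g) • φ (ConvexBody.mapCLM B K.1) ∂ν := by
      have := (BoundedContinuousFunction.evalCLM ℝ K).integral_comp_comm hint'
      simp only [BoundedContinuousFunction.evalCLM_apply, BoundedContinuousFunction.coe_smul] at this
      rw [← this]
      simp only [hv']
    dsimp only
    rw [e3, e2, smul_smul, inv_mul_cancel₀ hc0.ne', one_smul]
  · rintro g hg
    obtain ⟨c, hc0, e1, -⟩ := hc hg.unit
    rw [IsUnit.unit_spec] at e1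
    rw [e1]; exact ne_of_gt hc0

/-- Smooth valuations form a linear space. -/
def Sm (V : Type*) [NormedAddCommGroup V] [InnerProductSpace ℝ V] :
    Submodule ℂ (ConvexBody V → ℂ) where
  carrier := {φ | IsSmoothVal φ}
  add_mem' := by
    rintro φ ψ ⟨F, hF, hF'⟩ ⟨H, hH, hH'⟩
    exact ⟨F + H, fun g hg K => by
      simp only [Pi.add_apply, BoundedContinuousFunction.add_apply, hF g hg, hH g hg], hF'.add hH'⟩
  zero_mem' := ⟨0, fun g hg K => rfl, contDiffOn_const⟩
  smul_mem' := by
    rintro c φ ⟨F, hF, hF'⟩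
    exact ⟨c • F, fun g hg K => by
      simp only [Pi.smul_apply, BoundedContinuousFunction.coe_smul, hF g hg], hF'.const_smul c⟩

/-- If the space of invariant valuations is finite-dimensional, its elements are smooth: the smooth
invariant valuations form a subspace which is dense (by smoothing) and closed. -/
theorem smooth_of_finite {Γ : Type*} (ρ : Γ → V ≃ₗᵢ[ℝ] V) [FiniteDimensional ℂ (ValG ρ)]
    (hφ : φ ∈ ValG ρ) : IsSmoothVal φ := by
  let ν : Measure (V →L[ℝ] V) := Measure.addHaar
  have : FiniteDimensional ℂ (ValG ρ ⊓ Sm V : Submodule ℂ (ConvexBody V → ℂ)) :=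
    Submodule.finiteDimensional_of_le inf_le_left
  have hcl : IsClosed ((ValG ρ ⊓ Sm V : Submodule ℂ (ConvexBody V → ℂ)) : Set (ConvexBody V → ℂ)) :=
    Submodule.closed_of_finiteDimensional _
  have hex : ∀ j : ℕ, ∃ r : (V →L[ℝ] V) → ℝ, ContDiff ℝ ∞ r ∧ (∀ A, 0 ≤ r A) ∧ ∫ A, r A ∂ν = 1 ∧
      (∀ A, r A ≠ 0 → ‖A - 1‖ < 1 / ((j : ℝ) + 1)) ∧
      ∀ (k : V ≃ₗᵢ[ℝ] V) A, r (cl k * A * cl k.symm) = r A := fun j =>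
    exists_kernel ν (by positivity)
  choose r hr hr0 hint hsupp hconj using hex
  have hsupp1 : ∀ j A, r j A ≠ 0 → ‖A - 1‖ < 1 := fun j A hA => (hsupp j A hA).trans_le (by
    rw [div_le_one (by positivity)]; simp)
  have hmem : ∀ j, smo ν (r j) φ ∈ (ValG ρ ⊓ Sm V : Submodule ℂ (ConvexBody V → ℂ)) := fun j =>
    ⟨⟨memVal_smo (hr j) (hsupp1 j) hφ.1, fun g K => smo_inv (hint j) (hconj j) (hφ.2 g) K⟩,
      smooth_smo (hr j) (hint j) (hsupp1 j) hφ.1.2.2⟩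
  have hlim : Filter.Tendsto (fun j => smo ν (r j) φ) Filter.atTop (nhds φ) := by
    rw [tendsto_pi_nhds]
    intro K
    rw [Metric.tendsto_atTop]
    intro ε hε
    have hcont := continuous_mapCLM_left hφ.1.2.2 K
    obtain ⟨δ, hδ, h⟩ := Metric.continuousAt_iff.1
      (hcont.continuousAt (x := (1 : V →L[ℝ] V))) (ε / 2) (by positivity)
    obtain ⟨N, hN⟩ := exists_nat_one_div_lt hδ
    refine ⟨N, fun j hj => ?_⟩
    have e : smo ν (r j) φ K - φ K = ∫ A, r j A • (φ (ConvexBody.mapCLM A K) - φ K) ∂ν := by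
      have h1 : ∫ A, r j A • φ K ∂ν = φ K := by rw [integral_smul_const, hint, one_smul]
      simp only [smul_sub]
      rw [integral_sub (integrable_smo (hr j) (hsupp1 j) hcont)
        (integrable_smo (hr j) (hsupp1 j) continuous_const), h1, smo]
    rw [dist_eq_norm, e]
    have hb : ‖∫ A, r j A • (φ (ConvexBody.mapCLM A K) - φ K) ∂ν‖ ≤ ∫ A, r j A * (ε / 2) ∂ν := by
      refine norm_integral_le_of_norm_le
        (integrable_smo (hr j) (hsupp1 j) (v := fun _ => ε / 2) continuous_const)
        (Filter.Eventually.of_forall fun A => ?_)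
      rw [norm_smul, Real.norm_of_nonneg (hr0 j A)]
      by_cases hA : r j A = 0
      · simp [hA]
      refine mul_le_mul_of_nonneg_left ?_ (hr0 j A)
      have h2 : dist A 1 < δ := by
        rw [dist_eq_norm]
        refine (hsupp j A hA).trans_le (le_trans ?_ hN.le)
        have : (N : ℝ) ≤ j := by exact_mod_cast hj
        gcongr
      have := h h2
      rw [mapCLM_one, dist_eq_norm] at this
      exact this.le
    rw [integral_mul_const, hint, one_mul] at hb
    linarith
  exact (hcl.mem_of_tendsto hlim (Filter.Eventually.of_forall hmem)).2

end Smoothing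

/-! ### Compact transitive subgroups of the orthogonal group -/

section Final
variable {V : Type*} [NormedAddCommGroup V] [InnerProductSpace ℝ V] [FiniteDimensional ℝ V]

/-- The invariant valuations of a compact group of isometries transitive on a nonempty sphere form
a finite-dimensional space. The group carries the operator-norm topology and its Haar measure. -/
theorem finite_subgroup (G : Subgroup (V ≃ₗᵢ[ℝ] V))
    (hcomp : IsCompact ((fun g : V ≃ₗᵢ[ℝ] V => cl g) '' (G : Set (V ≃ₗᵢ[ℝ] V))))
    (htrans : ∀ x y : V, ‖x‖ = 1 → ‖y‖ = 1 → ∃ g ∈ G, g x = y) (x₀ : sphere (0 : V) 1) :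
    FiniteDimensional ℂ (ValG fun g : G => (g : V ≃ₗᵢ[ℝ] V)) := by
  let : TopologicalSpace G := TopologicalSpace.induced (fun g : G => cl (g : V ≃ₗᵢ[ℝ] V)) inferInstance
  have hind : Topology.IsInducing (fun g : G => cl (g : V ≃ₗᵢ[ℝ] V)) := ⟨rfl⟩
  have hcl : Continuous fun g : G => cl (g : V ≃ₗᵢ[ℝ] V) := hind.continuous
  have hinj : Function.Injective (fun g : G => cl (g : V ≃ₗᵢ[ℝ] V)) := fun g h hgh =>
    Subtype.ext (LinearIsometryEquiv.ext fun x => DFunLike.congr_fun hgh x)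
  have hemb : Topology.IsEmbedding (fun g : G => cl (g : V ≃ₗᵢ[ℝ] V)) := ⟨hind, hinj⟩
  have hinv : ∀ g : G, cl ((g⁻¹ : G) : V ≃ₗᵢ[ℝ] V) = ContinuousLinearMap.adjoint (cl (g : V ≃ₗᵢ[ℝ] V)) := by
    intro g
    refine (ContinuousLinearMap.eq_adjoint_iff _ _).2 fun x y => ?_
    rw [cl_apply, cl_apply, ← (g : V ≃ₗᵢ[ℝ] V).inner_map_map]
    congr 1
    exact (g : V ≃ₗᵢ[ℝ] V).apply_symm_apply x
  have : CompactSpace G := by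
    refine ⟨hind.isCompact_iff.2 ?_⟩
    convert hcomp using 1
    ext A
    simp
  have : IsTopologicalGroup G :=
    { continuous_mul := by
        refine hind.continuous_iff.2 ?_
        have : Continuous fun p : G × G => cl (p.1 : V ≃ₗᵢ[ℝ] V) * cl (p.2 : V ≃ₗᵢ[ℝ] V) :=
          (hcl.comp continuous_fst).mul (hcl.comp continuous_snd)
        exact this
      continuous_inv := by
        refine hind.continuous_iff.2 ?_
        have : Continuous fun g : G => ContinuousLinearMap.adjoint (cl (g : V ≃ₗᵢ[ℝ] V)) :=
          (ContinuousLinearMap.adjoint (𝕜 := ℝ) (E := V) (F := V)).continuous.comp hcl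
        refine this.congr fun g => ?_
        exact (hinv g).symm }
  have : TopologicalSpace.MetrizableSpace G := hemb.metrizableSpace
  let : MeasurableSpace G := borel G
  have : BorelSpace G := ⟨rfl⟩
  let μ : Measure G := Measure.haarMeasure ⊤
  have : IsProbabilityMeasure μ := ⟨by
    have := Measure.haarMeasure_self (K₀ := (⊤ : TopologicalSpace.PositiveCompacts G))
    simpa using this⟩
  refine finite_ValG μ (ρ := G.subtype) ?_ Subtype.val_injective x₀ fun x y hx hy => ?_
  · have h1 : Continuous fun p : G × V => cl ((p.1⁻¹ : G) : V ≃ₗᵢ[ℝ] V) p.2 :=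
      (hcl.comp continuous_fst.inv).clm_apply continuous_snd
    exact h1
  · obtain ⟨g, hg, e⟩ := htrans x y hx hy
    exact ⟨⟨g, hg⟩, e⟩

theorem smooth_main (G : Subgroup (V ≃ₗᵢ[ℝ] V))
    (hcomp : IsCompact ((fun g : V ≃ₗᵢ[ℝ] V => cl g) '' (G : Set (V ≃ₗᵢ[ℝ] V))))
    (htrans : ∀ x y : V, ‖x‖ = 1 → ‖y‖ = 1 → ∃ g ∈ G, g x = y) {φ : ConvexBody V → ℂ}
    (hφ : MemVal φ) (hinv : ∀ g ∈ G, ∀ K, φ (ConvexBody.mapIsom g K) = φ K) : IsSmoothVal φ := by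
  have hfin : FiniteDimensional ℂ (ValG fun g : G => (g : V ≃ₗᵢ[ℝ] V)) := by
    rcases subsingleton_or_nontrivial V with hV | hV
    · -- in dimension zero there is only one convex body
      have : Subsingleton (ConvexBody V) := ⟨fun K L => ConvexBody.ext (by
        obtain ⟨x, hx⟩ := K.nonempty
        obtain ⟨y, hy⟩ := L.nonempty
        rw [Set.Nonempty.eq_univ ⟨x, hx⟩, Set.Nonempty.eq_univ ⟨y, hy⟩])⟩
      infer_instance
    · obtain ⟨x, hx⟩ := exists_norm_eq V (c := 1) zero_le_one
      exact finite_subgroup G hcomp htrans ⟨x, by simpa using hx⟩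
  exact smooth_of_finite (fun g : G => (g : V ≃ₗᵢ[ℝ] V)) ⟨hφ, fun g K => hinv g g.2 K⟩

end Final

end SmoothVal

end

/-- Every valuation in `Val(ℝⁿ)` invariant under a compact subgroup `G` of the orthogonal group
acting transitively on the unit sphere is smooth. -/
theorem invariant_valuation_is_smooth (n : ℕ)
    (G : Subgroup (EuclideanSpace ℝ (Fin n) ≃ₗᵢ[ℝ] EuclideanSpace ℝ (Fin n)))
    (hcomp : IsCompact ((fun g : EuclideanSpace ℝ (Fin n) ≃ₗᵢ[ℝ] EuclideanSpace ℝ (Fin n) =>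
      (g.toContinuousLinearEquiv : EuclideanSpace ℝ (Fin n) →L[ℝ] EuclideanSpace ℝ (Fin n))) ''
        (G : Set (EuclideanSpace ℝ (Fin n) ≃ₗᵢ[ℝ] EuclideanSpace ℝ (Fin n)))))
    (htrans : ∀ x y : EuclideanSpace ℝ (Fin n), ‖x‖ = 1 → ‖y‖ = 1 → ∃ g ∈ G, g x = y)
    (φ : ConvexBody (EuclideanSpace ℝ (Fin n)) → ℂ) (hφ : MemVal φ)
    (hinv : ∀ g ∈ G, ∀ K, φ (ConvexBody.mapIsom g K) = φ K) :
    IsSmoothVal φ := by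
  exact SmoothVal.smooth_main G hcomp htrans hφ hinv
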